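/- Let G be a graph with independence number α = α(G), let k be an integer, and set t = 256·4^{2α}, t' = max(1000t⁶, 20·R(R(4,α+1), α+1)) and t'' = 4t'⁴. Let M and M' be perfect matchings of G with the following properties: (a) r(M) < k−1 and r(M') > k; (b) |w_M(M Δ M')| ≤ t; (c) there is no perfect matching M1 with r(M1) = r(M) + 2 and |R(M Δ M1)| = 2; (d) there is no perfect matching M1' with r(M1') = r(M') − 2 and |B(M' Δ M1')| = 2; (e) the set of M-alternating cycles M Δ M' contains no 0-skip; (f) the set of M-alternating cycles M Δ M' contains no 0-skip-cycle set. If G has at least one perfect matching with exactly k red edges, then there exists a perfect matching M* of G with r(M*) = k and |E(M Δ M*)| ≤ 4t''³. -/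

import Mathlib

open Finset

/-- `M` is (the edge set of) a perfect matching of `G`: all its edges are edges of `G` and
every vertex belongs to exactly one edge of `M`. -/
def IsPM {V : Type*} [DecidableEq V] (G : SimpleGraph V) (M : Finset (Sym2 V)) : Prop :=
  ↑M ⊆ G.edgeSet ∧ ∀ v : V, ∃! e, e ∈ M ∧ v ∈ e

/-- Number of red edges in the edge set `F` (the coloring `red` marks the red edges). -/
def redCount {V : Type*} [DecidableEq V] (red : Sym2 V → Bool) (F : Finset (Sym2 V)) : ℕ :=
  (F.filter fun e => red e = true).card

/-- Number of blue edges in the edge set `F`. -/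
def blueCount {V : Type*} [DecidableEq V] (red : Sym2 V → Bool) (F : Finset (Sym2 V)) : ℕ :=
  (F.filter fun e => red e = false).card

/-- The weight `w_M(e)`: 0 for blue edges, +1 for red non-matching edges, −1 for red
matching edges. -/
def wt {V : Type*} [DecidableEq V] (red : Sym2 V → Bool) (M : Finset (Sym2 V))
    (e : Sym2 V) : ℤ :=
  if red e then (if e ∈ M then -1 else 1) else 0

/-- `w_M(F)`, the total weight of an edge set `F`. -/
def wSum {V : Type*} [DecidableEq V] (red : Sym2 V → Bool) (M F : Finset (Sym2 V)) : ℤ :=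
  ∑ e ∈ F, wt red M e

/-- A list of edges alternates with respect to the matching `M`: consecutive edges are
alternately in and out of `M`. -/
def altList {V : Type*} [DecidableEq V] (M : Finset (Sym2 V)) (l : List (Sym2 V)) : Prop :=
  l.Chain' fun e f => ¬((e ∈ M) ↔ (f ∈ M))

/-- `C` is (the edge set of) an `M`-alternating cycle in `G`: it is traced by a cycle walk
whose edges alternate (cyclically) between `M` and non-`M` edges. -/
def IsAltCycle {V : Type*} [DecidableEq V] (G : SimpleGraph V)
    (M C : Finset (Sym2 V)) : Prop :=
  ∃ (v : V) (p : G.Walk v v), p.IsCycle ∧ p.edges.toFinset = C ∧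
    altList M (p.edges ++ p.edges.take 1)

/-- `P` is (the edge set of) an `M`-alternating path in `G`. -/
def IsAltPath {V : Type*} [DecidableEq V] (G : SimpleGraph V)
    (M P : Finset (Sym2 V)) : Prop :=
  ∃ (u v : V) (p : G.Walk u v), p.IsPath ∧ p.edges.toFinset = P ∧ altList M p.edges

/-- The symmetric difference of two edge sets. -/
def sd {V : Type*} [DecidableEq V] (M M' : Finset (Sym2 V)) : Finset (Sym2 V) :=
  (M \ M') ∪ (M' \ M)

/-- The set of vertices covered by an edge set. -/
def edgeVerts {V : Type*} (F : Finset (Sym2 V)) : Set V := {v | ∃ e ∈ F, v ∈ e}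

/-- `𝒞` is a set of pairwise vertex-disjoint `M`-alternating cycles of `G`. -/
def IsAltCycleSet {V : Type*} [DecidableEq V] (G : SimpleGraph V) (M : Finset (Sym2 V))
    (𝒞 : Finset (Finset (Sym2 V))) : Prop :=
  (∀ C ∈ 𝒞, IsAltCycle G M C) ∧
    (𝒞 : Set (Finset (Sym2 V))).Pairwise fun C C' => Disjoint (edgeVerts C) (edgeVerts C')

/-- A skip on the `M`-alternating cycle `C` (with respect to the coloring `red`):
two non-matching chords `e1 ≠ e2` of `C`, not edges of `C`, such that replacing two
stretches of `C` by them yields a strictly shorter `M`-alternating cycle `C'` whose weight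
differs from that of `C` by at most 4 in absolute value. -/
structure Skip {V : Type*} [DecidableEq V] (G : SimpleGraph V) (red : Sym2 V → Bool)
    (M C : Finset (Sym2 V)) where
  e1 : Sym2 V
  e2 : Sym2 V
  C' : Finset (Sym2 V)
  hne : e1 ≠ e2
  he1G : e1 ∈ G.edgeSet
  he2G : e2 ∈ G.edgeSet
  he1M : e1 ∉ M
  he2M : e2 ∉ M
  he1C : e1 ∉ C
  he2C : e2 ∉ C
  halt : IsAltCycle G M C'
  hmem1 : e1 ∈ C'
  hmem2 : e2 ∈ C'
  hsub : C' \ {e1, e2} ⊆ C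
  hsmall : C'.card < C.card
  hwbound : |wSum red M C' - wSum red M C| ≤ 4

/-- The weight `w(S) = w_M(C') − w_M(C)` of a skip. -/
def Skip.w {V : Type*} [DecidableEq V] {G : SimpleGraph V} {red : Sym2 V → Bool}
    {M C : Finset (Sym2 V)} (S : Skip G red M C) : ℤ :=
  wSum red M S.C' - wSum red M C

/-- The skip `S` is contained in the path `P` along `C`: the stretch of `C` removed by
the skip lies on `P`. -/
def Skip.In {V : Type*} [DecidableEq V] {G : SimpleGraph V} {red : Sym2 V → Bool}
    {M C : Finset (Sym2 V)} (S : Skip G red M C) (P : Finset (Sym2 V)) : Prop :=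
  C \ S.C' ⊆ P

/-- Two skips on `C` are disjoint: they are contained in disjoint paths along `C`. -/
def Skip.Disj {V : Type*} [DecidableEq V] {G : SimpleGraph V} {red : Sym2 V → Bool}
    {M C : Finset (Sym2 V)} (S1 S2 : Skip G red M C) : Prop :=
  ∃ P1 P2 : Finset (Sym2 V), P1 ⊆ C ∧ P2 ⊆ C ∧ Disjoint P1 P2 ∧
    IsAltPath G M P1 ∧ IsAltPath G M P2 ∧ S1.In P1 ∧ S2.In P2

/-- A skip living on one of the cycles of the family `𝒞`. -/
structure SkipOn {V : Type*} [DecidableEq V] (G : SimpleGraph V) (red : Sym2 V → Bool)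
    (M : Finset (Sym2 V)) (𝒞 : Finset (Finset (Sym2 V))) where
  C : Finset (Sym2 V)
  hC : C ∈ 𝒞
  S : Skip G red M C

/-- Two skips on cycles of `𝒞` are disjoint: either they live on different
(vertex-disjoint) cycles, or they are disjoint skips on the same cycle. -/
def SkipOn.Disj {V : Type*} [DecidableEq V] {G : SimpleGraph V} {red : Sym2 V → Bool}
    {M : Finset (Sym2 V)} {𝒞 : Finset (Finset (Sym2 V))}
    (T1 T2 : SkipOn G red M 𝒞) : Prop :=
  T1.C ≠ T2.C ∨ ∃ h : T1.C = T2.C, Skip.Disj (h ▸ T1.S) T2.S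

/-- `𝒞` contains a 0-skip set: a nonempty collection of pairwise disjoint skips on cycles
of `𝒞` of total weight 0. -/
def HasZeroSkipSet {V : Type*} [DecidableEq V] (G : SimpleGraph V) (red : Sym2 V → Bool)
    (M : Finset (Sym2 V)) (𝒞 : Finset (Finset (Sym2 V))) : Prop :=
  ∃ L : List (SkipOn G red M 𝒞), L ≠ [] ∧ L.Pairwise SkipOn.Disj ∧
    (L.map fun T => T.S.w).sum = 0

/-- `𝒞` contains a 0-skip-cycle set: a nonempty collection of pairwise disjoint skips on
cycles of `𝒞` and/or whole cycles `D ⊆ 𝒞` (the skips living on cycles not in `D`), such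
that the total weight of the skips minus the total weight of the cycles is 0. -/
def HasZeroSkipCycleSet {V : Type*} [DecidableEq V] (G : SimpleGraph V)
    (red : Sym2 V → Bool) (M : Finset (Sym2 V)) (𝒞 : Finset (Finset (Sym2 V))) : Prop :=
  ∃ (L : List (SkipOn G red M 𝒞)) (D : Finset (Finset (Sym2 V))),
    D ⊆ 𝒞 ∧ (L ≠ [] ∨ D.Nonempty) ∧ L.Pairwise SkipOn.Disj ∧ (∀ T ∈ L, T.C ∉ D) ∧
      (L.map fun T => T.S.w).sum - (∑ C ∈ D, wSum red M C) = 0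

/-- The independence number `α(G)`: the maximum size of a set of pairwise non-adjacent
vertices. -/
noncomputable def indepNum {V : Type*} (G : SimpleGraph V) : ℕ :=
  sSup {n | ∃ s : Finset V, s.card = n ∧ (s : Set V).Pairwise fun u v => ¬ G.Adj u v}

/-- `RamseyProp N s t`: every graph on `N` vertices contains a clique of size `s` or an
independent set of size `t`. -/
def RamseyProp (N s t : ℕ) : Prop :=
  ∀ H : SimpleGraph (Fin N),
    (∃ A : Finset (Fin N), A.card = s ∧ (A : Set (Fin N)).Pairwise H.Adj) ∨
    (∃ B : Finset (Fin N), B.card = t ∧ (B : Set (Fin N)).Pairwise fun u v => ¬ H.Adj u v)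

/-- The Ramsey number `R(s,t)`: the smallest `N` such that every graph on `N` vertices
contains a clique of size `s` or an independent set of size `t`. -/
noncomputable def ramsey (s t : ℕ) : ℕ := sInf {N | RamseyProp N s t}



theorem ramsey_exists (s t : ℕ) : ∃ N, ∀ (V : Type) (H : SimpleGraph V) (S : Finset V), N ≤ S.card →
    (∃ A ⊆ S, A.card = s ∧ (A : Set V).Pairwise H.Adj) ∨
    (∃ B ⊆ S, B.card = t ∧ (B : Set V).Pairwise fun u v => ¬ H.Adj u v) := by
  classical
  induction s generalizing t with
  | zero => exact ⟨0, fun V H S _ => Or.inl ⟨∅, by simp, by simp, by simp⟩⟩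
  | succ s ihs =>
    induction t with
    | zero => exact ⟨0, fun V H S _ => Or.inr ⟨∅, by simp, by simp, by simp⟩⟩
    | succ t iht =>
      obtain ⟨N1, h1⟩ := ihs (t+1)
      obtain ⟨N2, h2⟩ := iht
      refine ⟨N1 + N2 + 1, fun V H S hS => ?_⟩
      have hne : S.Nonempty := by
        rw [← Finset.card_pos]; omega
      obtain ⟨v, hv⟩ := hne
      set S1 := (S.erase v).filter (fun u => H.Adj v u) with hS1
      set S2 := (S.erase v).filter (fun u => ¬ H.Adj v u) with hS2
      have hc : S1.card + S2.card = (S.erase v).card := Finset.card_filter_add_card_filter_not _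
      have hc2 : (S.erase v).card + 1 = S.card := Finset.card_erase_add_one hv
      by_cases hle : N1 ≤ S1.card
      · rcases h1 V H S1 hle with ⟨A, hA, hAc, hAp⟩ | ⟨B, hB, hBc, hBp⟩
        · left
          refine ⟨insert v A, ?_, ?_, ?_⟩
          · intro u hu
            rcases Finset.mem_insert.1 hu with rfl | hu
            · exact hv
            · have := hA hu; simp [hS1] at this; exact this.1.2
          · rw [Finset.card_insert_of_notMem, hAc]
            intro h; have := hA h; simp [hS1] at this
          · rw [Finset.coe_insert]
            apply hAp.insert
            intro u hu _
            have := hA hu; simp [hS1] at this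
            exact ⟨this.2, this.2.symm⟩
        · right
          refine ⟨B, fun u hu => ?_, hBc, hBp⟩
          have := hB hu; simp [hS1] at this; exact this.1.2
      · have : N2 ≤ S2.card := by omega
        rcases h2 V H S2 this with ⟨A, hA, hAc, hAp⟩ | ⟨B, hB, hBc, hBp⟩
        · left
          refine ⟨A, fun u hu => ?_, hAc, hAp⟩
          have := hA hu; simp [hS2] at this; exact this.1.2
        · right
          refine ⟨insert v B, ?_, ?_, ?_⟩
          · intro u hu
            rcases Finset.mem_insert.1 hu with rfl | hu
            · exact hv
            · have := hB hu; simp [hS2] at this; exact this.1.2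
          · rw [Finset.card_insert_of_notMem, hBc]
            intro h; have := hB h; simp [hS2] at this
          · rw [Finset.coe_insert]
            apply hBp.insert
            intro u hu _
            have := hB hu; simp [hS2] at this
            exact ⟨this.2, fun h => this.2 h.symm⟩

theorem ramsey_spec (s t : ℕ) : RamseyProp (ramsey s t) s t := by
  have : {N | RamseyProp N s t}.Nonempty := by
    obtain ⟨N, hN⟩ := ramsey_exists s t
    refine ⟨N, fun H => ?_⟩
    rcases hN (Fin N) H Finset.univ (by simp) with ⟨A, _, h⟩ | ⟨B, _, h⟩
    · exact Or.inl ⟨A, h⟩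
    · exact Or.inr ⟨B, h⟩
  exact Nat.sInf_mem this

theorem no_indep {V : Type*} [Fintype V] (G : SimpleGraph V) (s : Finset V)
    (hs : (s : Set V).Pairwise fun u v => ¬ G.Adj u v) : s.card ≤ indepNum G := by
  apply le_csSup
  · refine ⟨Fintype.card V, ?_⟩
    rintro n ⟨s, rfl, _⟩
    exact Finset.card_le_univ s
  · exact ⟨s, rfl, hs⟩

/-- Ramsey in an injective sequence. -/
theorem ram1 {V : Type*} [Fintype V] (G : SimpleGraph V) (s N : ℕ)
    (hN : N = ramsey s (indepNum G + 1)) (x : Fin N → V) (hx : Function.Injective x) :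
    ∃ f : Fin s ↪o Fin N, ∀ p q, p ≠ q → G.Adj (x (f p)) (x (f q)) := by
  classical
  have h := ramsey_spec s (indepNum G + 1)
  rw [← hN] at h
  rcases h (G.comap x) with ⟨A, hA, hp⟩ | ⟨B, hB, hp⟩
  · refine ⟨A.orderEmbOfFin hA, fun p q hpq => ?_⟩
    exact hp (A.orderEmbOfFin_mem hA p) (A.orderEmbOfFin_mem hA q)
      (fun h => hpq ((A.orderEmbOfFin hA).injective h))
  · exfalso
    have := no_indep G (B.map ⟨x, hx⟩) (by
      intro u hu v hv huv
      simp at hu hv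
      obtain ⟨i, hi, rfl⟩ := hu
      obtain ⟨j, hj, rfl⟩ := hv
      exact hp hi hj (fun h => huv (by rw [h])))
    rw [Finset.card_map, hB] at this
    omega

theorem ram2 {V : Type*} [Fintype V] (G : SimpleGraph V) (R : ℕ)
    (hR : R = ramsey (ramsey 4 (indepNum G + 1)) (indepNum G + 1)) (x y : ℕ → V)
    (hx : ∀ i < R, ∀ j < R, x i = x j → i = j) (hy : ∀ i < R, ∀ j < R, y i = y j → i = j) :
    ∃ f : Fin 4 → ℕ, StrictMono f ∧ (∀ p, f p < R) ∧
      ∀ p q, p ≠ q → G.Adj (x (f p)) (x (f q)) ∧ G.Adj (y (f p)) (y (f q)) := by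
  obtain ⟨f, hf⟩ := ram1 G _ R hR (fun i => x i) (fun i j h => Fin.ext (hx i i.2 j j.2 h))
  obtain ⟨g, hg⟩ := ram1 G 4 _ rfl (fun i => y (f i))
    (fun i j h => f.injective (Fin.ext (hy _ (f i).2 _ (f j).2 h)))
  refine ⟨fun p => f (g p), fun p q h => ?_, fun p => (f (g p)).2, fun p q h => ⟨?_, hg p q h⟩⟩
  · exact f.strictMono (g.strictMono h)
  · exact hf _ _ (fun h' => h (g.injective h'))

/-! Matchings and switching -/

section
variable {V : Type*} [DecidableEq V]

theorem mem_sd {M N : Finset (Sym2 V)} {e : Sym2 V} :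
    e ∈ sd M N ↔ (e ∈ M ∧ e ∉ N) ∨ (e ∈ N ∧ e ∉ M) := by
  simp [sd]

theorem IsPM.eq {G : SimpleGraph V} {M : Finset (Sym2 V)} (h : IsPM G M) {e f : Sym2 V} {v : V}
    (he : e ∈ M) (hf : f ∈ M) (hve : v ∈ e) (hvf : v ∈ f) : e = f :=
  (h.2 v).unique ⟨he, hve⟩ ⟨hf, hvf⟩

/-- `Z` is balanced with respect to the perfect matching `N`. -/
def IsBal (G : SimpleGraph V) (N Z : Finset (Sym2 V)) : Prop :=
  (∀ e ∈ Z, e ∈ G.edgeSet) ∧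
  (∀ v, ∀ e ∈ Z, v ∈ e → ∃ f ∈ Z, f ∈ N ∧ v ∈ f) ∧
  (∀ v, ∀ e ∈ Z, v ∈ e → ∃ f ∈ Z, f ∉ N ∧ v ∈ f) ∧
  (∀ v, ∀ e ∈ Z, ∀ f ∈ Z, e ∉ N → f ∉ N → v ∈ e → v ∈ f → e = f)

theorem IsBal.congr {G : SimpleGraph V} {N N' Z : Finset (Sym2 V)} (h : IsBal G N Z)
    (hh : ∀ e ∈ Z, (e ∈ N ↔ e ∈ N')) : IsBal G N' Z := by
  obtain ⟨h1, h2, h3, h4⟩ := h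
  refine ⟨h1, fun v e he hv => ?_, fun v e he hv => ?_, fun v e he f hf h h' => ?_⟩
  · obtain ⟨f, hf, hfN, hvf⟩ := h2 v e he hv
    exact ⟨f, hf, (hh f hf).1 hfN, hvf⟩
  · obtain ⟨f, hf, hfN, hvf⟩ := h3 v e he hv
    exact ⟨f, hf, fun h => hfN ((hh f hf).2 h), hvf⟩
  · exact h4 v e he f hf (fun h'' => h ((hh e he).1 h'')) (fun h'' => h' ((hh f hf).1 h''))

theorem IsBal.isPM {G : SimpleGraph V} {N Z : Finset (Sym2 V)} (hN : IsPM G N)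
    (h : IsBal G N Z) : IsPM G (sd N Z) := by
  obtain ⟨h1, h2, h3, h4⟩ := h
  refine ⟨fun e he => ?_, fun v => ?_⟩
  · rcases mem_sd.1 he with h | h
    · exact hN.1 h.1
    · exact h1 e h.1
  · by_cases hv : ∃ e ∈ Z, v ∈ e
    · obtain ⟨e, he, hve⟩ := hv
      obtain ⟨f, hf, hfN, hvf⟩ := h3 v e he hve
      obtain ⟨g, hg, hgN, hvg⟩ := h2 v e he hve
      refine ⟨f, ⟨mem_sd.2 (Or.inr ⟨hf, hfN⟩), hvf⟩, ?_⟩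
      rintro e' ⟨he', hve'⟩
      rcases mem_sd.1 he' with h | h
      · exact absurd (hN.eq h.1 hgN hve' hvg ▸ hg) h.2
      · exact h4 v _ h.1 _ hf h.2 hfN hve' hvf
    · push Not at hv
      obtain ⟨e, ⟨he, hve⟩, hu⟩ := hN.2 v
      refine ⟨e, ⟨mem_sd.2 (Or.inl ⟨he, fun h => hv e h hve⟩), hve⟩, ?_⟩
      rintro e' ⟨he', hve'⟩
      rcases mem_sd.1 he' with h | h
      · exact hu e' ⟨h.1, hve'⟩
      · exact absurd hve' (hv e' h.1)

theorem redCount_eq_sum (red : Sym2 V → Bool) (F : Finset (Sym2 V)) :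
    (redCount red F : ℤ) = ∑ e ∈ F, if red e then 1 else 0 := by
  simp [redCount]

theorem redCount_sd (red : Sym2 V → Bool) (N Z : Finset (Sym2 V)) :
    (redCount red (sd N Z) : ℤ) = redCount red N + wSum red N Z := by
  have hd : Disjoint (N \ Z) (Z \ N) := by
    rw [Finset.disjoint_left]; intro e; simp; tauto
  have e1 : ∑ e ∈ N \ Z, (if red e then (1:ℤ) else 0) + ∑ e ∈ N ∩ Z, (if red e then (1:ℤ) else 0)
    = ∑ e ∈ N, if red e then (1:ℤ) else 0 := by
    rw [add_comm]; exact Finset.sum_inter_add_sum_sdiff _ _ _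
  have e2 : ∑ e ∈ Z \ N, wt red N e + ∑ e ∈ Z ∩ N, wt red N e = ∑ e ∈ Z, wt red N e := by
    rw [add_comm]; exact Finset.sum_inter_add_sum_sdiff _ _ _
  have e3 : ∑ e ∈ Z ∩ N, wt red N e = - ∑ e ∈ N ∩ Z, (if red e then (1:ℤ) else 0) := by
    rw [← Finset.sum_neg_distrib, Finset.inter_comm]
    refine Finset.sum_congr rfl fun e he => ?_
    have : e ∈ N := (Finset.mem_inter.1 he).1
    simp [wt, this]
    split_ifs <;> simp
  have e4 : ∑ e ∈ Z \ N, wt red N e = ∑ e ∈ Z \ N, (if red e then (1:ℤ) else 0) := by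
    refine Finset.sum_congr rfl fun e he => ?_
    have : e ∉ N := (Finset.mem_sdiff.1 he).2
    simp [wt, this]
  rw [redCount_eq_sum, redCount_eq_sum, sd, Finset.sum_union hd, wSum]
  linarith

theorem sd_assoc_aux (M N Z : Finset (Sym2 V)) : sd M (sd N Z) = sd (sd M N) Z := by
  ext e; simp only [mem_sd]; tauto

theorem card_sd_aux (F Z : Finset (Sym2 V)) :
    (sd F Z).card + (Z ∩ F).card = F.card + (Z \ F).card := by
  have hd : Disjoint (F \ Z) (Z \ F) := by
    rw [Finset.disjoint_left]; intro e; simp; tauto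
  rw [sd, Finset.card_union_of_disjoint hd, Finset.inter_comm]
  have := Finset.card_sdiff_add_card_inter F Z
  omega

theorem wSum_sd (red : Sym2 V → Bool) (M N : Finset (Sym2 V)) :
    wSum red M (sd M N) = redCount red N - redCount red M := by
  have h := redCount_sd red M (sd M N)
  have : sd M (sd M N) = N := by ext e; simp only [mem_sd]; tauto
  rw [this] at h
  linarith

/-- A list of moves which are pairwise vertex disjoint can be applied simultaneously. -/
theorem apply_moves (G : SimpleGraph V) (red : Sym2 V → Bool) (M : Finset (Sym2 V))
    (L : List (Finset (Sym2 V))) : ∀ (N : Finset (Sym2 V)), IsPM G N →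
    (∀ Z ∈ L, IsBal G N Z ∧ (Z \ sd M N).card < (Z ∩ sd M N).card) →
    L.Pairwise (fun Z Z' => ∀ v, ∀ e ∈ Z, ∀ f ∈ Z', v ∈ e → v ∈ f → False) →
    ∃ N', IsPM G N' ∧ (redCount red N' : ℤ) = redCount red N + (L.map (wSum red N)).sum ∧
      (sd M N').card + L.length ≤ (sd M N).card := by
  induction L with
  | nil => intro N hN _ _; exact ⟨N, hN, by simp, by simp⟩
  | cons Z L ih =>
    intro N hN hL hp
    rw [List.pairwise_cons] at hp
    have hZ := hL Z (by simp)
    have hagree : ∀ Z' ∈ L, ∀ e ∈ Z', e ∉ Z := by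
      intro Z' hZ' e he heZ
      induction e with | _ u v =>
      exact hp.1 Z' hZ' u _ heZ _ he (by simp) (by simp)
    obtain ⟨N', h1, h2, h3⟩ := ih (sd N Z) (hZ.1.isPM hN) (by
      intro Z' hZ'
      have ha : ∀ e ∈ Z', (e ∈ N ↔ e ∈ sd N Z) := by
        intro e he
        have := hagree Z' hZ' e he
        rw [mem_sd]; tauto
      have hb := hL Z' (by simp [hZ'])
      refine ⟨hb.1.congr ha, ?_⟩
      have e1 : Z' \ sd M (sd N Z) = Z' \ sd M N := by
        ext e; simp only [Finset.mem_sdiff]; 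
        refine and_congr_right fun he => ?_
        simp only [mem_sd (M := M), ← ha e he]
      have e2 : Z' ∩ sd M (sd N Z) = Z' ∩ sd M N := by
        ext e; simp only [Finset.mem_inter]; 
        refine and_congr_right fun he => ?_
        simp only [mem_sd (M := M), ← ha e he]
      rw [e1, e2]; exact hb.2) hp.2
    refine ⟨N', h1, ?_, ?_⟩
    · rw [h2, redCount_sd, List.map_cons, List.sum_cons]
      have : L.map (wSum red (sd N Z)) = L.map (wSum red N) := by
        refine List.map_congr_left fun Z' hZ' => ?_
        refine Finset.sum_congr rfl fun e he => ?_
        have ha : (e ∈ N ↔ e ∈ sd N Z) := by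
          have := hagree Z' hZ' e he
          rw [mem_sd]; tauto
        simp only [wt, ha]
      rw [this]; ring
    · have := card_sd_aux (sd M N) Z
      rw [← sd_assoc_aux] at this
      have := hZ.2
      simp only [List.length_cons]
      omega

theorem exists_partner {G : SimpleGraph V} {M : Finset (Sym2 V)} (hM : IsPM G M) :
    ∃ μ : V → V, (∀ v, s(v, μ v) ∈ M) ∧ (∀ v, μ v ≠ v) ∧ (∀ v, μ (μ v) = v) ∧
      ∀ u v, s(u, v) ∈ M → v = μ u := by
  have : ∀ v, ∃ u, s(v, u) ∈ M := by
    intro v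
    obtain ⟨e, ⟨he, hv⟩, _⟩ := hM.2 v
    obtain ⟨u, rfl⟩ := hv
    exact ⟨u, he⟩
  choose μ hμ using this
  have huniq : ∀ u v, s(u, v) ∈ M → v = μ u := by
    intro u v h
    have := hM.eq h (hμ u) (v := u) (by simp) (by simp)
    simp at this
    rcases this with h | h
    · exact h
    · rw [h.2]; exact h.1
  refine ⟨μ, hμ, fun v h => ?_, fun v => ?_, huniq⟩
  · have := hM.1 (hμ v)
    rw [h] at this
    exact G.loopless.irrefl v this
  · have := huniq (μ v) v (by rw [Sym2.eq_swap]; exact hμ v)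
    exact this.symm

end


set_option linter.unusedSectionVars false
set_option linter.deprecated false
section
variable {V : Type*} [DecidableEq V]

/-- Edges of the path through a list of oriented pairs. -/
def pe : List (V × V) → List (Sym2 V)
  | [] => []
  | [p] => [s(p.1, p.2)]
  | p :: q :: l => s(p.1, p.2) :: s(p.2, q.1) :: pe (q :: l)

def fl (l : List (V × V)) : List V := l.flatMap fun p => [p.1, p.2]

theorem walk_of_pe (G : SimpleGraph V) (l : List (V × V)) : ∀ (p : V × V),
    (∀ q ∈ p :: l, G.Adj q.1 q.2) → (p :: l).IsChain (fun q r => G.Adj q.2 r.1) →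
    ∃ w : G.Walk p.1 ((p :: l).getLast (by simp)).2, w.edges = pe (p :: l) ∧
      w.support = fl (p :: l) := by
  induction l with
  | nil =>
    intro p hp _
    refine ⟨SimpleGraph.Walk.cons (hp p (by simp)) SimpleGraph.Walk.nil, ?_, ?_⟩ <;> simp [pe, fl]
  | cons q l ih =>
    intro p hp hc
    rw [List.isChain_cons_cons] at hc
    obtain ⟨w, h1, h2⟩ := ih q (fun r hr => hp r (by simp at hr ⊢; tauto)) hc.2
    refine ⟨(SimpleGraph.Walk.cons (hp p (by simp)) (SimpleGraph.Walk.cons hc.1 w)).copy rfl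
      (by rw [List.getLast_cons_cons]), ?_, ?_⟩
    · simp [pe, h1]
    · simp [fl, h2]

theorem alt_of_pe (M : Finset (Sym2 V)) (e1 : Sym2 V) (h1 : e1 ∉ M) (l : List (V × V)) :
    ∀ (p : V × V) (e0 : Sym2 V), e0 ∉ M →
    (∀ q ∈ p :: l, s(q.1, q.2) ∈ M) → (p :: l).IsChain (fun q r => s(q.2, r.1) ∉ M) →
    (e0 :: (pe (p :: l) ++ [e1])).IsChain (fun e f => ¬ (e ∈ M ↔ f ∈ M)) := by
  induction l with
  | nil =>
    intro p e0 h0 hp _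
    have := hp p (by simp)
    simp [pe, h0, h1, this]
  | cons q l ih =>
    intro p e0 h0 hp hc
    rw [List.isChain_cons_cons] at hc
    have := ih q s(p.2, q.1) hc.1 (fun r hr => hp r (by simp at hr ⊢; tauto)) hc.2
    have h3 := hp p (by simp)
    simp only [pe, List.cons_append]
    rw [List.isChain_cons_cons, List.isChain_cons_cons]
    refine ⟨by simp [h0, h3], by simp [hc.1, h3], this⟩

theorem pe_length (l : List (V × V)) : ∀ p, (pe (p :: l)).length = 2 * l.length + 1 := by
  induction l with
  | nil => intro p; simp [pe]
  | cons q l ih => intro p; simp [pe, ih]; ring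

theorem altCycle_of_list (G : SimpleGraph V) (M : Finset (Sym2 V)) (hMG : ∀ e ∈ M, e ∈ G.edgeSet)
    (L : List (V × V)) (hL : L ≠ []) (hlen : 2 ≤ L.length)
    (hnd : (fl L).Nodup) (hm : ∀ q ∈ L, s(q.1, q.2) ∈ M)
    (hc : L.IsChain (fun q r => s(q.2, r.1) ∉ M ∧ G.Adj q.2 r.1))
    (hcl : s((L.getLast hL).2, (L.head hL).1) ∉ M)
    (hclA : G.Adj (L.getLast hL).2 (L.head hL).1) :
    IsAltCycle G M (s((L.getLast hL).2, (L.head hL).1) :: pe L).toFinset := by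
  cases L with
  | nil => simp at hL
  | cons p l =>
    simp only [List.head_cons] at hcl hclA ⊢
    obtain ⟨w, h1, h2⟩ := walk_of_pe G l p (fun q hq => hMG _ (hm q hq))
      (hc.imp fun a b h => h.2)
    have hpath : w.IsPath := by
      rw [SimpleGraph.Walk.isPath_def, h2]; exact hnd
    refine ⟨_, SimpleGraph.Walk.cons hclA w, ?_, ?_, ?_⟩
    · rw [SimpleGraph.Walk.cons_isCycle_iff]
      refine ⟨hpath, fun h => ?_⟩
      rw [Sym2.eq_swap] at h
      have h5 := hpath.length_eq_one_of_mem_edges h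
      have h6 := SimpleGraph.Walk.length_edges w
      rw [h1, pe_length, h5] at h6
      simp at hlen h6
      simp [h6] at hlen
    · simp [h1]
    · have := alt_of_pe M _ hcl l p _ hcl hm (hc.imp fun a b h => h.1)
      unfold altList
      rw [SimpleGraph.Walk.edges_cons, h1]
      exact this

theorem altPath_of_list (G : SimpleGraph V) (M : Finset (Sym2 V)) (hMG : ∀ e ∈ M, e ∈ G.edgeSet)
    (L : List (V × V)) (hL : L ≠ [])
    (hnd : (fl L).Nodup) (hm : ∀ q ∈ L, s(q.1, q.2) ∈ M)
    (hc : L.IsChain (fun q r => s(q.2, r.1) ∉ M ∧ G.Adj q.2 r.1))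
    (e : Sym2 V) (heM : e ∉ M) :
    IsAltPath G M (pe L).toFinset := by
  cases L with
  | nil => simp at hL
  | cons p l =>
    obtain ⟨w, h1, h2⟩ := walk_of_pe G l p (fun q hq => hMG _ (hm q hq))
      (hc.imp fun a b h => h.2)
    have hpath : w.IsPath := by
      rw [SimpleGraph.Walk.isPath_def, h2]; exact hnd
    refine ⟨_, _, w, hpath, by rw [h1], ?_⟩
    have := alt_of_pe M _ heM l p _ heM hm (hc.imp fun a b h => h.1)
    unfold altList
    rw [h1]
    exact this.tail.left_of_append

/-- membership in `pe` of an append -/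
theorem mem_pe_append (A B : List (V × V)) (hA : A ≠ []) (hB : B ≠ []) (e : Sym2 V) :
    e ∈ pe (A ++ B) ↔ e ∈ pe A ∨ e = s((A.getLast hA).2, (B.head hB).1) ∨ e ∈ pe B := by
  induction A with
  | nil => simp at hA
  | cons p A ih =>
    cases A with
    | nil =>
      cases B with
      | nil => simp at hB
      | cons q B => simp [pe]
    | cons p' A =>
      have := ih (by simp)
      simp only [List.cons_append, pe, List.mem_cons] at this ⊢
      rw [this, List.getLast_cons_cons]
      tauto

def rev (l : List (V × V)) : List (V × V) := (l.map Prod.swap).reverse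

theorem mem_pe_rev (A : List (V × V)) (e : Sym2 V) : e ∈ pe (rev A) ↔ e ∈ pe A := by
  induction A with
  | nil => simp [rev]
  | cons p A ih =>
    cases A with
    | nil => simp [rev, pe, Sym2.eq_swap]
    | cons q A =>
      have h1 : rev (p :: q :: A) = rev (q :: A) ++ [p.swap] := by simp [rev]
      rw [h1, mem_pe_append _ _ (by simp [rev]) (by simp), ih]
      have h2 : (rev (q :: A)).getLast (by simp [rev]) = q.swap := by simp [rev]
      rw [h2]
      simp only [pe, List.mem_cons, List.head_cons, Prod.fst_swap, Prod.snd_swap, List.not_mem_nil, or_false]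
      rw [Sym2.eq_swap (a := q.1), Sym2.eq_swap (a := p.2) (b := p.1)]
      tauto

theorem fl_append (A B : List (V × V)) : fl (A ++ B) = fl A ++ fl B := by simp [fl]

theorem fl_rev_perm (A : List (V × V)) : (fl (rev A)).Perm (fl A) := by
  induction A with
  | nil => simp [rev, fl]
  | cons p A ih =>
    have h1 : rev (p :: A) = rev A ++ [p.swap] := by simp [rev]
    have h2 : fl (p :: A) = fl [p] ++ fl A := by simp [fl]
    rw [h1, fl_append, h2]
    refine List.perm_append_comm.trans ?_
    refine List.Perm.append ?_ ih
    simp [fl]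
    exact List.Perm.swap _ _ _

/-- the segment of pairs with indices in `[s, s+m)` -/
def sg (a b : ℕ → V) (s m : ℕ) : List (V × V) := (List.range' s m).map fun i => (a i, b i)

theorem sg_succ (a b : ℕ → V) (s m : ℕ) : sg a b s (m+1) = (a s, b s) :: sg a b (s+1) m := by
  simp [sg, List.range'_succ]

theorem sg_append (a b : ℕ → V) (s m k : ℕ) : sg a b s m ++ sg a b (s+m) k = sg a b s (m+k) := by
  simp only [sg]
  rw [← List.map_append, List.range'_append_1]

theorem mem_pe_sg (a b : ℕ → V) (m s : ℕ) (e : Sym2 V) :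
    e ∈ pe (sg a b s m) ↔ (∃ p, s ≤ p ∧ p < s + m ∧ e = s(a p, b p)) ∨
      (∃ p, s ≤ p ∧ p + 1 < s + m ∧ e = s(b p, a (p+1))) := by
  induction m generalizing s with
  | zero =>
    simp [sg, pe]
    constructor <;> intro x h1 h2 <;> omega
  | succ m ih =>
    have ih' := ih (s+1)
    have key : e ∈ pe (sg a b s (m+1)) ↔ e = s(a s, b s) ∨ (0 < m ∧ e = s(b s, a (s+1))) ∨
        e ∈ pe (sg a b (s+1) m) := by
      rw [sg_succ]
      cases m with
      | zero => simp [sg, pe]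
      | succ m => rw [sg_succ]; simp [pe]
    rw [key, ih']
    constructor
    · rintro (h | ⟨h0, h⟩ | ⟨p, h1, h2, h⟩ | ⟨p, h1, h2, h⟩)
      · exact Or.inl ⟨s, by omega, by omega, h⟩
      · exact Or.inr ⟨s, by omega, by omega, h⟩
      · exact Or.inl ⟨p, by omega, by omega, h⟩
      · exact Or.inr ⟨p, by omega, by omega, h⟩
    · rintro (⟨p, h1, h2, h⟩ | ⟨p, h1, h2, h⟩)
      · by_cases hp : p = s
        · subst hp; exact Or.inl h
        · exact Or.inr (Or.inr (Or.inl ⟨p, by omega, by omega, h⟩))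
      · by_cases hp : p = s
        · subst hp; exact Or.inr (Or.inl ⟨by omega, h⟩)
        · exact Or.inr (Or.inr (Or.inr ⟨p, by omega, by omega, h⟩))

theorem sg_ne_nil (a b : ℕ → V) (s m : ℕ) (h : 0 < m) : sg a b s m ≠ [] := by
  simp [sg]; omega

theorem sg_head (a b : ℕ → V) (s m : ℕ) (h : 0 < m) :
    (sg a b s m).head (sg_ne_nil a b s m h) = (a s, b s) := by
  simp [sg]

theorem sg_getLast (a b : ℕ → V) (s m : ℕ) (h : 0 < m) :
    (sg a b s m).getLast (sg_ne_nil a b s m h) = (a (s+m-1), b (s+m-1)) := by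
  simp [sg, List.getLast_range']

theorem sg_chain (P : V × V → V × V → Prop) (a b : ℕ → V) (m s : ℕ)
    (h : ∀ p, s ≤ p → p + 1 < s + m → P (a p, b p) (a (p+1), b (p+1))) :
    (sg a b s m).IsChain P := by
  induction m generalizing s with
  | zero => simp [sg]
  | succ m ih =>
    have ih' := ih (s+1) (fun p h1 h2 => h p (by omega) (by omega))
    rw [sg_succ]
    cases m with
    | zero => simp [sg]
    | succ m =>
      rw [sg_succ] at ih' ⊢
      rw [List.isChain_cons_cons]
      exact ⟨h s (by omega) (by omega), ih'⟩

theorem mem_fl_sg (a b : ℕ → V) (s m : ℕ) (v : V) :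
    v ∈ fl (sg a b s m) ↔ ∃ p, s ≤ p ∧ p < s + m ∧ (v = a p ∨ v = b p) := by
  simp [fl, sg, List.mem_range'_1, and_assoc]

theorem fl_sg_nodup (a b : ℕ → V) (n : ℕ)
    (ha : ∀ i < n, ∀ j < n, a i = a j → i = j) (hb : ∀ i < n, ∀ j < n, b i = b j → i = j)
    (hab : ∀ i < n, ∀ j < n, a i ≠ b j) (m s : ℕ) (h : s + m ≤ n) : (fl (sg a b s m)).Nodup := by
  induction m generalizing s with
  | zero => simp [fl, sg]
  | succ m ih =>
    have ih' := ih (s+1) (by omega)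
    rw [sg_succ]
    have : fl ((a s, b s) :: sg a b (s+1) m) = a s :: b s :: fl (sg a b (s+1) m) := by simp [fl]
    rw [this, List.nodup_cons, List.nodup_cons, List.mem_cons, mem_fl_sg, mem_fl_sg]
    refine ⟨?_, ?_, ih'⟩
    · rintro (h1 | ⟨p, h1, h2, h3 | h3⟩)
      · exact hab s (by omega) s (by omega) h1
      · have := ha s (by omega) p (by omega) h3; omega
      · exact hab s (by omega) p (by omega) h3
    · rintro (⟨p, h1, h2, h3 | h3⟩)
      · exact hab p (by omega) s (by omega) h3.symm
      · have := hb s (by omega) p (by omega) h3; omega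

end


set_option linter.unusedSectionVars false
section
variable {V : Type*} [DecidableEq V]

structure CRep (G : SimpleGraph V) (M N C : Finset (Sym2 V)) (n : ℕ) (a b : ℕ → V) : Prop where
  two_le : 2 ≤ n
  per : a n = a 0
  ainj : ∀ i < n, ∀ j < n, a i = a j → i = j
  binj : ∀ i < n, ∀ j < n, b i = b j → i = j
  ab : ∀ i < n, ∀ j < n, a i ≠ b j
  hm : ∀ i < n, s(a i, b i) ∈ M
  hn : ∀ i < n, s(b i, a (i+1)) ∈ N
  hmN : ∀ i < n, s(a i, b i) ∉ N
  hnM : ∀ i < n, s(b i, a (i+1)) ∉ M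
  hC : ∀ e, e ∈ C ↔ (∃ i < n, e = s(a i, b i)) ∨ (∃ i < n, e = s(b i, a (i+1)))

/-- Height function along a cycle. -/
def Ht (red : Sym2 V → Bool) (M : Finset (Sym2 V)) (a b : ℕ → V) (i : ℕ) : ℤ :=
  ∑ j ∈ Finset.range i, (wt red M s(a j, b j) + wt red M s(b j, a (j+1)))

theorem Ht_succ (red : Sym2 V → Bool) (M : Finset (Sym2 V)) (a b : ℕ → V) (i : ℕ) :
    Ht red M a b (i+1) = Ht red M a b i + wt red M s(a i, b i) + wt red M s(b i, a (i+1)) := by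
  rw [Ht, Finset.sum_range_succ, Ht]; ring

namespace CRep
variable {G : SimpleGraph V} {M N C : Finset (Sym2 V)} {n : ℕ} {a b : ℕ → V}

theorem a_succ_mod (h : CRep G M N C n a b) (i : ℕ) (hi : i < n) : ∃ j < n, a (i+1) = a j ∧ (i + 1 < n → j = i+1) ∧ (i + 1 = n → j = 0) := by
  by_cases h1 : i + 1 < n
  · exact ⟨i+1, h1, rfl, fun _ => rfl, fun h => by omega⟩
  · have : i + 1 = n := by omega
    exact ⟨0, by omega, by rw [this, h.per], by omega, fun _ => rfl⟩

theorem a_succ_ne_b (h : CRep G M N C n a b) (i j : ℕ) (hi : i < n) (hj : j < n) : a (i+1) ≠ b j := by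
  obtain ⟨k, hk, e, _⟩ := h.a_succ_mod i hi
  rw [e]; exact h.ab k hk j hj

theorem a_succ_inj (h : CRep G M N C n a b) (i j : ℕ) (hi : i < n) (hj : j < n)
    (he : a (i+1) = a (j+1)) : i = j := by
  obtain ⟨k, hk, e, h1, h2⟩ := h.a_succ_mod i hi
  obtain ⟨k', hk', e', h1', h2'⟩ := h.a_succ_mod j hj
  have := h.ainj k hk k' hk' (by rw [← e, ← e', he])
  by_cases c1 : i + 1 < n <;> by_cases c2 : j + 1 < n
  · have := h1 c1; have := h1' c2; omega
  · have := h1 c1; have := h2' (by omega); omega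
  · have := h2 (by omega); have := h1' c2; omega
  · omega

theorem m_inj (h : CRep G M N C n a b) (i j : ℕ) (hi : i < n) (hj : j < n)
    (he : s(a i, b i) = s(a j, b j)) : i = j := by
  rw [Sym2.eq_iff] at he
  rcases he with he | he
  · exact h.ainj i hi j hj he.1
  · exact absurd he.1 (h.ab i hi j hj)

theorem n_inj (h : CRep G M N C n a b) (i j : ℕ) (hi : i < n) (hj : j < n)
    (he : s(b i, a (i+1)) = s(b j, a (j+1))) : i = j := by
  rw [Sym2.eq_iff] at he
  rcases he with he | he
  · exact h.binj i hi j hj he.1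
  · exact absurd he.1.symm (h.a_succ_ne_b j i hj hi)

theorem m_ne_n (h : CRep G M N C n a b) (i j : ℕ) (hi : i < n) (hj : j < n) :
    s(a i, b i) ≠ s(b j, a (j+1)) := by
  intro he
  exact h.hnM j hj (he ▸ h.hm i hi)

theorem C_eq (h : CRep G M N C n a b) : C = (Finset.range n).image (fun i => s(a i, b i)) ∪
    (Finset.range n).image (fun i => s(b i, a (i+1))) := by
  ext e; rw [h.hC]; simp [eq_comm]

theorem disj_mn (h : CRep G M N C n a b) (A B : Finset ℕ) (hA : ∀ i ∈ A, i < n) (hB : ∀ i ∈ B, i < n) :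
    Disjoint (A.image (fun i => s(a i, b i))) (B.image (fun i => s(b i, a (i+1)))) := by
  rw [Finset.disjoint_left]
  intro e h1 h2
  simp only [Finset.mem_image] at h1 h2
  obtain ⟨i, hi, rfl⟩ := h1
  obtain ⟨j, hj, e⟩ := h2
  exact h.m_ne_n i j (hA i hi) (hB j hj) e.symm

theorem sum_mn (h : CRep G M N C n a b) (A B : Finset ℕ) (hA : ∀ i ∈ A, i < n) (hB : ∀ i ∈ B, i < n)
    {R : Type*} [AddCommMonoid R] (F : Sym2 V → R) :
    ∑ e ∈ A.image (fun i => s(a i, b i)) ∪ B.image (fun i => s(b i, a (i+1))), F e =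
      ∑ i ∈ A, F s(a i, b i) + ∑ i ∈ B, F s(b i, a (i+1)) := by
  rw [Finset.sum_union (h.disj_mn A B hA hB), Finset.sum_image, Finset.sum_image]
  · intro i hi j hj; exact h.n_inj i j (hB i hi) (hB j hj)
  · intro i hi j hj; exact h.m_inj i j (hA i hi) (hA j hj)

theorem wSum_C (h : CRep G M N C n a b) (red : Sym2 V → Bool) : wSum red M C = Ht red M a b n := by
  rw [wSum, h.C_eq, h.sum_mn _ _ (by simp) (by simp), Ht, Finset.sum_add_distrib]

theorem card_C (h : CRep G M N C n a b) : C.card = 2 * n := by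
  have := h.sum_mn (Finset.range n) (Finset.range n) (by simp) (by simp) (fun _ => (1:ℕ))
  rw [← h.C_eq] at this
  simp at this; omega

theorem sub (h : CRep G M N C n a b) : C ⊆ sd M N := by
  intro e he
  rw [mem_sd]
  rcases (h.hC e).1 he with ⟨i, hi, rfl⟩ | ⟨i, hi, rfl⟩
  · exact Or.inl ⟨h.hm i hi, h.hmN i hi⟩
  · exact Or.inr ⟨h.hn i hi, h.hnM i hi⟩

theorem altCycle (h : CRep G M N C n a b) (hM : IsPM G M) (hN : IsPM G N) : IsAltCycle G M C := by
  have h2 := h.two_le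
  have := altCycle_of_list G M (fun e he => hM.1 he) (sg a b 0 n) (sg_ne_nil a b 0 n (by omega))
    (by simp [sg]; exact h2) (fl_sg_nodup a b n h.ainj h.binj h.ab n 0 (by omega))
    (by
      intro q hq
      simp [sg] at hq
      obtain ⟨i, hi, rfl⟩ := hq
      exact h.hm i (by omega))
    (sg_chain _ a b n 0 (by
      intro p _ hp
      exact ⟨h.hnM p (by omega), hN.1 (h.hn p (by omega))⟩))
    (by
      rw [sg_getLast a b 0 n (by omega), sg_head a b 0 n (by omega)]
      have := h.hnM (n-1) (by omega)
      rw [show n - 1 + 1 = n by omega, h.per] at this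
      simpa using this)
    (by
      rw [sg_getLast a b 0 n (by omega), sg_head a b 0 n (by omega)]
      have := hN.1 (h.hn (n-1) (by omega))
      rw [show n - 1 + 1 = n by omega, h.per] at this
      simpa using this)
  rw [sg_getLast a b 0 n (by omega), sg_head a b 0 n (by omega)] at this
  convert this
  ext e
  rw [h.hC, List.mem_toFinset, List.mem_cons, mem_pe_sg]
  constructor
  · rintro (⟨i, hi, rfl⟩ | ⟨i, hi, rfl⟩)
    · exact Or.inr (Or.inl ⟨i, by omega, by omega, rfl⟩)
    · by_cases c : i + 1 < n
      · exact Or.inr (Or.inr ⟨i, by omega, by omega, rfl⟩)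
      · left
        have : i + 1 = n := by omega
        rw [this, h.per]
        have : 0 + n - 1 = i := by omega
        rw [this]
  · rintro (h1 | ⟨i, h0, hi, rfl⟩ | ⟨i, h0, hi, rfl⟩)
    · right
      refine ⟨n-1, by omega, ?_⟩
      rw [show n - 1 + 1 = n by omega, h.per, h1]; simp
    · exact Or.inl ⟨i, by omega, rfl⟩
    · exact Or.inr ⟨i, by omega, rfl⟩

theorem altPath (h : CRep G M N C n a b) (hM : IsPM G M) (hN : IsPM G N) (s m : ℕ) (hm : 0 < m)
    (hs : s + m ≤ n) : IsAltPath G M (pe (sg a b s m)).toFinset :=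
  altPath_of_list G M (fun e he => hM.1 he) (sg a b s m) (sg_ne_nil a b s m hm)
    (fl_sg_nodup a b n h.ainj h.binj h.ab m s hs)
    (by
      intro q hq
      simp [sg] at hq
      obtain ⟨i, hi, rfl⟩ := hq
      exact h.hm i (by omega))
    (sg_chain _ a b m s (by
      intro p _ hp
      exact ⟨h.hnM p (by omega), hN.1 (h.hn p (by omega))⟩))
    s(b 0, a (0+1)) (h.hnM 0 (by have := h.two_le; omega))

end CRep

/-- The canonical decomposition of the symmetric difference in alternating cycles. -/
theorem exists_decomp [Fintype V] (G : SimpleGraph V) (M N : Finset (Sym2 V)) (hM : IsPM G M)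
    (hN : IsPM G N) : ∃ 𝒞 : Finset (Finset (Sym2 V)), IsAltCycleSet G M 𝒞 ∧
      𝒞.biUnion id = sd M N ∧ ∀ C ∈ 𝒞, ∃ n a b, CRep G M N C n a b := by
  classical
  obtain ⟨μ, hμ1, hμ2, hμ3, hμ4⟩ := exists_partner hM
  obtain ⟨ν, hν1, hν2, hν3, hν4⟩ := exists_partner hN
  let μe : Equiv.Perm V := ⟨μ, μ, hμ3, hμ3⟩
  let νe : Equiv.Perm V := ⟨ν, ν, hν3, hν3⟩
  let σ : Equiv.Perm V := νe * μe
  have hσ : ∀ v, σ v = ν (μ v) := fun v => rfl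
  have hσi : ∀ v, σ⁻¹ v = μ (ν v) := by
    intro v; rw [Equiv.Perm.inv_eq_iff_eq, hσ, hμ3, hν3]
  -- μ conjugates σ to its inverse
  have hconj : ∀ (z : ℤ) v, μ ((σ ^ z) v) = (σ ^ (-z)) (μ v) := by
    have key : μe * σ * μe⁻¹ = σ⁻¹ := by
      ext v
      rw [hσi]
      change μ (ν (μ (μ v))) = _
      rw [hμ3]
    intro z v
    have h1 : (μe * σ * μe⁻¹) ^ z = μe * σ ^ z * μe⁻¹ := conj_zpow
    rw [key] at h1
    have h2 : (σ⁻¹ ^ z) (μ v) = (μe * σ ^ z * μe⁻¹) (μ v) := by rw [h1]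
    rw [zpow_neg, ← inv_zpow, h2]
    change _ = μ ((σ ^ z) (μ (μ v)))
    rw [hμ3]
  have hne : ∀ (z : ℤ) v, μ v ≠ (σ ^ z) v := by
    intro z v he
    rcases Int.even_or_odd' z with ⟨q, hq | hq⟩
    · have := hconj q v
      rw [he, ← Equiv.Perm.mul_apply, ← zpow_add, hq, show -q + 2 * q = q by ring] at this
      exact hμ2 _ this
    · have := hconj q v
      rw [he, ← Equiv.Perm.mul_apply, ← zpow_add, hq, show -q + (2 * q + 1) = 1 + q by ring,
        zpow_add, Equiv.Perm.mul_apply, zpow_one, hσ] at this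
      exact hν2 _ this.symm
  let rel : V → V → Prop := fun u v => σ.SameCycle u v ∨ σ.SameCycle u (μ v)
  have hsm : ∀ u v, σ.SameCycle u v → σ.SameCycle (μ u) (μ v) := by
    rintro u v ⟨z, rfl⟩
    exact ⟨-z, (hconj z u).symm⟩
  have rel_refl : ∀ u, rel u u := fun u => Or.inl (Equiv.Perm.SameCycle.refl _ _)
  have rel_symm : ∀ u v, rel u v → rel v u := by
    rintro u v (h | h)
    · exact Or.inl h.symm
    · right
      have := (hsm _ _ h).symm
      rwa [hμ3] at this
  have rel_trans : ∀ u v w, rel u v → rel v w → rel u w := by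
    rintro u v w (h | h) (h' | h')
    · exact Or.inl (h.trans h')
    · exact Or.inr (h.trans h')
    · exact Or.inr (h.trans (hsm _ _ h'))
    · left
      have := h.trans (hsm _ _ h')
      rwa [hμ3] at this
  have rel_μ : ∀ v, rel v (μ v) := fun v => Or.inr (by rw [hμ3])
  have rel_σ : ∀ v, rel v (σ v) := fun v => Or.inl ⟨1, by simp⟩
  have rel_ν : ∀ v, rel v (ν v) := by
    intro v
    have h1 := rel_σ (μ v)
    rw [hσ, hμ3] at h1
    exact rel_trans _ _ _ (rel_μ v) h1
  have sdμ : ∀ v, s(v, μ v) ∈ sd M N ↔ μ v ≠ ν v := by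
    intro v
    rw [mem_sd]
    constructor
    · rintro (⟨h, h'⟩ | ⟨h, h'⟩) he
      · exact h' (he ▸ hν1 v)
      · exact h' (hμ1 v)
    · intro h
      exact Or.inl ⟨hμ1 v, fun h' => h (hν4 _ _ h')⟩
  have sdν : ∀ v, s(v, ν v) ∈ sd M N ↔ μ v ≠ ν v := by
    intro v
    rw [mem_sd]
    constructor
    · rintro (⟨h, h'⟩ | ⟨h, h'⟩) he
      · exact h' (hν1 v)
      · exact h' (he ▸ hμ1 v)
    · intro h
      exact Or.inr ⟨hν1 v, fun h' => h (hμ4 _ _ h').symm⟩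
  have sd_form : ∀ e ∈ sd M N, ∀ v ∈ e, (e = s(v, μ v) ∨ e = s(v, ν v)) ∧ μ v ≠ ν v := by
    intro e he v hv
    obtain ⟨u, rfl⟩ := hv
    rcases mem_sd.1 he with h | h
    · have := hμ4 _ _ h.1
      subst this
      exact ⟨Or.inl rfl, (sdμ v).1 he⟩
    · have := hν4 _ _ h.1
      subst this
      exact ⟨Or.inr rfl, (sdν v).1 he⟩
  let Cv : V → Finset (Sym2 V) := fun v => (sd M N).filter fun e => ∃ u ∈ e, rel v u
  have rel_edge : ∀ e ∈ sd M N, ∀ v ∈ e, ∀ u ∈ e, rel v u := by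
    intro e he v hv u hu
    obtain ⟨h, _⟩ := sd_form e he v hv
    rcases h with rfl | rfl
    · rcases Sym2.mem_iff.1 hu with rfl | rfl
      · exact rel_refl _
      · exact rel_μ _
    · rcases Sym2.mem_iff.1 hu with rfl | rfl
      · exact rel_refl _
      · exact rel_ν _
  have repv : ∀ v, μ v ≠ ν v → ∃ n a b, CRep G M N (Cv v) n a b := by
    intro v hv
    have hper : v ∈ Function.periodicPts σ := by
      obtain ⟨k, hk, hk'⟩ := (isOfFinOrder_of_finite σ).exists_pow_eq_one
      refine ⟨k, hk, ?_⟩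
      change σ^[k] v = v
      rw [← Equiv.Perm.coe_pow, hk']; rfl
    let n := Function.minimalPeriod σ v
    have hn0 : 0 < n := Function.minimalPeriod_pos_of_mem_periodicPts hper
    have hnp : (σ ^ n) v = v := by
      rw [Equiv.Perm.coe_pow]; exact Function.isPeriodicPt_minimalPeriod σ v
    have hinj : ∀ i < n, ∀ j < n, (σ ^ i) v = (σ ^ j) v → i = j := by
      intro i hi j hj h
      rw [Equiv.Perm.coe_pow, Equiv.Perm.coe_pow] at h
      exact Function.iterate_injOn_Iio_minimalPeriod hi hj h
    have hrel : ∀ i : ℕ, rel v ((σ ^ i) v) := fun i => Or.inl ⟨i, by simp⟩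
    have hv_all : ∀ u, rel v u → μ u ≠ ν u := by
      rintro u hu he
      have h1 : σ u = u := by rw [hσ, he, hν3]
      have h2 : σ (μ u) = μ u := by rw [hσ, hμ3, ← he]
      rcases hu with h | h
      · have := (h.symm.eq_of_left h1)
        rw [this] at he; exact hv he
      · have := (h.symm.eq_of_left h2)
        rw [← this, hμ3, he, hν3] at hv
        exact hv rfl
    have n2 : 2 ≤ n := by
      by_contra h
      have h1 : n = 1 := by omega
      rw [h1, pow_one, hσ] at hnp
      apply hv
      rw [← hnp, hν3, hnp]
    refine ⟨n, fun i => (σ ^ i) v, fun i => μ ((σ ^ i) v), ⟨n2, ?_, hinj, ?_, ?_, ?_, ?_, ?_, ?_, ?_⟩⟩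
    · simpa using hnp
    · intro i hi j hj h
      apply hinj i hi j hj
      have := congrArg μ h
      rwa [hμ3, hμ3] at this
    · intro i hi j hj h
      have h2 := hne ((i:ℤ) - j) ((σ ^ j) v)
      apply h2
      rw [← h]
      rw [← zpow_natCast, ← zpow_natCast, ← Equiv.Perm.mul_apply, ← zpow_add]
      simp
    · intro i hi; exact hμ1 _
    · intro i hi
      have := hν1 (μ ((σ ^ i) v))
      rw [← hσ] at this
      rw [pow_succ', Equiv.Perm.mul_apply]
      exact this
    · intro i hi h
      exact hv_all _ (hrel i) (hν4 _ _ h)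
    · intro i hi h
      rw [pow_succ', Equiv.Perm.mul_apply, hσ] at h
      have h3 := hμ4 _ _ h
      exact hv_all _ (rel_trans _ _ _ (hrel i) (rel_μ _)) h3.symm
    · intro e
      have cls : ∀ u, rel v u → (∃ i < n, u = (σ ^ i) v) ∨ (∃ i < n, u = μ ((σ ^ i) v)) := by
        have c1 : ∀ u, σ.SameCycle v u → ∃ i < n, u = (σ ^ i) v := by
          intro u h
          obtain ⟨i, _, _, hi⟩ := h.exists_pow_eq''
          refine ⟨i % n, Nat.mod_lt _ hn0, ?_⟩
          rw [← hi, Equiv.Perm.coe_pow, Equiv.Perm.coe_pow]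
          exact (Function.iterate_mod_minimalPeriod_eq).symm
        rintro u (h | h)
        · exact Or.inl (c1 u h)
        · obtain ⟨i, hi, h⟩ := c1 _ h
          exact Or.inr ⟨i, hi, by rw [← h, hμ3]⟩
      constructor
      · intro he
        obtain ⟨he, u, hu, hru⟩ := Finset.mem_filter.1 he
        -- find an endpoint of the form σ^i v
        have : ∃ i < n, (σ ^ i) v ∈ e ∨ μ ((σ ^ i) v) ∈ e := by
          rcases cls u hru with ⟨i, hi, rfl⟩ | ⟨i, hi, rfl⟩
          · exact ⟨i, hi, Or.inl hu⟩
          · exact ⟨i, hi, Or.inr hu⟩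
        obtain ⟨i, hi, h | h⟩ := this
        · rcases (sd_form e he _ h).1 with h' | h'
          · exact Or.inl ⟨i, hi, h'⟩
          · right
            by_cases i0 : i = 0
            · refine ⟨n-1, by omega, ?_⟩
              rw [show n - 1 + 1 = n by omega, hnp, h', i0]
              have : ν v = μ ((σ ^ (n-1)) v) := by
                have : σ ((σ ^ (n-1)) v) = v := by
                  rw [← Equiv.Perm.mul_apply, ← pow_succ', show n - 1 + 1 = n by omega, hnp]
                rw [← hν3 (μ _), ← hσ, this]
              rw [← this, Sym2.eq_swap]; rfl
            · refine ⟨i-1, by omega, ?_⟩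
              rw [show i - 1 + 1 = i by omega, h', Sym2.eq_swap]
              congr 2
              have : σ ((σ ^ (i-1)) v) = (σ ^ i) v := by
                rw [← Equiv.Perm.mul_apply, ← pow_succ', show i - 1 + 1 = i by omega]
              rw [← hν3 (μ _), ← hσ, this]
        · rcases (sd_form e he _ h).1 with h' | h'
          · left
            exact ⟨i, hi, by rw [h', hμ3, Sym2.eq_swap]⟩
          · right
            refine ⟨i, hi, ?_⟩
            rw [h', pow_succ', Equiv.Perm.mul_apply, hσ]
      · rintro (⟨i, hi, rfl⟩ | ⟨i, hi, rfl⟩)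
        · exact Finset.mem_filter.2 ⟨(sdμ _).2 (hv_all _ (hrel i)), _, Sym2.mem_mk_left _ _, hrel i⟩
        · rw [pow_succ', Equiv.Perm.mul_apply, hσ]
          have := rel_trans _ _ _ (hrel i) (rel_μ _)
          exact Finset.mem_filter.2 ⟨(sdν _).2 (hv_all _ this), _, Sym2.mem_mk_left _ _, this⟩
  let 𝒞 := (Finset.univ.filter fun v => μ v ≠ ν v).image Cv
  have hrep : ∀ C ∈ 𝒞, ∃ n a b, CRep G M N C n a b := by
    intro C hC
    obtain ⟨v, hv, rfl⟩ := Finset.mem_image.1 hC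
    exact repv v (Finset.mem_filter.1 hv).2
  refine ⟨𝒞, ⟨?_, ?_⟩, ?_, hrep⟩
  · intro C hC
    obtain ⟨n, a, b, h⟩ := hrep C hC
    exact h.altCycle hM hN
  · intro C hC C' hC' hne'
    obtain ⟨v, hv, rfl⟩ := Finset.mem_image.1 hC
    obtain ⟨v', hv', rfl⟩ := Finset.mem_image.1 hC'
    rw [Set.disjoint_left]
    rintro x ⟨e, he, hx⟩ ⟨f, hf, hx'⟩
    obtain ⟨he, u, hu, hru⟩ := Finset.mem_filter.1 he
    obtain ⟨hf, u', hu', hru'⟩ := Finset.mem_filter.1 hf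
    have h1 := rel_trans _ _ _ hru (rel_edge e he _ hu _ hx)
    have h2 := rel_trans _ _ _ hru' (rel_edge f hf _ hu' _ hx')
    apply hne'
    apply Finset.filter_congr
    intro e _
    have h3 := rel_trans _ _ _ h1 (rel_symm _ _ h2)
    exact ⟨fun ⟨w, hw, h⟩ => ⟨w, hw, rel_trans _ _ _ (rel_symm _ _ h3) h⟩,
      fun ⟨w, hw, h⟩ => ⟨w, hw, rel_trans _ _ _ h3 h⟩⟩
  · ext e
    simp only [Finset.mem_biUnion, id]
    constructor
    · rintro ⟨C, hC, he⟩
      obtain ⟨v, hv, rfl⟩ := Finset.mem_image.1 hC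
      exact (Finset.mem_filter.1 he).1
    · intro he
      obtain ⟨v, hv⟩ : ∃ v, v ∈ e := ⟨_, Sym2.out_fst_mem e⟩
      refine ⟨Cv v, Finset.mem_image.2 ⟨v, ?_, rfl⟩, Finset.mem_filter.2 ⟨he, v, hv, rel_refl v⟩⟩
      exact Finset.mem_filter.2 ⟨Finset.mem_univ _, (sd_form e he v hv).2⟩

end


section
variable {V : Type*} [DecidableEq V]

/-- A skip that is also a balanced move for `N`. -/
def Good {G : SimpleGraph V} {red : Sym2 V → Bool} {M C : Finset (Sym2 V)} (N : Finset (Sym2 V))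
    (S : Skip G red M C) : Prop :=
  IsBal G N (sd C S.C') ∧ wSum red N (sd C S.C') = S.w ∧
  ((sd C S.C') \ sd M N).card < ((sd C S.C') ∩ sd M N).card ∧
  (∀ e ∈ sd C S.C', e ∈ N → e ∈ C ∧ e ∉ S.C')

theorem wt_swap {red : Sym2 V → Bool} {M N : Finset (Sym2 V)} {e : Sym2 V} (h : e ∈ sd M N) :
    wt red N e = - wt red M e := by
  rcases mem_sd.1 h with h | h <;> simp only [wt, h.1, h.2] <;> split_ifs <;> simp_all

theorem wt_same {red : Sym2 V → Bool} {M N : Finset (Sym2 V)} {e : Sym2 V} (h : e ∉ M) (h' : e ∉ N) :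
    wt red N e = wt red M e := by
  simp [wt, h, h']

namespace CRep
variable {G : SimpleGraph V} {M N C : Finset (Sym2 V)} {n : ℕ} {a b : ℕ → V}

theorem altC' (h : CRep G M N C n a b) (hM : IsPM G M) (hN : IsPM G N) (i j l m : ℕ)
    (hij : i < j) (hjl : j ≤ l) (hlm : l < m) (hmn : m < n)
    (h1 : G.Adj (b i) (b l)) (h2 : G.Adj (a j) (a m)) (h1M : s(b i, b l) ∉ M)
    (h2M : s(a j, a m) ∉ M) (D : Finset (Sym2 V))
    (hD : ∀ e, e ∈ D ↔ e = s(b (n-1), a 0) ∨ (e ∈ pe (sg a b 0 (i+1)) ∨ e = s(b i, b l) ∨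
      e ∈ pe (sg a b j (l-j+1))) ∨ e = s(a j, a m) ∨ e ∈ pe (sg a b m (n-m))) : IsAltCycle G M D := by
  have n1 : sg a b 0 (i+1) ≠ [] := sg_ne_nil _ _ _ _ (by omega)
  have n2 : rev (sg a b j (l-j+1)) ≠ [] := by
    have := sg_ne_nil a b j (l-j+1) (by omega)
    simpa [rev] using this
  have n3 : sg a b m (n-m) ≠ [] := sg_ne_nil _ _ _ _ (by omega)
  have g1 : (sg a b 0 (i+1)).getLast n1 = (a i, b i) := by
    rw [sg_getLast _ _ _ _ (by omega)]; simp
  have g2 : (rev (sg a b j (l-j+1))).getLast n2 = (b j, a j) := by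
    have : rev (sg a b j (l-j+1)) = rev (sg a b (j+1) (l-j)) ++ [(b j, a j)] := by
      rw [sg_succ]; simp [rev]
    simp [this]
  have g3 : (sg a b m (n-m)).getLast n3 = (a (n-1), b (n-1)) := by
    rw [sg_getLast _ _ _ _ (by omega)]; rw [show m + (n-m) - 1 = n-1 by omega]
  have k1 : (sg a b 0 (i+1)).head n1 = (a 0, b 0) := by
    rw [sg_head _ _ _ _ (by omega)]
  have k2 : (rev (sg a b j (l-j+1))).head n2 = (b l, a l) := by
    have := sg_getLast a b j (l-j+1) (by omega)
    simp only [rev, List.head_reverse, List.getLast_map, this]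
    rw [show j + (l-j+1) - 1 = l by omega]; rfl
  have k3 : (sg a b m (n-m)).head n3 = (a m, b m) := by
    rw [sg_head _ _ _ _ (by omega)]
  have n12 : sg a b 0 (i+1) ++ rev (sg a b j (l-j+1)) ≠ [] := by simp [n1]
  have nL : (sg a b 0 (i+1) ++ rev (sg a b j (l-j+1))) ++ sg a b m (n-m) ≠ [] := by simp [n1]
  have gl : ((sg a b 0 (i+1) ++ rev (sg a b j (l-j+1))) ++ sg a b m (n-m)).getLast nL
      = (a (n-1), b (n-1)) := by
    rw [List.getLast_append_of_right_ne_nil _ _ n3, g3]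
  have gl12 : (sg a b 0 (i+1) ++ rev (sg a b j (l-j+1))).getLast n12 = (b j, a j) := by
    rw [List.getLast_append_of_right_ne_nil _ _ n2, g2]
  have kl : ((sg a b 0 (i+1) ++ rev (sg a b j (l-j+1))) ++ sg a b m (n-m)).head nL
      = (a 0, b 0) := by
    rw [List.head_append_of_ne_nil n12, List.head_append_of_ne_nil n1, k1]
  have hcl1 : s(b (n-1), a 0) ∉ M := by
    have := h.hnM (n-1) (by omega)
    rwa [show n - 1 + 1 = n by omega, h.per] at this
  have hcl2 : G.Adj (b (n-1)) (a 0) := by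
    have := hN.1 (h.hn (n-1) (by omega))
    rwa [show n - 1 + 1 = n by omega, h.per] at this
  have key := altCycle_of_list G M (fun e he => hM.1 he)
    ((sg a b 0 (i+1) ++ rev (sg a b j (l-j+1))) ++ sg a b m (n-m)) nL
    (by simp [sg, rev]; omega)
    (by
      rw [fl_append, fl_append]
      have p1 := fl_sg_nodup a b n h.ainj h.binj h.ab (i+1) 0 (by omega)
      have p2 := fl_sg_nodup a b n h.ainj h.binj h.ab (l-j+1) j (by omega)
      have p3 := fl_sg_nodup a b n h.ainj h.binj h.ab (n-m) m (by omega)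
      have hq : ∀ p < n, ∀ q < n, ∀ v, (v = a p ∨ v = b p) → (v = a q ∨ v = b q) → p = q := by
        rintro p hp q hq v (rfl | rfl) (h' | h')
        · exact h.ainj _ hp _ hq h'
        · exact absurd h' (h.ab _ hp _ hq)
        · exact absurd h'.symm (h.ab _ hq _ hp)
        · exact h.binj _ hp _ hq h'
      rw [List.nodup_append', List.nodup_append']
      refine ⟨⟨p1, (fl_rev_perm _).nodup_iff.2 p2, ?_⟩, p3, ?_⟩
      · intro v hv hv'
        rw [(fl_rev_perm _).mem_iff, mem_fl_sg] at hv'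
        rw [mem_fl_sg] at hv
        obtain ⟨p, hp1, hp2, hp3⟩ := hv
        obtain ⟨q, hq1, hq2, hq3⟩ := hv'
        have := hq p (by omega) q (by omega) v hp3 hq3
        omega
      · intro v hv hv'
        rw [mem_fl_sg] at hv'
        obtain ⟨q, hq1, hq2, hq3⟩ := hv'
        rw [List.mem_append, (fl_rev_perm _).mem_iff, mem_fl_sg, mem_fl_sg] at hv
        rcases hv with ⟨p, hp1, hp2, hp3⟩ | ⟨p, hp1, hp2, hp3⟩ <;>
        · have := hq p (by omega) q (by omega) v hp3 hq3
          omega)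
    (by
      intro q hq
      simp only [List.mem_append, rev, List.mem_reverse, List.mem_map, sg, List.mem_range'_1] at hq
      rcases hq with (⟨p, hp, rfl⟩ | ⟨_, ⟨p, hp, rfl⟩, rfl⟩) | ⟨p, hp, rfl⟩
      · exact h.hm p (by omega)
      · have := h.hm p (by omega)
        rw [Sym2.eq_swap] at this; exact this
      · exact h.hm p (by omega))
    (by
      rw [List.isChain_append, List.isChain_append]
      refine ⟨⟨sg_chain _ a b _ _ ?_, ?_, ?_⟩, sg_chain _ a b _ _ ?_, ?_⟩
      · intro p _ hp
        exact ⟨h.hnM p (by omega), hN.1 (h.hn p (by omega))⟩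
      · rw [rev, List.isChain_reverse, List.isChain_map]
        refine sg_chain _ a b _ _ ?_
        intro p _ hp
        have e1 := h.hnM p (by omega)
        have e2 := hN.1 (h.hn p (by omega))
        refine ⟨?_, ?_⟩
        · simp only [Prod.swap]; rw [Sym2.eq_swap]; exact e1
        · simp only [Prod.swap]; exact SimpleGraph.Adj.symm e2
      · intro x hx y hy
        rw [List.getLast?_eq_some_getLast n1, g1] at hx
        rw [List.head?_eq_some_head n2, k2] at hy
        simp only [Option.mem_some_iff] at hx hy
        subst hx; subst hy
        exact ⟨h1M, h1⟩
      · intro p _ hp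
        exact ⟨h.hnM p (by omega), hN.1 (h.hn p (by omega))⟩
      · intro x hx y hy
        rw [List.getLast?_eq_some_getLast n12, gl12] at hx
        rw [List.head?_eq_some_head n3, k3] at hy
        simp only [Option.mem_some_iff] at hx hy
        subst hx; subst hy
        exact ⟨h2M, h2⟩)
    (by rw [gl, kl]; exact hcl1) (by rw [gl, kl]; exact hcl2)
  convert key
  ext e
  rw [hD, List.mem_toFinset, List.mem_cons, gl, kl, mem_pe_append _ _ n12 n3, gl12, k3,
    mem_pe_append _ _ n1 n2, g1, k2, mem_pe_rev]

theorem chord_b (h : CRep G M N C n a b) (hM : IsPM G M) (hN : IsPM G N) {i l : ℕ}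
    (hi : i < n) (hl : l < n) : s(b i, b l) ∉ M ∧ s(b i, b l) ∉ N := by
  constructor
  · intro h'
    have := hM.eq h' (h.hm i hi) (v := b i) (by simp) (by simp)
    rw [Sym2.eq_iff] at this
    rcases this with h' | h'
    · exact h.ab i hi i hi h'.1.symm
    · exact h.ab i hi l hl h'.2.symm
  · intro h'
    have := hN.eq h' (h.hn i hi) (v := b i) (by simp) (by simp)
    rw [Sym2.eq_iff] at this
    rcases this with h' | h'
    · exact h.a_succ_ne_b i l hi hl h'.2.symm
    · exact h.a_succ_ne_b i i hi hi h'.1.symm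

theorem chord_a (h : CRep G M N C n a b) (hM : IsPM G M) (hN : IsPM G N) {j m : ℕ}
    (hj0 : 0 < j) (hj : j < n) (hm : m < n) : s(a j, a m) ∉ M ∧ s(a j, a m) ∉ N := by
  constructor
  · intro h'
    have := hM.eq h' (h.hm j hj) (v := a j) (by simp) (by simp)
    rw [Sym2.eq_iff] at this
    rcases this with h' | h'
    · exact h.ab m hm j hj h'.2
    · exact h.ab j hj j hj h'.1
  · intro h'
    have h2 := h.hn (j-1) (by omega)
    rw [show j - 1 + 1 = j by omega] at h2
    have := hN.eq h' h2 (v := a j) (by simp) (by simp)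
    rw [Sym2.eq_iff] at this
    rcases this with h' | h'
    · exact h.ab j hj (j-1) (by omega) h'.1
    · exact h.ab m hm (j-1) (by omega) h'.2

end CRep
end


section
variable {V : Type*} [DecidableEq V]
namespace CRep
variable {G : SimpleGraph V} {M N C : Finset (Sym2 V)} {n : ℕ} {a b : ℕ → V}

set_option maxHeartbeats 1600000 in
theorem exists_skip (h : CRep G M N C n a b) (hM : IsPM G M) (hN : IsPM G N)
    (red : Sym2 V → Bool) (i j l m : ℕ)
    (hij : i < j) (hjl : j ≤ l) (hlm : l < m) (hmn : m < n) (hlen : i + 2 ≤ j ∨ l + 2 ≤ m)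
    (h1 : G.Adj (b i) (b l)) (h2 : G.Adj (a j) (a m)) (W : ℤ)
    (hW : W = wt red M s(b i, b l) + wt red M s(a j, a m)
      - (Ht red M a b j - Ht red M a b i - wt red M s(a i, b i))
      - (Ht red M a b m - Ht red M a b l - wt red M s(a l, b l))) (hW4 : |W| ≤ 4) :
    ∃ S : Skip G red M C, S.w = W ∧ Good N S ∧ S.In (pe (sg a b i (m-i+1))).toFinset := by
  obtain ⟨h1M, h1N⟩ := h.chord_b hM hN (i := i) (l := l) (by omega) (by omega)
  obtain ⟨h2M, h2N⟩ := h.chord_a hM hN (j := j) (m := m) (by omega) (by omega) (by omega)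
  have h1sd : s(b i, b l) ∉ sd M N := by rw [mem_sd]; tauto
  have h2sd : s(a j, a m) ∉ sd M N := by rw [mem_sd]; tauto
  have h1C : s(b i, b l) ∉ C := fun h' => h1sd (h.sub h')
  have h2C : s(a j, a m) ∉ C := fun h' => h2sd (h.sub h')
  have hne : s(b i, b l) ≠ s(a j, a m) := by
    intro he
    rw [Sym2.eq_iff] at he
    rcases he with he | he
    · exact h.ab j (by omega) i (by omega) he.1.symm
    · exact h.ab m (by omega) i (by omega) he.1.symm
  let AM : Finset ℕ := Finset.Ioo i j ∪ Finset.Ioo l m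
  let AN : Finset ℕ := Finset.Ico i j ∪ Finset.Ico l m
  have hAM : ∀ p, p ∈ AM ↔ (i < p ∧ p < j) ∨ (l < p ∧ p < m) := by intro p; simp [AM]
  have hAN : ∀ p, p ∈ AN ↔ (i ≤ p ∧ p < j) ∨ (l ≤ p ∧ p < m) := by intro p; simp [AN]
  have hAMn : ∀ p ∈ AM, p < n := by intro p hp; rw [hAM] at hp; omega
  have hANn : ∀ p ∈ AN, p < n := by intro p hp; rw [hAN] at hp; omega
  have d1 : Disjoint (Finset.Ioo i j) (Finset.Ioo l m) := by
    rw [Finset.disjoint_left]; intro p; simp; omega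
  have d2 : Disjoint (Finset.Ico i j) (Finset.Ico l m) := by
    rw [Finset.disjoint_left]; intro p; simp; omega
  let Rm : Finset (Sym2 V) := AM.image (fun i => s(a i, b i)) ∪ AN.image (fun i => s(b i, a (i+1)))
  have hRm : ∀ e, e ∈ Rm ↔ (∃ p ∈ AM, e = s(a p, b p)) ∨ (∃ p ∈ AN, e = s(b p, a (p+1))) := by
    intro e; simp only [Rm, Finset.mem_union, Finset.mem_image, eq_comm]
  have hRmC : Rm ⊆ C := by
    intro e he
    rw [hRm] at he
    rw [h.hC]
    rcases he with ⟨p, hp, rfl⟩ | ⟨p, hp, rfl⟩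
    · exact Or.inl ⟨p, hAMn p hp, rfl⟩
    · exact Or.inr ⟨p, hANn p hp, rfl⟩
  have hmRm : ∀ p < n, (s(a p, b p) ∈ Rm ↔ p ∈ AM) := by
    intro p hp
    rw [hRm]
    constructor
    · rintro (⟨q, hq, he⟩ | ⟨q, hq, he⟩)
      · rwa [h.m_inj p q hp (hAMn q hq) he]
      · exact absurd he (h.m_ne_n p q hp (hANn q hq))
    · intro hp'; exact Or.inl ⟨p, hp', rfl⟩
  have hnRm : ∀ p < n, (s(b p, a (p+1)) ∈ Rm ↔ p ∈ AN) := by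
    intro p hp
    rw [hRm]
    constructor
    · rintro (⟨q, hq, he⟩ | ⟨q, hq, he⟩)
      · exact absurd he.symm (h.m_ne_n q p (hAMn q hq) hp)
      · rwa [h.n_inj p q hp (hANn q hq) he]
    · intro hp'; exact Or.inr ⟨p, hp', rfl⟩
  have cRm : Rm.card + 2 = 2 * (j - i) + 2 * (m - l) := by
    have := h.sum_mn AM AN hAMn hANn (fun _ => (1:ℕ))
    simp only [Finset.sum_const, smul_eq_mul, mul_one] at this
    rw [show Rm.card = _ from this, Finset.card_union_of_disjoint d1, Finset.card_union_of_disjoint d2]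
    simp only [Nat.card_Ioo, Nat.card_Ico]
    omega
  have sRm : wSum red M Rm = (Ht red M a b j - Ht red M a b i - wt red M s(a i, b i))
      + (Ht red M a b m - Ht red M a b l - wt red M s(a l, b l)) := by
    have hs := h.sum_mn AM AN hAMn hANn (fun e => wt red M e)
    have aux : ∀ p q, p < q → ∑ x ∈ Finset.Ioo p q, wt red M s(a x, b x) +
        ∑ x ∈ Finset.Ico p q, wt red M s(b x, a (x+1)) =
        Ht red M a b q - Ht red M a b p - wt red M s(a p, b p) := by
      intro p q hpq
      have e1 : Ht red M a b q - Ht red M a b p = ∑ x ∈ Finset.Ico p q,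
          (wt red M s(a x, b x) + wt red M s(b x, a (x+1))) := by
        rw [Ht, Ht, Finset.sum_Ico_eq_sub _ hpq.le]
      rw [e1, Finset.sum_add_distrib, ← Finset.Ioo_insert_left hpq,
        Finset.sum_insert (by simp) (f := fun x => wt red M s(a x, b x))]
      ring
    have a1 := aux i j hij
    have a2 := aux l m hlm
    rw [Finset.sum_union d1, Finset.sum_union d2] at hs
    rw [wSum, hs]
    linarith
  let C' : Finset (Sym2 V) := (C \ Rm) ∪ {s(b i, b l), s(a j, a m)}
  have hC' : ∀ e, e ∈ C' ↔ (e ∈ C ∧ e ∉ Rm) ∨ e = s(b i, b l) ∨ e = s(a j, a m) := by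
    intro e; simp only [C', Finset.mem_union, Finset.mem_sdiff, Finset.mem_insert, Finset.mem_singleton]
  have dC' : Disjoint (C \ Rm) {s(b i, b l), s(a j, a m)} := by
    rw [Finset.disjoint_left]
    intro e he he'
    simp only [Finset.mem_insert, Finset.mem_singleton] at he'
    have := (Finset.mem_sdiff.1 he).1
    rcases he' with rfl | rfl
    · exact h1C this
    · exact h2C this
  have dZ : Disjoint Rm {s(b i, b l), s(a j, a m)} := by
    rw [Finset.disjoint_left]
    intro e he he'
    simp only [Finset.mem_insert, Finset.mem_singleton] at he'
    have := hRmC he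
    rcases he' with rfl | rfl
    · exact h1C this
    · exact h2C this
  have wC' : wSum red M C' - wSum red M C = W := by
    have e1 : wSum red M C' = ∑ e ∈ C \ Rm, wt red M e + (wt red M s(b i, b l) + wt red M s(a j, a m)) := by
      rw [wSum, Finset.sum_union dC', Finset.sum_pair hne]
    have e2 := Finset.sum_sdiff (f := wt red M) hRmC
    have e3 : wSum red M C = ∑ e ∈ C, wt red M e := rfl
    have e4 : wSum red M Rm = ∑ e ∈ Rm, wt red M e := rfl
    linarith
  have cC' : C'.card < C.card := by
    rw [Finset.card_union_of_disjoint dC', Finset.card_sdiff_of_subset hRmC, Finset.card_pair hne]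
    have := Finset.card_le_card hRmC
    omega
  have hZ : sd C C' = Rm ∪ {s(b i, b l), s(a j, a m)} := by
    ext e
    rw [mem_sd, hC']
    simp only [Finset.mem_union, Finset.mem_insert, Finset.mem_singleton]
    constructor
    · rintro (⟨h1', h2'⟩ | ⟨h1', h2'⟩)
      · left
        by_contra h'
        exact h2' (Or.inl ⟨h1', h'⟩)
      · rcases h1' with h' | h'
        · exact absurd h'.1 h2'
        · exact Or.inr h'
    · rintro (he | rfl | rfl)
      · left
        refine ⟨hRmC he, ?_⟩
        rintro (h' | h' | h')
        · exact h'.2 he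
        · exact h1C (h' ▸ hRmC he)
        · exact h2C (h' ▸ hRmC he)
      · exact Or.inr ⟨Or.inr (Or.inl rfl), h1C⟩
      · exact Or.inr ⟨Or.inr (Or.inr rfl), h2C⟩
  have halt : IsAltCycle G M C' := by
    refine h.altC' hM hN i j l m hij hjl hlm hmn h1 h2 h1M h2M C' ?_
    intro e
    rw [hC', mem_pe_sg, mem_pe_sg, mem_pe_sg]
    constructor
    · rintro (⟨he, he'⟩ | h' | h')
      · rcases (h.hC e).1 he with ⟨p, hp, rfl⟩ | ⟨p, hp, rfl⟩
        · rw [hmRm p hp, hAM] at he'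
          by_cases c1 : p ≤ i
          · exact Or.inr (Or.inl (Or.inl (Or.inl ⟨p, by omega, by omega, rfl⟩)))
          by_cases c2 : p ≤ l
          · exact Or.inr (Or.inl (Or.inr (Or.inr (Or.inl ⟨p, by omega, by omega, rfl⟩))))
          · exact Or.inr (Or.inr (Or.inr (Or.inl ⟨p, by omega, by omega, rfl⟩)))
        · rw [hnRm p hp, hAN] at he'
          by_cases c1 : p < i
          · exact Or.inr (Or.inl (Or.inl (Or.inr ⟨p, by omega, by omega, rfl⟩)))
          by_cases c2 : p ≤ l
          · exact Or.inr (Or.inl (Or.inr (Or.inr (Or.inr ⟨p, by omega, by omega, rfl⟩))))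
          by_cases c3 : p + 1 < n
          · exact Or.inr (Or.inr (Or.inr (Or.inr ⟨p, by omega, by omega, rfl⟩)))
          · left
            rw [show p + 1 = n by omega, h.per, show n - 1 = p by omega]
      · exact Or.inr (Or.inl (Or.inr (Or.inl h')))
      · exact Or.inr (Or.inr (Or.inl h'))
    · have fm : ∀ p < n, p ∉ AM → s(a p, b p) ∈ C ∧ s(a p, b p) ∉ Rm := by
        intro p hp hq
        rw [hmRm p hp]
        exact ⟨(h.hC _).2 (Or.inl ⟨p, hp, rfl⟩), hq⟩
      have fn : ∀ p < n, p ∉ AN → s(b p, a (p+1)) ∈ C ∧ s(b p, a (p+1)) ∉ Rm := by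
        intro p hp hq
        rw [hnRm p hp]
        exact ⟨(h.hC _).2 (Or.inr ⟨p, hp, rfl⟩), hq⟩
      rintro (rfl | ((⟨p, _, _, rfl⟩ | ⟨p, _, _, rfl⟩) | h' | (⟨p, _, _, rfl⟩ | ⟨p, _, _, rfl⟩)) | h' |
        (⟨p, _, _, rfl⟩ | ⟨p, _, _, rfl⟩))
      · left
        have := fn (n-1) (by omega) (by rw [hAN]; omega)
        rwa [show n - 1 + 1 = n by omega, h.per] at this
      · exact Or.inl (fm p (by omega) (by rw [hAM]; omega))
      · exact Or.inl (fn p (by omega) (by rw [hAN]; omega))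
      · exact Or.inr (Or.inl h')
      · exact Or.inl (fm p (by omega) (by rw [hAM]; omega))
      · exact Or.inl (fn p (by omega) (by rw [hAN]; omega))
      · exact Or.inr (Or.inr h')
      · exact Or.inl (fm p (by omega) (by rw [hAM]; omega))
      · exact Or.inl (fn p (by omega) (by rw [hAN]; omega))
  let S : Skip G red M C :=
    { e1 := s(b i, b l), e2 := s(a j, a m), C' := C', hne := hne, he1G := h1, he2G := h2,
      he1M := h1M, he2M := h2M, he1C := h1C, he2C := h2C, halt := halt,
      hmem1 := (hC' _).2 (Or.inr (Or.inl rfl)), hmem2 := (hC' _).2 (Or.inr (Or.inr rfl)),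
      hsub := by
        intro e he
        simp only [Finset.mem_sdiff, hC', Finset.mem_insert, Finset.mem_singleton] at he
        rcases he.1 with h' | h'
        · exact h'.1
        · exact absurd h' he.2
      hsmall := cC', hwbound := by rw [wC']; exact hW4 }
  have hSC' : S.C' = C' := rfl
  have hZm : ∀ e, e ∈ sd C C' ↔ (∃ p ∈ AM, e = s(a p, b p)) ∨ (∃ p ∈ AN, e = s(b p, a (p+1))) ∨
      e = s(b i, b l) ∨ e = s(a j, a m) := by
    intro e
    rw [hZ, Finset.mem_union, hRm]
    simp only [Finset.mem_insert, Finset.mem_singleton]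
    exact or_assoc
  refine ⟨S, wC', ⟨?_, ?_, ?_, ?_⟩, ?_⟩
  · rw [hSC']
    have zn : ∀ p ∈ AN, s(b p, a (p+1)) ∈ sd C C' ∧ s(b p, a (p+1)) ∈ N := fun p hp =>
      ⟨(hZm _).2 (Or.inr (Or.inl ⟨p, hp, rfl⟩)), h.hn p (hANn p hp)⟩
    have zm : ∀ p ∈ AM, s(a p, b p) ∈ sd C C' ∧ s(a p, b p) ∉ N := fun p hp =>
      ⟨(hZm _).2 (Or.inl ⟨p, hp, rfl⟩), h.hmN p (hAMn p hp)⟩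
    have z1 : s(b i, b l) ∈ sd C C' := (hZm _).2 (Or.inr (Or.inr (Or.inl rfl)))
    have z2 : s(a j, a m) ∈ sd C C' := (hZm _).2 (Or.inr (Or.inr (Or.inr rfl)))
    have fb : ∀ p ∈ AN, ∃ f ∈ sd C C', f ∈ N ∧ b p ∈ f := fun p hp =>
      ⟨_, (zn p hp).1, (zn p hp).2, by simp⟩
    have fa : ∀ p, 0 < p → p - 1 ∈ AN → ∃ f ∈ sd C C', f ∈ N ∧ a p ∈ f := by
      intro p hp0 hp
      refine ⟨_, (zn (p-1) hp).1, (zn (p-1) hp).2, ?_⟩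
      rw [show p - 1 + 1 = p by omega]; simp
    refine ⟨?_, ?_, ?_, ?_⟩
    · intro e he
      rw [hZm] at he
      rcases he with ⟨p, hp, rfl⟩ | ⟨p, hp, rfl⟩ | rfl | rfl
      · exact hM.1 (h.hm p (hAMn p hp))
      · exact hN.1 (h.hn p (hANn p hp))
      · exact h1
      · exact h2
    · intro v e he hv
      rw [hZm] at he
      rcases he with ⟨p, hp, rfl⟩ | ⟨p, hp, rfl⟩ | rfl | rfl
      · rw [hAM] at hp
        rcases Sym2.mem_iff.1 hv with rfl | rfl
        · exact fa p (by omega) (by rw [hAN]; omega)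
        · exact fb p (by rw [hAN]; omega)
      · exact ⟨_, (zn p hp).1, (zn p hp).2, hv⟩
      · rcases Sym2.mem_iff.1 hv with rfl | rfl
        · exact fb i (by rw [hAN]; omega)
        · exact fb l (by rw [hAN]; omega)
      · rcases Sym2.mem_iff.1 hv with rfl | rfl
        · exact fa j (by omega) (by rw [hAN]; omega)
        · exact fa m (by omega) (by rw [hAN]; omega)
    · intro v e he hv
      rw [hZm] at he
      rcases he with ⟨p, hp, rfl⟩ | ⟨p, hp, rfl⟩ | rfl | rfl
      · exact ⟨_, (zm p hp).1, (zm p hp).2, hv⟩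
      · rw [hAN] at hp
        rcases Sym2.mem_iff.1 hv with rfl | rfl
        · by_cases c1 : p = i
          · exact ⟨_, z1, h1N, by simp [c1]⟩
          by_cases c2 : p = l
          · exact ⟨_, z1, h1N, by simp [c2]⟩
          have := zm p (by rw [hAM]; omega)
          exact ⟨_, this.1, this.2, by simp⟩
        · by_cases c1 : p + 1 = j
          · exact ⟨_, z2, h2N, by simp [c1]⟩
          by_cases c2 : p + 1 = m
          · exact ⟨_, z2, h2N, by simp [c2]⟩
          have := zm (p+1) (by rw [hAM]; omega)
          exact ⟨_, this.1, this.2, by simp⟩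
      · exact ⟨_, z1, h1N, hv⟩
      · exact ⟨_, z2, h2N, hv⟩
    · have x1 : ∀ p ∈ AM, ∀ v, v ∈ s(a p, b p) → v ∈ s(b i, b l) → False := by
        intro p hp v hv hv'
        have hpn := hAMn p hp
        rw [hAM] at hp
        rcases Sym2.mem_iff.1 hv with rfl | rfl <;> rcases Sym2.mem_iff.1 hv' with h' | h'
        · exact h.ab _ hpn _ (by omega) h'
        · exact h.ab _ hpn _ (by omega) h'
        · have := h.binj _ hpn _ (by omega) h'; omega
        · have := h.binj _ hpn _ (by omega) h'; omega
      have x2 : ∀ p ∈ AM, ∀ v, v ∈ s(a p, b p) → v ∈ s(a j, a m) → False := by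
        intro p hp v hv hv'
        have hpn := hAMn p hp
        rw [hAM] at hp
        rcases Sym2.mem_iff.1 hv with rfl | rfl <;> rcases Sym2.mem_iff.1 hv' with h' | h'
        · have := h.ainj _ hpn _ (by omega) h'; omega
        · have := h.ainj _ hpn _ (by omega) h'; omega
        · exact h.ab _ (by omega) _ hpn h'.symm
        · exact h.ab _ (by omega) _ hpn h'.symm
      have x3 : ∀ v, v ∈ s(b i, b l) → v ∈ s(a j, a m) → False := by
        intro v hv hv'
        rcases Sym2.mem_iff.1 hv with rfl | rfl <;> rcases Sym2.mem_iff.1 hv' with h' | h' <;>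
        exact h.ab _ (by omega) _ (by omega) h'.symm
      have cl : ∀ e ∈ sd C C', e ∉ N → (∃ p ∈ AM, e = s(a p, b p)) ∨ e = s(b i, b l) ∨ e = s(a j, a m) := by
        intro e he heN
        rw [hZm] at he
        rcases he with h' | ⟨p, hp, rfl⟩ | h' | h'
        · exact Or.inl h'
        · exact absurd (h.hn p (hANn p hp)) heN
        · exact Or.inr (Or.inl h')
        · exact Or.inr (Or.inr h')
      intro v e he f hf heN hfN hve hvf
      rcases cl e he heN with ⟨p, hp, rfl⟩ | rfl | rfl <;> rcases cl f hf hfN with ⟨q, hq, rfl⟩ | rfl | rfl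
      · exact hM.eq (h.hm p (hAMn p hp)) (h.hm q (hAMn q hq)) hve hvf
      · exact (x1 p hp v hve hvf).elim
      · exact (x2 p hp v hve hvf).elim
      · exact (x1 q hq v hvf hve).elim
      · rfl
      · exact (x3 v hve hvf).elim
      · exact (x2 q hq v hvf hve).elim
      · exact (x3 v hvf hve).elim
      · rfl
  · rw [hSC', hZ, wSum, Finset.sum_union dZ, Finset.sum_pair hne, wt_same h1M h1N, wt_same h2M h2N]
    have : ∑ e ∈ Rm, wt red N e = - wSum red M Rm := by
      rw [wSum, ← Finset.sum_neg_distrib]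
      exact Finset.sum_congr rfl fun e he => wt_swap (h.sub (hRmC he))
    have e : S.w = W := wC'
    rw [this, e, sRm, hW]
    ring
  · rw [hSC', hZ]
    have e1 : (Rm ∪ {s(b i, b l), s(a j, a m)}) \ sd M N ⊆ {s(b i, b l), s(a j, a m)} := by
      intro e he
      rw [Finset.mem_sdiff, Finset.mem_union] at he
      rcases he.1 with h' | h'
      · exact absurd (h.sub (hRmC h')) he.2
      · exact h'
    have e2 : Rm ⊆ (Rm ∪ {s(b i, b l), s(a j, a m)}) ∩ sd M N := by
      intro e he
      exact Finset.mem_inter.2 ⟨Finset.mem_union_left _ he, h.sub (hRmC he)⟩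
    have := Finset.card_le_card e1
    rw [Finset.card_pair hne] at this
    have := Finset.card_le_card e2
    omega
  · rw [hSC']
    intro e he heN
    rcases mem_sd.1 he with h' | h'
    · exact h'
    · rw [hC'] at h'
      rcases h'.1 with h'' | rfl | rfl
      · exact absurd h''.1 h'.2
      · exact absurd heN h1N
      · exact absurd heN h2N
  · intro e he
    rw [Finset.mem_sdiff, hSC', hC'] at he
    have : e ∈ Rm := by
      by_contra h'; exact he.2 (Or.inl ⟨he.1, h'⟩)
    rw [hRm] at this
    rw [List.mem_toFinset, mem_pe_sg]
    rcases this with ⟨p, hp, rfl⟩ | ⟨p, hp, rfl⟩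
    · rw [hAM] at hp
      exact Or.inl ⟨p, by omega, by omega, rfl⟩
    · rw [hAN] at hp
      exact Or.inr ⟨p, by omega, by omega, rfl⟩

end CRep
end


section
variable {V : Type*} [DecidableEq V]

/-- Existence of a zero skip-cycle set using good skips only. -/
def HasZ (G : SimpleGraph V) (red : Sym2 V → Bool) (M N : Finset (Sym2 V))
    (𝒞 : Finset (Finset (Sym2 V))) : Prop :=
  ∃ (L : List (SkipOn G red M 𝒞)) (D : Finset (Finset (Sym2 V))),
    D ⊆ 𝒞 ∧ (L ≠ [] ∨ D.Nonempty) ∧ L.Pairwise SkipOn.Disj ∧ (∀ T ∈ L, T.C ∉ D) ∧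
      (L.map fun T => T.S.w).sum - (∑ C ∈ D, wSum red M C) = 0 ∧ ∀ T ∈ L, Good N T.S

theorem HasZ.to {G : SimpleGraph V} {red : Sym2 V → Bool} {M N : Finset (Sym2 V)}
    {𝒞 : Finset (Finset (Sym2 V))} (h : HasZ G red M N 𝒞) : HasZeroSkipCycleSet G red M 𝒞 := by
  obtain ⟨L, D, h1, h2, h3, h4, h5, _⟩ := h
  exact ⟨L, D, h1, h2, h3, h4, h5⟩

theorem CRep.isBal {G : SimpleGraph V} {M N C : Finset (Sym2 V)} {n : ℕ} {a b : ℕ → V}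
    (h : CRep G M N C n a b) (hM : IsPM G M) (hN : IsPM G N) : IsBal G N C := by
  have h2 := h.two_le
  have fm : ∀ p < n, s(a p, b p) ∈ C := fun p hp => (h.hC _).2 (Or.inl ⟨p, hp, rfl⟩)
  have fn : ∀ p < n, s(b p, a (p+1)) ∈ C := fun p hp => (h.hC _).2 (Or.inr ⟨p, hp, rfl⟩)
  have vx : ∀ v, ∀ e ∈ C, v ∈ e → ∃ p < n, v = a p ∨ v = b p := by
    intro v e he hv
    rcases (h.hC e).1 he with ⟨p, hp, rfl⟩ | ⟨p, hp, rfl⟩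
    · exact ⟨p, hp, Sym2.mem_iff.1 hv⟩
    · rcases Sym2.mem_iff.1 hv with rfl | rfl
      · exact ⟨p, hp, Or.inr rfl⟩
      · obtain ⟨q, hq, e, _⟩ := h.a_succ_mod p hp
        exact ⟨q, hq, Or.inl e⟩
  refine ⟨?_, ?_, ?_, ?_⟩
  · intro e he
    rcases (h.hC e).1 he with ⟨p, hp, rfl⟩ | ⟨p, hp, rfl⟩
    · exact hM.1 (h.hm p hp)
    · exact hN.1 (h.hn p hp)
  · intro v e he hv
    obtain ⟨p, hp, rfl | rfl⟩ := vx v e he hv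
    · by_cases p0 : p = 0
      · refine ⟨_, fn (n-1) (by omega), h.hn _ (by omega), ?_⟩
        rw [show n - 1 + 1 = n by omega, h.per, p0]; simp
      · refine ⟨_, fn (p-1) (by omega), h.hn _ (by omega), ?_⟩
        rw [show p - 1 + 1 = p by omega]; simp
    · exact ⟨_, fn p hp, h.hn p hp, by simp⟩
  · intro v e he hv
    obtain ⟨p, hp, rfl | rfl⟩ := vx v e he hv
    · exact ⟨_, fm p hp, h.hmN p hp, by simp⟩
    · exact ⟨_, fm p hp, h.hmN p hp, by simp⟩
  · intro v e he f hf heN hfN hve hvf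
    have cl : ∀ e ∈ C, e ∉ N → e ∈ M := by
      intro e he heN
      have := mem_sd.1 (h.sub he)
      tauto
    exact hM.eq (cl e he heN) (cl f hf hfN) hve hvf

theorem wSum_neg {G : SimpleGraph V} {M N C : Finset (Sym2 V)} {n : ℕ} {a b : ℕ → V}
    (h : CRep G M N C n a b) (red : Sym2 V → Bool) : wSum red N C = - wSum red M C := by
  rw [wSum, wSum, ← Finset.sum_neg_distrib]
  exact Finset.sum_congr rfl fun e he => wt_swap (h.sub he)

theorem Good.sub {G : SimpleGraph V} {red : Sym2 V → Bool} {M N C : Finset (Sym2 V)}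
    {S : Skip G red M C} (h : Good N S) {v : V} {e : Sym2 V} (he : e ∈ sd C S.C') (hv : v ∈ e) :
    ∃ f ∈ N, f ∈ C ∧ f ∉ S.C' ∧ v ∈ f := by
  obtain ⟨f, hf, hfN, hvf⟩ := h.1.2.1 v e he hv
  have := h.2.2.2 f hf hfN
  exact ⟨f, hfN, this.1, this.2, hvf⟩

theorem disj_aux {G : SimpleGraph V} {red : Sym2 V → Bool} {M N C : Finset (Sym2 V)}
    (hN : IsPM G N) (S1 S2 : Skip G red M C) (h1 : Good N S1) (h2 : Good N S2) (hd : Skip.Disj S1 S2) :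
    ∀ v, ∀ e ∈ sd C S1.C', ∀ f ∈ sd C S2.C', v ∈ e → v ∈ f → False := by
  intro v e he f hf hve hvf
  obtain ⟨P1, P2, _, _, hdd, _, _, i1, i2⟩ := hd
  obtain ⟨g, hgN, hg1, hg2, hvg⟩ := h1.sub he hve
  obtain ⟨g', hgN', hg1', hg2', hvg'⟩ := h2.sub hf hvf
  have := hN.eq hgN hgN' hvg hvg'
  subst this
  exact Finset.disjoint_left.1 hdd (i1 (Finset.mem_sdiff.2 ⟨hg1, hg2⟩))
    (i2 (Finset.mem_sdiff.2 ⟨hg1', hg2'⟩))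

theorem disj_aux2 {G : SimpleGraph V} {red : Sym2 V → Bool} {M N : Finset (Sym2 V)}
    {𝒞 : Finset (Finset (Sym2 V))} (hA : IsAltCycleSet G M 𝒞)
    (hN : IsPM G N) (T1 T2 : SkipOn G red M 𝒞) (h1 : Good N T1.S) (h2 : Good N T2.S)
    (hd : SkipOn.Disj T1 T2) :
    ∀ v, ∀ e ∈ sd T1.C T1.S.C', ∀ f ∈ sd T2.C T2.S.C', v ∈ e → v ∈ f → False := by
  obtain ⟨C1, hC1, S1⟩ := T1
  obtain ⟨C2, hC2, S2⟩ := T2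
  rcases hd with hd | ⟨heq, hd⟩
  · intro v e he f hf hve hvf
    have := hA.2 hC1 hC2 hd
    obtain ⟨g, hgN, hg1, hg2, hvg⟩ := h1.sub he hve
    obtain ⟨g', hgN', hg1', hg2', hvg'⟩ := h2.sub hf hvf
    exact Set.disjoint_left.1 this ⟨g, hg1, hvg⟩ ⟨g', hg1', hvg'⟩
  · simp only at heq
    subst heq
    exact disj_aux hN S1 S2 h1 h2 hd

theorem hasZ_contra (G : SimpleGraph V) (red : Sym2 V → Bool) (M N : Finset (Sym2 V))
    (hM : IsPM G M) (hN : IsPM G N)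
    (𝒞 : Finset (Finset (Sym2 V))) (hA : IsAltCycleSet G M 𝒞)
    (hR : ∀ C ∈ 𝒞, ∃ n a b, CRep G M N C n a b) (h : HasZ G red M N 𝒞) :
    ∃ N', IsPM G N' ∧ redCount red N' = redCount red N ∧ (sd M N').card < (sd M N).card := by
  obtain ⟨L, D, h1, h2, h3, h4, h5, h6⟩ := h
  obtain ⟨N', hN', hr, hc⟩ := apply_moves G red M
    (L.map (fun T => sd T.C T.S.C') ++ D.toList) N hN
    (by
      intro Z hZ
      rw [List.mem_append] at hZ
      rcases hZ with hZ | hZ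
      · obtain ⟨T, hT, rfl⟩ := List.mem_map.1 hZ
        have := h6 T hT
        exact ⟨this.1, this.2.2.1⟩
      · rw [Finset.mem_toList] at hZ
        obtain ⟨n, a, b, hr⟩ := hR Z (h1 hZ)
        refine ⟨hr.isBal hM hN, ?_⟩
        rw [Finset.sdiff_eq_empty_iff_subset.2 hr.sub, Finset.inter_eq_left.2 hr.sub, hr.card_C]
        have := hr.two_le
        simp; omega)
    (by
      rw [List.pairwise_append]
      refine ⟨?_, ?_, ?_⟩
      · rw [List.pairwise_map]
        refine List.Pairwise.imp_of_mem ?_ h3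
        intro T1 T2 hT1 hT2 hd
        exact disj_aux2 hA hN T1 T2 (h6 _ hT1) (h6 _ hT2) hd
      · refine List.Pairwise.imp_of_mem ?_ D.nodup_toList
        intro C C' hC hC' hne v e he f hf hve hvf
        rw [Finset.mem_toList] at hC hC'
        exact Set.disjoint_left.1 (hA.2 (h1 hC) (h1 hC') hne) ⟨e, he, hve⟩ ⟨f, hf, hvf⟩
      · intro Z hZ C hC v e he f hf hve hvf
        obtain ⟨T, hT, rfl⟩ := List.mem_map.1 hZ
        rw [Finset.mem_toList] at hC
        obtain ⟨g, hgN, hg1, hg2, hvg⟩ := (h6 _ hT).sub he hve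
        have hne : T.C ≠ C := fun h => h4 T hT (h ▸ hC)
        exact Set.disjoint_left.1 (hA.2 T.hC (h1 hC) hne) ⟨g, hg1, hvg⟩ ⟨f, hf, hvf⟩)
  refine ⟨N', hN', ?_, ?_⟩
  · have e1 : (L.map (fun T => sd T.C T.S.C')).map (wSum red N) = L.map (fun T => T.S.w) := by
      rw [List.map_map]
      apply List.map_congr_left
      intro T hT
      exact (h6 T hT).2.1
    have e2 : (D.toList.map (wSum red N)).sum = - ∑ C ∈ D, wSum red M C := by
      rw [Finset.sum_map_toList, ← Finset.sum_neg_distrib]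
      refine Finset.sum_congr rfl fun C hC => ?_
      obtain ⟨n, a, b, hr⟩ := hR C (h1 hC)
      exact wSum_neg hr red
    rw [List.map_append, List.sum_append, e1, e2] at hr
    have : (redCount red N' : ℤ) = redCount red N := by linarith
    exact_mod_cast this
  · have : 0 < (L.map (fun T => sd T.C T.S.C') ++ D.toList).length := by
      simp only [List.length_append, List.length_map, Finset.length_toList]
      rcases h2 with h | h
      · have := List.length_pos_iff.2 h; omega
      · have := Finset.card_pos.2 h; omega
    omega
end


section
variable {V : Type*} [DecidableEq V]

theorem wt_mem {red : Sym2 V → Bool} {M : Finset (Sym2 V)} {e : Sym2 V} (h : e ∈ M) :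
    wt red M e = 0 ∨ wt red M e = -1 := by
  simp only [wt, h]; split_ifs <;> simp_all

theorem wt_not_mem {red : Sym2 V → Bool} {M : Finset (Sym2 V)} {e : Sym2 V} (h : e ∉ M) :
    wt red M e = 0 ∨ wt red M e = 1 := by
  simp only [wt, h]; split_ifs <;> simp_all

/-- The skip `T` lives on `C` in the segment between `s` and `e`. -/
def InS {G : SimpleGraph V} {red : Sym2 V → Bool} {M : Finset (Sym2 V)}
    {𝒞 : Finset (Finset (Sym2 V))} (T : SkipOn G red M 𝒞) (C : Finset (Sym2 V)) (a b : ℕ → V)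
    (s e : ℕ) : Prop :=
  T.C = C ∧ T.C \ T.S.C' ⊆ (pe (sg a b s (e-s+1))).toFinset

/-- Discrete intermediate value theorem. -/
theorem ivt_down (H : ℕ → ℤ) (hH : ∀ i, H i - 1 ≤ H (i+1)) (s e : ℕ) (hse : s ≤ e) (τ : ℤ)
    (h1 : τ ≤ H s) (h2 : H e ≤ τ) : ∃ j, s ≤ j ∧ j ≤ e ∧ H j = τ := by
  induction e, hse using Nat.le_induction with
  | base => exact ⟨s, le_rfl, le_rfl, by omega⟩
  | succ e hse ih =>
    by_cases h : H e ≤ τ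
    · obtain ⟨j, h1, h2, h3⟩ := ih h
      exact ⟨j, h1, by omega, h3⟩
    · have := hH e
      exact ⟨e+1, by omega, le_rfl, by omega⟩

namespace CRep
variable {G : SimpleGraph V} {M N C : Finset (Sym2 V)} {n : ℕ} {a b : ℕ → V}

theorem inS_disj (h : CRep G M N C n a b) (hM : IsPM G M) (hN : IsPM G N) {red : Sym2 V → Bool}
    {𝒞 : Finset (Finset (Sym2 V))} (T1 T2 : SkipOn G red M 𝒞) (s1 e1 s2 e2 : ℕ)
    (h1 : InS T1 C a b s1 e1) (h2 : InS T2 C a b s2 e2) (hs1 : s1 ≤ e1) (hs2 : s2 ≤ e2)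
    (hn1 : e1 < n) (hn2 : e2 < n) (hd : e1 < s2 ∨ e2 < s1) : SkipOn.Disj T1 T2 := by
  obtain ⟨C1, hC1, S1⟩ := T1
  obtain ⟨C2, hC2, S2⟩ := T2
  obtain ⟨q1, q2⟩ := h1
  obtain ⟨r1, r2⟩ := h2
  simp only at q1 r1
  subst q1
  subst r1
  have sub : ∀ s e, s ≤ e → e < n → (pe (sg a b s (e-s+1))).toFinset ⊆ C2 := by
    intro s e hs he f hf
    rw [List.mem_toFinset, mem_pe_sg] at hf
    rw [h.hC]
    rcases hf with ⟨p, h1, h2, rfl⟩ | ⟨p, h1, h2, rfl⟩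
    · exact Or.inl ⟨p, by omega, rfl⟩
    · exact Or.inr ⟨p, by omega, rfl⟩
  refine Or.inr ⟨rfl, _, _, sub s1 e1 hs1 hn1, sub s2 e2 hs2 hn2, ?_, h.altPath hM hN s1 _ (by omega) (by omega),
    h.altPath hM hN s2 _ (by omega) (by omega), q2, r2⟩
  rw [Finset.disjoint_left]
  intro f hf hf'
  rw [List.mem_toFinset, mem_pe_sg] at hf hf'
  rcases hf with ⟨p, p1, p2, rfl⟩ | ⟨p, p1, p2, rfl⟩ <;> rcases hf' with ⟨q, q1, q2, he⟩ | ⟨q, q1, q2, he⟩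
  · have := h.m_inj p q (by omega) (by omega) he; omega
  · exact h.m_ne_n p q (by omega) (by omega) he
  · exact h.m_ne_n q p (by omega) (by omega) he.symm
  · have := h.n_inj p q (by omega) (by omega) he; omega

theorem inS_mono {red : Sym2 V → Bool}
    {𝒞 : Finset (Finset (Sym2 V))} (T : SkipOn G red M 𝒞) {s e s' e' : ℕ}
    (h1 : InS T C a b s e) (hs : s' ≤ s) (he : e ≤ e') (hse : s ≤ e) : InS T C a b s' e' := by
  refine ⟨h1.1, h1.2.trans ?_⟩
  intro f hf
  rw [List.mem_toFinset, mem_pe_sg] at hf ⊢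
  rcases hf with ⟨p, h1, h2, rfl⟩ | ⟨p, h1, h2, rfl⟩
  · exact Or.inl ⟨p, by omega, by omega, rfl⟩
  · exact Or.inr ⟨p, by omega, by omega, rfl⟩

/-- one greedy arc -/
theorem arc_step (h : CRep G M N C n a b) (red : Sym2 V → Bool) (ε δ : ℤ)
    (hε : (ε = 1 ∧ δ = 2) ∨ (ε = -1 ∧ δ = -1)) (s e : ℕ) (hse : s ≤ e) (he : e < n)
    (hc : 4 ≤ ε * (Ht red M a b e - Ht red M a b s)) :
    ∃ p, s + 2 ≤ p ∧ p ≤ e ∧ Ht red M a b p - Ht red M a b s - wt red M s(a s, b s) = δ ∧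
      ε * (Ht red M a b e - Ht red M a b s) - 2 ≤ ε * (Ht red M a b e - Ht red M a b p) := by
  set H := Ht red M a b with hH
  have st : ∀ i < n, H (i+1) = H i + wt red M s(a i, b i) + wt red M s(b i, a (i+1)) :=
    fun i _ => Ht_succ _ _ _ _ _
  have wm : ∀ i < n, wt red M s(a i, b i) = 0 ∨ wt red M s(a i, b i) = -1 := fun i hi =>
    wt_mem (h.hm i hi)
  have wn : ∀ i < n, wt red M s(b i, a (i+1)) = 0 ∨ wt red M s(b i, a (i+1)) = 1 := fun i hi =>
    wt_not_mem (h.hnM i hi)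
  have step : ∀ i < n, H i - 1 ≤ H (i+1) ∧ H (i+1) ≤ H i + 1 := by
    intro i hi
    have := st i hi; have := wm i hi; have := wn i hi
    omega
  have hs2 : s + 2 ≤ e := by
    by_contra hcon
    have : e = s ∨ e = s + 1 := by omega
    rcases this with rfl | rfl
    · simp at hc
    · have := step s (by omega)
      rcases hε with ⟨rfl, _⟩ | ⟨rfl, _⟩ <;> omega
  have i1 := st s (by omega)
  have i2 := wm s (by omega)
  have i3 := wn s (by omega)
  have i4 := step (s+1) (by omega)
  rcases hε with ⟨rfl, rfl⟩ | ⟨rfl, rfl⟩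
  · obtain ⟨j, j1, j2, j3⟩ := ivt_down (fun i => if i ≤ e then - H i else - H e)
      (by
        intro i
        split_ifs
        · have := step i (by omega); omega
        · have : i = e := by omega
          subst this; omega
        · omega
        · omega) (s+2) e hs2
      (-(H s + wt red M s(a s, b s) + 2)) (by rw [if_pos hs2]; rw [show s + 2 = s + 1 + 1 by ring]; omega)
      (by rw [if_pos le_rfl]; omega)
    rw [if_pos j2] at j3
    exact ⟨j, j1, j2, by omega, by omega⟩
  · obtain ⟨j, j1, j2, j3⟩ := ivt_down (fun i => if i ≤ e then H i else H e)
      (by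
        intro i
        split_ifs
        · have := step i (by omega); omega
        · have : i = e := by omega
          subst this; omega
        · omega
        · omega) (s+2) e hs2
      (H s + wt red M s(a s, b s) - 1) (by rw [if_pos hs2]; rw [show s + 2 = s + 1 + 1 by ring]; omega)
      (by rw [if_pos le_rfl]; omega)
    rw [if_pos j2] at j3
    exact ⟨j, j1, j2, by omega, by omega⟩

theorem arcs (h : CRep G M N C n a b) (red : Sym2 V → Bool) (ε δ : ℤ)
    (hε : (ε = 1 ∧ δ = 2) ∨ (ε = -1 ∧ δ = -1)) (s e : ℕ) (hse : s ≤ e) (he : e < n) (q : ℕ) :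
    2 * (q : ℤ) + 2 ≤ ε * (Ht red M a b e - Ht red M a b s) →
    ∃ p : ℕ → ℕ, p 0 = s ∧ p q ≤ e ∧ (∀ k < q, p k + 2 ≤ p (k+1) ∧
      Ht red M a b (p (k+1)) - Ht red M a b (p k) - wt red M s(a (p k), b (p k)) = δ) ∧
      ε * (Ht red M a b e - Ht red M a b s) - 2 * q ≤ ε * (Ht red M a b e - Ht red M a b (p q)) := by
  induction q with
  | zero => intro _; exact ⟨fun _ => s, rfl, hse, by simp, by simp⟩
  | succ q ih =>
    intro hq
    push_cast at hq
    obtain ⟨p, p0, pe', pa, pH⟩ := ih (by omega)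
    obtain ⟨p', h1, h2, h3, h4⟩ := h.arc_step red ε δ hε (p q) e pe' he (by omega)
    refine ⟨fun k => if k ≤ q then p k else p', by simpa using p0, by simpa using h2, ?_, ?_⟩
    · intro k hk
      beta_reduce
      by_cases c : k < q
      · have := pa k c
        rw [if_pos (by omega), if_pos (by omega)]
        exact this
      · have : k = q := by omega
        subst this
        rw [if_pos le_rfl, if_neg (by omega)]
        exact ⟨h1, h3⟩
    · beta_reduce
      rw [if_neg (by omega)]
      push_cast
      omega

theorem many_skips [Fintype V] (h : CRep G M N C n a b) (hM : IsPM G M) (hN : IsPM G N)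
    (red : Sym2 V → Bool) (R : ℕ) (hR : R = ramsey (ramsey 4 (indepNum G + 1)) (indepNum G + 1))
    (𝒞 : Finset (Finset (Sym2 V))) (hC : C ∈ 𝒞) (ε : ℤ) (hε : ε = 1 ∨ ε = -1)
    (s e : ℕ) (hse : s ≤ e) (he : e < n) (Q : ℕ)
    (hc : 6 * (Q : ℤ) * (R + 1) + 2 ≤ ε * (Ht red M a b e - Ht red M a b s)) :
    ∃ x : ℕ, 2 ≤ x ∧ x ≤ 4 ∧ ∃ T : Fin Q → SkipOn G red M 𝒞, (∀ i j, i < j → SkipOn.Disj (T i) (T j)) ∧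
      (∀ i, Good N (T i).S ∧ InS (T i) C a b s e ∧ (T i).S.w = - ε * x) := by
  obtain ⟨δ, hδ⟩ : ∃ δ : ℤ, (ε = 1 ∧ δ = 2) ∨ (ε = -1 ∧ δ = -1) := by
    rcases hε with h | h
    · exact ⟨2, Or.inl ⟨h, rfl⟩⟩
    · exact ⟨-1, Or.inr ⟨h, rfl⟩⟩
  obtain ⟨p, p0, pq, pa, _⟩ := h.arcs red ε δ hδ s e hse he (3 * Q * (R + 1)) (by push_cast; linarith)
  have mono : ∀ k k', k ≤ k' → k' ≤ 3 * Q * (R+1) → p k ≤ p k' := by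
    intro k k' hkk
    induction k', hkk using Nat.le_induction with
    | base => intro _; exact le_rfl
    | succ k' hkk ih =>
      intro hk
      have := ih (by omega)
      have := (pa k' (by omega)).1
      omega
  have smono : ∀ k k', k < k' → k' ≤ 3 * Q * (R+1) → p k < p k' := by
    intro k k' hkk hk
    have := mono (k+1) k' hkk hk
    have := (pa k (by omega)).1
    omega
  have pinj : ∀ k k', k ≤ 3 * Q * (R+1) → k' ≤ 3 * Q * (R+1) → p k = p k' → k = k' := by
    intro k k' hk hk' hh
    rcases lt_trichotomy k k' with h1 | h1 | h1
    · have := smono k k' h1 hk'; omega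
    · exact h1
    · have := smono k' k h1 hk; omega
  have pn : ∀ k ≤ 3 * Q * (R+1), p k < n := by
    intro k hk
    have := mono k _ hk le_rfl
    omega
  have block : ∀ B : Fin (3 * Q), ∃ T : SkipOn G red M 𝒞, ∃ x : ℕ, (2 ≤ x ∧ x ≤ 4) ∧ Good N T.S ∧
      T.S.w = - ε * x ∧ InS T C a b (p (B * (R+1))) (p (B * (R+1) + R)) := by
    intro B
    have hB : (B:ℕ) * (R+1) + (R + 1) ≤ 3 * Q * (R+1) := by
      have : (B:ℕ) + 1 ≤ 3 * Q := B.2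
      calc (B:ℕ) * (R+1) + (R + 1) = ((B:ℕ) + 1) * (R+1) := by ring
        _ ≤ _ := Nat.mul_le_mul_right _ this
    set c := (B:ℕ) * (R+1) with hcdef
    obtain ⟨f, fm, fR, fadj⟩ := ram2 G R hR (fun k => b (p (c + k))) (fun k => a (p (c + k + 1)))
      (by
        intro i hi j hj hh
        have := h.binj _ (pn _ (by omega)) _ (pn _ (by omega)) hh
        have := pinj _ _ (by omega) (by omega) this
        omega)
      (by
        intro i hi j hj hh
        have := h.ainj _ (pn _ (by omega)) _ (pn _ (by omega)) hh
        have := pinj _ _ (by omega) (by omega) this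
        omega)
    have f01 : f 0 < f 1 := fm (by decide)
    have f1R := fR 1
    obtain ⟨ad1, ad2⟩ := fadj 0 1 (by decide)
    have A0 := pa (c + f 0) (by omega)
    have A1 := pa (c + f 1) (by omega)
    have m1 := mono (c + f 0 + 1) (c + f 1) (by omega) (by omega)
    have m2 := pn (c + f 1 + 1) (by omega)
    have n1 := pn (c + f 0) (by omega)
    have n2 := pn (c + f 1) (by omega)
    obtain ⟨h1M, -⟩ := h.chord_b hM hN (i := p (c + f 0)) (l := p (c + f 1)) n1 n2
    obtain ⟨h2M, -⟩ := h.chord_a hM hN (j := p (c + f 0 + 1)) (m := p (c + f 1 + 1)) (by omega) (by omega) m2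
    have w1 := wt_not_mem (red := red) h1M
    have w2 := wt_not_mem (red := red) h2M
    obtain ⟨S, Sw, Sg, Si⟩ := h.exists_skip hM hN red (p (c + f 0)) (p (c + f 0 + 1)) (p (c + f 1)) (p (c + f 1 + 1))
      (by omega) m1 (by omega) m2 (by omega) ad1 ad2 _ rfl (by
        rw [abs_le]
        rcases hδ with ⟨_, rfl⟩ | ⟨_, rfl⟩ <;> omega)
    have hx : ∃ x : ℕ, (2 ≤ x ∧ x ≤ 4) ∧ S.w = - ε * x := by
      have : (2 ≤ - ε * S.w ∧ - ε * S.w ≤ 4) := by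
        rw [Sw]
        rcases hδ with ⟨rfl, rfl⟩ | ⟨rfl, rfl⟩ <;> omega
      refine ⟨(- ε * S.w).toNat, by omega, ?_⟩
      rw [Int.toNat_of_nonneg (by omega)]
      rcases hε with rfl | rfl <;> ring
    obtain ⟨x, hx, hw⟩ := hx
    refine ⟨⟨C, hC, S⟩, x, hx, Sg, hw, ?_⟩
    refine inS_mono (s := p (c + f 0)) (e := p (c + f 1 + 1)) _ ⟨rfl, Si⟩ (mono _ _ (by omega) (by omega)) (mono _ _ (by omega) (by omega)) (by omega)
  choose T x hx hg hw hi using block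
  obtain ⟨y, hy, hcard⟩ := Finset.exists_le_card_fiber_of_mul_le_card_of_maps_to
    (s := (Finset.univ : Finset (Fin (3*Q)))) (t := ({2,3,4} : Finset ℕ)) (f := x) (n := Q)
    (by
      intro B _
      have := hx B
      simp only [Finset.mem_insert, Finset.mem_singleton]
      omega) (by simp) (by simp)
  obtain ⟨F, hF, hFc⟩ := Finset.exists_subset_card_eq hcard
  simp only [Finset.mem_insert, Finset.mem_singleton] at hy
  have hbm : ∀ B : Fin (3*Q), (B:ℕ) * (R+1) + (R + 1) ≤ 3 * Q * (R+1) := by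
    intro B
    have : (B:ℕ) + 1 ≤ 3 * Q := B.2
    calc (B:ℕ) * (R+1) + (R + 1) = ((B:ℕ) + 1) * (R+1) := by ring
      _ ≤ _ := Nat.mul_le_mul_right _ this
  refine ⟨y, by omega, by omega, fun i => T (F.orderEmbOfFin hFc i), ?_, ?_⟩
  · intro i j hij
    have hlt : F.orderEmbOfFin hFc i < F.orderEmbOfFin hFc j := (F.orderEmbOfFin hFc).strictMono hij
    set B := F.orderEmbOfFin hFc i
    set B' := F.orderEmbOfFin hFc j
    have b1 := hbm B
    have b2 := hbm B'
    have b3 : (B:ℕ) * (R+1) + (R + 1) ≤ (B':ℕ) * (R+1) := by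
      have : (B:ℕ) + 1 ≤ B' := hlt
      calc (B:ℕ) * (R+1) + (R + 1) = ((B:ℕ) + 1) * (R+1) := by ring
        _ ≤ _ := Nat.mul_le_mul_right _ this
    exact h.inS_disj hM hN _ _ _ _ _ _ (hi B) (hi B') (mono _ _ (by omega) (by omega)) (mono _ _ (by omega) (by omega))
      (pn _ (by omega)) (pn _ (by omega)) (Or.inl (smono _ _ (by omega) (by omega)))
  · intro i
    have hm : F.orderEmbOfFin hFc i ∈ F := F.orderEmbOfFin_mem hFc i
    set B := F.orderEmbOfFin hFc i
    have := (Finset.mem_filter.1 (hF hm)).2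
    refine ⟨hg B, ?_, by rw [hw, this]⟩
    have b1 := hbm B
    refine inS_mono _ (hi B) ?_ ?_ (mono _ _ (by omega) (by omega))
    · rw [← p0]; exact mono _ _ (by omega) (by omega)
    · exact (mono _ _ (by omega) le_rfl).trans pq

end CRep
end


section

theorem pig_val {ι : Type*} (P : Finset ι) (f : ι → ℤ) (X q : ℕ) (hX : 0 < X)
    (h : ∀ c ∈ P, 1 ≤ f c ∧ f c ≤ X) (hc : X * q ≤ P.card) :
    ∃ u : ℕ, 1 ≤ u ∧ u ≤ X ∧ ∃ D ⊆ P, D.card = q ∧ ∀ c ∈ D, f c = u := by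
  classical
  obtain ⟨u, hu, hcard⟩ := Finset.exists_le_card_fiber_of_mul_le_card_of_maps_to
    (s := P) (t := Finset.Icc 1 X) (f := fun c => (f c).toNat) (n := q)
    (by
      intro c hc
      have := h c hc
      simp only [Finset.mem_Icc]
      omega) (by simp; omega) (by simpa using hc)
  obtain ⟨D, hD, hDc⟩ := Finset.exists_subset_card_eq hcard
  simp only [Finset.mem_Icc] at hu
  refine ⟨u, hu.1, hu.2, D, fun c hc => (Finset.mem_filter.1 (hD hc)).1, hDc, fun c hc => ?_⟩
  have h1 := Finset.mem_filter.1 (hD hc)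
  have := h c h1.1
  have := h1.2
  omega

theorem sum_const_val {ι : Type*} (D : Finset ι) (f : ι → ℤ) (u : ℤ) (h : ∀ c ∈ D, f c = u) :
    ∑ c ∈ D, f c = D.card * u := by
  rw [Finset.sum_congr rfl h]; simp

theorem pig_zero {ι : Type*} [DecidableEq ι] (S : Finset ι) (f : ι → ℤ) (X Z t : ℕ) (hX : 0 < X) (hZ : 0 < Z)
    (h0 : ∀ c ∈ S, f c ≠ 0) (hb : ∀ c ∈ S, - (Z:ℤ) ≤ f c ∧ f c ≤ X) (hs : |∑ c ∈ S, f c| ≤ t)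
    (hno : ∀ D ⊆ S, D.Nonempty → ∑ c ∈ D, f c ≠ 0) :
    S.card ≤ X * Z + X * X * Z + X * Z * Z + t := by
  let P := S.filter fun c => 0 < f c
  let Q := S.filter fun c => ¬ 0 < f c
  have hP : ∀ c ∈ P, c ∈ S ∧ 1 ≤ f c ∧ f c ≤ X := by
    intro c hc
    obtain ⟨h1, h2⟩ := Finset.mem_filter.1 hc
    have := hb c h1
    exact ⟨h1, by omega, by omega⟩
  have hQ : ∀ c ∈ Q, c ∈ S ∧ 1 ≤ - f c ∧ - f c ≤ Z := by
    intro c hc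
    obtain ⟨h1, h2⟩ := Finset.mem_filter.1 hc
    have := hb c h1
    have := h0 c h1
    exact ⟨h1, by omega, by omega⟩
  have cPQ : P.card + Q.card = S.card := Finset.card_filter_add_card_filter_not _
  have sPQ : ∑ c ∈ P, f c + ∑ c ∈ Q, f c = ∑ c ∈ S, f c := Finset.sum_filter_add_sum_filter_not _ _ _
  have p1 : (P.card : ℤ) ≤ ∑ c ∈ P, f c := by
    have := Finset.card_nsmul_le_sum P f 1 (fun c hc => (hP c hc).2.1)
    simpa using this
  have p2 : ∑ c ∈ P, f c ≤ P.card * X := by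
    have := Finset.sum_le_card_nsmul P f X (fun c hc => (hP c hc).2.2)
    simpa using this
  have q1 : (Q.card : ℤ) ≤ - ∑ c ∈ Q, f c := by
    have := Finset.card_nsmul_le_sum Q (fun c => - f c) 1 (fun c hc => (hQ c hc).2.1)
    simpa using this
  have q2 : - ∑ c ∈ Q, f c ≤ Q.card * Z := by
    have := Finset.sum_le_card_nsmul Q (fun c => - f c) Z (fun c hc => (hQ c hc).2.2)
    simpa using this
  rw [abs_le] at hs
  by_cases c1 : P.card < X * Z
  · have : (P.card : ℤ) * X ≤ X * X * Z := by
      have : (P.card : ℤ) ≤ X * Z := by exact_mod_cast c1.le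
      nlinarith
    have e1 : (S.card : ℤ) ≤ X * Z + X * X * Z + t := by
      have h1 : (P.card : ℤ) ≤ X * Z := by exact_mod_cast c1.le
      have h2 : (P.card : ℤ) + Q.card = S.card := by exact_mod_cast cPQ
      linarith
    have e2 : S.card ≤ X * Z + X * X * Z + t := by exact_mod_cast e1
    have : 0 ≤ X * Z * Z := by positivity
    omega
  · by_cases c2 : Q.card < X * Z
    · have : (Q.card : ℤ) * Z ≤ X * Z * Z := by
        have : (Q.card : ℤ) ≤ X * Z := by exact_mod_cast c2.le
        nlinarith
      have e1 : (S.card : ℤ) ≤ X * Z + X * Z * Z + t := by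
        have h1 : (Q.card : ℤ) ≤ X * Z := by exact_mod_cast c2.le
        have h2 : (P.card : ℤ) + Q.card = S.card := by exact_mod_cast cPQ
        linarith
      have e2 : S.card ≤ X * Z + X * Z * Z + t := by exact_mod_cast e1
      have : 0 ≤ X * X * Z := by positivity
      omega
    · exfalso
      obtain ⟨u, u1, u2, D1, d1, d1c, d1v⟩ := pig_val P f X Z hX (fun c hc => (hP c hc).2) (by omega)
      obtain ⟨v, v1, v2, D2, d2, d2c, d2v⟩ := pig_val Q (fun c => - f c) Z X hZ (fun c hc => (hQ c hc).2)
        (by rw [mul_comm]; omega)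
      obtain ⟨E1, e1, e1c⟩ := Finset.exists_subset_card_eq (s := D1) (n := v) (by omega)
      obtain ⟨E2, e2, e2c⟩ := Finset.exists_subset_card_eq (s := D2) (n := u) (by omega)
      have hdis : Disjoint E1 E2 := by
        rw [Finset.disjoint_left]
        intro c h1 h2
        have := (hP c (d1 (e1 h1))).2.1
        have := (hQ c (d2 (e2 h2))).2.1
        omega
      apply hno (E1 ∪ E2)
      · intro c hc
        rcases Finset.mem_union.1 hc with h | h
        · exact (hP c (d1 (e1 h))).1
        · exact (hQ c (d2 (e2 h))).1
      · have : 0 < E1.card := by omega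
        exact (Finset.card_pos.1 this).mono Finset.subset_union_left
      · rw [Finset.sum_union hdis, sum_const_val E1 f u (fun c hc => d1v c (e1 hc)),
          sum_const_val E2 f (-v) (fun c hc => by have := d2v c (e2 hc); omega), e1c, e2c]
        ring

theorem two_int_aux (H : ℕ → ℤ) (n : ℕ) (st : ∀ i < n, H i - 1 ≤ H (i+1) ∧ H (i+1) ≤ H i + 1)
    (Y : ℤ) (hY : 1 ≤ Y) (i j i' j' : ℕ) (hij : i ≤ j) (hj : j < n) (hij' : i' ≤ j') (hj' : j' < n)
    (h1 : Y + 1 ≤ H j - H i) (h2 : Y + 1 ≤ H i' - H j') (hii : i ≤ i') :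
    ∃ s e s' e', s ≤ e ∧ e < n ∧ s' ≤ e' ∧ e' < n ∧ Y ≤ H e - H s ∧ Y ≤ H s' - H e' ∧ (e < s' ∨ e' < s) := by
  by_cases c0 : j < i'
  · exact ⟨i, j, i', j', hij, hj, hij', hj', by omega, by omega, Or.inl c0⟩
  by_cases c1 : Y + 1 ≤ H i' - H i
  · have : i ≠ i' := by rintro rfl; omega
    have := st (i'-1) (by omega)
    rw [show i' - 1 + 1 = i' by omega] at this
    exact ⟨i, i'-1, i', j', by omega, by omega, hij', hj', by omega, by omega, Or.inl (by omega)⟩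
  by_cases c2 : j ≤ j'
  · have : j ≠ j' := by rintro rfl; omega
    have := st j hj
    exact ⟨i, j, j+1, j', hij, hj, by omega, hj', by omega, by omega, Or.inl (by omega)⟩
  · have := st j' hj'
    exact ⟨j'+1, j, i', j', by omega, hj, hij', hj', by omega, by omega, Or.inr (by omega)⟩

theorem two_int (H : ℕ → ℤ) (n : ℕ) (st : ∀ i < n, H i - 1 ≤ H (i+1) ∧ H (i+1) ≤ H i + 1)
    (Y : ℤ) (hY : 1 ≤ Y) (i j i' j' : ℕ) (hij : i ≤ j) (hj : j < n) (hij' : i' ≤ j') (hj' : j' < n)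
    (h1 : Y + 1 ≤ H j - H i) (h2 : Y + 1 ≤ H i' - H j') :
    ∃ s e s' e', s ≤ e ∧ e < n ∧ s' ≤ e' ∧ e' < n ∧ Y ≤ H e - H s ∧ Y ≤ H s' - H e' ∧ (e < s' ∨ e' < s) := by
  rcases le_total i i' with c | c
  · exact two_int_aux H n st Y hY i j i' j' hij hj hij' hj' h1 h2 c
  · obtain ⟨s, e, s', e', a1, a2, a3, a4, a5, a6, a7⟩ := two_int_aux (fun i => - H i) n
      (fun i hi => by have := st i hi; constructor <;> omega) Y hY i' j' i j hij' hj' hij hj (by omega) (by omega) c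
    exact ⟨s', e', s, e, a3, a4, a1, a2, by omega, by omega, by omega⟩

end

section
variable {V : Type*} [DecidableEq V]

theorem CRep.step {G : SimpleGraph V} {M N C : Finset (Sym2 V)} {n : ℕ} {a b : ℕ → V}
    (h : CRep G M N C n a b) (red : Sym2 V → Bool) : ∀ i < n, Ht red M a b i - 1 ≤ Ht red M a b (i+1) ∧
      Ht red M a b (i+1) ≤ Ht red M a b i + 1 := by
  intro i hi
  have := Ht_succ red M a b i
  have := wt_mem (red := red) (h.hm i hi)
  have := wt_not_mem (red := red) (h.hnM i hi)
  omega

theorem list_sum_const {α : Type*} (f : α → ℤ) (w : ℤ) (L : List α) (h : ∀ x ∈ L, f x = w) :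
    (L.map f).sum = L.length * w := by
  induction L with
  | nil => simp
  | cons x L ih =>
    rw [List.map_cons, List.sum_cons, ih (fun y hy => h y (by simp [hy])), h x (by simp), List.length_cons]
    push_cast; ring

/-- the list of the first `u` skips of a family -/
theorem take_list {G : SimpleGraph V} {red : Sym2 V → Bool} {M N : Finset (Sym2 V)}
    {𝒞 : Finset (Finset (Sym2 V))} {Q : ℕ} (T : Fin Q → SkipOn G red M 𝒞)
    (hT : ∀ i j, i < j → SkipOn.Disj (T i) (T j)) (P : SkipOn G red M 𝒞 → Prop) (hP : ∀ i, P (T i))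
    (w : ℤ) (hw : ∀ i, (T i).S.w = w) (u : ℕ) (hu : u ≤ Q) :
    ∃ L : List (SkipOn G red M 𝒞), L.length = u ∧ L.Pairwise SkipOn.Disj ∧ (∀ T ∈ L, P T) ∧
      (L.map fun T => T.S.w).sum = u * w := by
  have hm : ∀ x ∈ (List.ofFn T).take u, ∃ i, x = T i := by
    intro x hx
    have := List.mem_of_mem_take hx
    rw [List.mem_ofFn] at this
    obtain ⟨i, hi⟩ := this
    exact ⟨i, hi.symm⟩
  have hl : ((List.ofFn T).take u).length = u := by simp [hu]
  refine ⟨(List.ofFn T).take u, hl, ?_, ?_, ?_⟩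
  · exact List.Pairwise.sublist (List.take_sublist _ _) (List.pairwise_ofFn.2 hT)
  · intro x hx
    obtain ⟨i, rfl⟩ := hm x hx
    exact hP i
  · rw [list_sum_const _ w _ ?_, hl]
    intro x hx
    obtain ⟨i, rfl⟩ := hm x hx
    exact hw i

/-- some rise of at least `X` in direction `ε` on a cycle of the family -/
def Rise (red : Sym2 V → Bool) (M : Finset (Sym2 V))
    (𝒞 : Finset (Finset (Sym2 V))) (n : Finset (Sym2 V) → ℕ) (a b : Finset (Sym2 V) → ℕ → V) (ε X : ℤ) : Prop :=
  ∃ C ∈ 𝒞, ∃ s e, s ≤ e ∧ e < n C ∧ X ≤ ε * (Ht red M (a C) (b C) e - Ht red M (a C) (b C) s)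

theorem rise_both [Fintype V] (G : SimpleGraph V) (red : Sym2 V → Bool) (M N : Finset (Sym2 V))
    (hM : IsPM G M) (hN : IsPM G N) (𝒞 : Finset (Finset (Sym2 V)))
    (R : ℕ) (hR : R = ramsey (ramsey 4 (indepNum G + 1)) (indepNum G + 1))
    (X : ℤ) (hX : 24 * ((R : ℤ) + 1) + 3 ≤ X)
    (n : Finset (Sym2 V) → ℕ) (a b : Finset (Sym2 V) → ℕ → V) (hr : ∀ C ∈ 𝒞, CRep G M N C (n C) (a C) (b C))
    (h1 : Rise red M 𝒞 n a b 1 X) (h2 : Rise red M 𝒞 n a b (-1) X) : HasZ G red M N 𝒞 := by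
  obtain ⟨C, hC, s, e, hse, hen, hX1⟩ := h1
  obtain ⟨C', hC', s', e', hse', hen', hX2⟩ := h2
  have fin : ∀ (x y : ℕ) (_ : 2 ≤ x ∧ x ≤ 4) (_ : 2 ≤ y ∧ y ≤ 4) (T T' : Fin 4 → SkipOn G red M 𝒞),
      (∀ i j, i < j → SkipOn.Disj (T i) (T j)) → (∀ i j, i < j → SkipOn.Disj (T' i) (T' j)) →
      (∀ i j, SkipOn.Disj (T i) (T' j)) → (∀ i, Good N (T i).S) → (∀ i, Good N (T' i).S) →
      (∀ i, (T i).S.w = -1 * x) → (∀ i, (T' i).S.w = - -1 * y) → HasZ G red M N 𝒞 := by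
    intro x y hx hy T T' d1 d2 d3 g1 g2 w1 w2
    obtain ⟨L1, l1, p1, q1, r1⟩ := take_list (N := N) T d1 (fun A => Good N A.S ∧ ∃ i, A = T i) (fun i => ⟨g1 i, i, rfl⟩) _ w1 y hy.2
    obtain ⟨L2, l2, p2, q2, r2⟩ := take_list (N := N) T' d2 (fun A => Good N A.S ∧ ∃ i, A = T' i) (fun i => ⟨g2 i, i, rfl⟩) _ w2 x hx.2
    refine ⟨L1 ++ L2, ∅, by simp, ?_, ?_, by simp, ?_, ?_⟩
    · left
      intro h
      have := congrArg List.length h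
      simp at this
      simp [this] at l1
      omega
    · rw [List.pairwise_append]
      refine ⟨p1, p2, ?_⟩
      intro A hA B hB
      obtain ⟨_, i, rfl⟩ := q1 A hA
      obtain ⟨_, j, rfl⟩ := q2 B hB
      exact d3 i j
    · rw [List.map_append, List.sum_append, r1, r2]; simp; ring
    · intro A hA
      rcases List.mem_append.1 hA with h | h
      · exact (q1 A h).1
      · exact (q2 A h).1
  by_cases hCC : C = C'
  · subst hCC
    obtain ⟨s, e, s', e', p1, p2, p3, p4, p5, p6, p7⟩ := two_int (Ht red M (a C) (b C)) (n C) ((hr C hC).step red)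
      (X - 1) (by omega) s e s' e' hse hen hse' hen' (by omega) (by omega)
    obtain ⟨x, x1, x2, T, d1, g1⟩ := (hr C hC).many_skips hM hN red R hR 𝒞 hC 1 (Or.inl rfl) s e p1 p2 4 (by push_cast; linarith)
    obtain ⟨y, y1, y2, T', d2, g2⟩ := (hr C hC).many_skips hM hN red R hR 𝒞 hC (-1) (Or.inr rfl) s' e' p3 p4 4 (by push_cast; linarith)
    refine fin x y ⟨x1, x2⟩ ⟨y1, y2⟩ T T' d1 d2 ?_ (fun i => (g1 i).1) (fun i => (g2 i).1) (fun i => (g1 i).2.2)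
      (fun i => (g2 i).2.2)
    intro i j
    exact (hr C hC).inS_disj hM hN (T i) (T' j) s e s' e' (g1 i).2.1 (g2 j).2.1 p1 p3 p2 p4 p7
  · obtain ⟨x, x1, x2, T, d1, g1⟩ := (hr C hC).many_skips hM hN red R hR 𝒞 hC 1 (Or.inl rfl) s e hse hen 4 (by push_cast; linarith)
    obtain ⟨y, y1, y2, T', d2, g2⟩ := (hr C' hC').many_skips hM hN red R hR 𝒞 hC' (-1) (Or.inr rfl) s' e' hse' hen' 4 (by push_cast; linarith)
    refine fin x y ⟨x1, x2⟩ ⟨y1, y2⟩ T T' d1 d2 ?_ (fun i => (g1 i).1) (fun i => (g2 i).1) (fun i => (g1 i).2.2)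
      (fun i => (g2 i).2.2)
    intro i j
    left
    rw [(g1 i).2.1.1, (g2 j).2.1.1]
    exact hCC
end


section
variable {V : Type*} [DecidableEq V]

theorem sum_cycles {G : SimpleGraph V} {red : Sym2 V → Bool} {M N : Finset (Sym2 V)}
    {𝒞 : Finset (Finset (Sym2 V))} (hA : IsAltCycleSet G M 𝒞) (hU : 𝒞.biUnion id = sd M N)
    (f : Sym2 V → ℤ) : ∑ C ∈ 𝒞, ∑ e ∈ C, f e = ∑ e ∈ sd M N, f e := by
  rw [← hU, Finset.sum_biUnion]
  · rfl
  · intro C hC D hD hne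
    have h := hA.2 hC hD hne
    simp only [Function.onFun, id]
    rw [Finset.disjoint_left]
    intro e h1 h2
    have : ∃ v, v ∈ e := by
      induction e using Sym2.ind with
      | _ x y => exact ⟨x, by simp⟩
    obtain ⟨v, hv⟩ := this
    exact Set.disjoint_left.1 h ⟨e, h1, hv⟩ ⟨e, h2, hv⟩

theorem ML1 [Fintype V] (G : SimpleGraph V) (red : Sym2 V → Bool) (M N : Finset (Sym2 V))
    (hM : IsPM G M) (hN : IsPM G N) (𝒞 : Finset (Finset (Sym2 V)))
    (hA : IsAltCycleSet G M 𝒞) (hU : 𝒞.biUnion id = sd M N)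
    (R : ℕ) (hR : R = ramsey (ramsey 4 (indepNum G + 1)) (indepNum G + 1))
    (n : Finset (Sym2 V) → ℕ) (a b : Finset (Sym2 V) → ℕ → V) (hr : ∀ C ∈ 𝒞, CRep G M N C (n C) (a C) (b C))
    (T : ℕ) (hT : 1 ≤ T) (hRT : R + 1 ≤ T) (hb : |wSum red M (sd M N)| ≤ (T:ℤ))
    (hno : ¬ HasZ G red M N 𝒞) (ε : ℤ) (hε : ε = 1 ∨ ε = -1)
    (hri : ¬ Rise red M 𝒞 n a b ε ((27 * T : ℕ) : ℤ)) :
    𝒞.card ≤ 3*10^8*T^5 ∧ ∀ C ∈ 𝒞, ∀ s e, s ≤ e → e < n C →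
      |Ht red M (a C) (b C) e - Ht red M (a C) (b C) s| ≤ 3100 * (T:ℤ)^2 := by
  have T1 : (1:ℤ) ≤ T := by exact_mod_cast hT
  have T2 : (T:ℤ) ≤ (T:ℤ)^2 := by nlinarith
  have RT : (R:ℤ) + 1 ≤ T := by exact_mod_cast hRT
  have hεε : ε * ε = 1 := by rcases hε with h | h <;> rw [h] <;> norm_num
  have hri' : ∀ C ∈ 𝒞, ∀ s e, s ≤ e → e < n C →
      ε * (Ht red M (a C) (b C) e - Ht red M (a C) (b C) s) < ((27 * T : ℕ) : ℤ) := by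
    intro C hC s e h1 h2
    by_contra h
    exact hri ⟨C, hC, s, e, h1, h2, by omega⟩
  have h00 : ∀ C, Ht red M (a C) (b C) 0 = 0 := by intro C; simp [Ht]
  have hw : ∀ C ∈ 𝒞, wSum red M C = Ht red M (a C) (b C) (n C) := fun C hC => (hr C hC).wSum_C red
  have hstep : ∀ C ∈ 𝒞, |Ht red M (a C) (b C) (n C) - Ht red M (a C) (b C) (n C - 1)| ≤ 1 := by
    intro C hC
    have h2 := (hr C hC).two_le
    have := (hr C hC).step red (n C - 1) (by omega)
    rw [show n C - 1 + 1 = n C by omega] at this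
    rw [abs_le]; omega
  have heq : ∀ x : ℤ, |ε * x| = |x| := by
    intro x; rcases hε with h | h <;> simp [h]
  have hstep' : ∀ C ∈ 𝒞, |ε * (Ht red M (a C) (b C) (n C) - Ht red M (a C) (b C) (n C - 1))| ≤ 1 := by
    intro C hC; rw [heq]; exact hstep C hC
  have hup : ∀ C ∈ 𝒞, ε * wSum red M C ≤ ((27 * T : ℕ) : ℤ) := by
    intro C hC
    have h2 := (hr C hC).two_le
    have h3 := hri' C hC 0 (n C - 1) (by omega) (by omega)
    have h4 := abs_le.1 (hstep' C hC)
    rw [hw C hC]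
    rw [h00] at h3
    have : ε * Ht red M (a C) (b C) (n C) = ε * (Ht red M (a C) (b C) (n C) - Ht red M (a C) (b C) (n C - 1))
      + ε * (Ht red M (a C) (b C) (n C - 1) - 0) := by ring
    omega
  have hsum : |∑ C ∈ 𝒞, ε * wSum red M C| ≤ (T:ℤ) := by
    rw [← Finset.mul_sum, heq]
    have := sum_cycles (red := red) hA hU (wt red M)
    simp only [wSum] at hb ⊢
    rw [this]; exact hb
  have hZ : ∀ C ∈ 𝒞, - ((3000 * T^2 : ℕ) : ℤ) ≤ ε * wSum red M C := by
    by_contra hcon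
    push Not at hcon
    obtain ⟨C, hC, hCZ⟩ := hcon
    apply hno
    let P := 𝒞.filter fun c => 0 < ε * wSum red M c
    let Q := 𝒞.filter fun c => ¬ 0 < ε * wSum red M c
    have sPQ : ∑ c ∈ P, ε * wSum red M c + ∑ c ∈ Q, ε * wSum red M c = ∑ c ∈ 𝒞, ε * wSum red M c :=
      Finset.sum_filter_add_sum_filter_not _ _ _
    have hCneg : ε * wSum red M C < 0 := by
      have : (0:ℤ) ≤ ((3000 * T^2 : ℕ) : ℤ) := by positivity
      linarith
    have hCQ : C ∈ Q := Finset.mem_filter.2 ⟨hC, by omega⟩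
    have q1 : ∑ c ∈ Q, ε * wSum red M c ≤ ε * wSum red M C := by
      have := Finset.single_le_sum (s := Q) (f := fun c => - (ε * wSum red M c)) (by
        intro c hc
        have := (Finset.mem_filter.1 hc).2
        omega) hCQ
      simp only [Finset.sum_neg_distrib] at this
      omega
    have p2 : ∑ c ∈ P, ε * wSum red M c ≤ P.card * ((27 * T : ℕ):ℤ) := by
      have := Finset.sum_le_card_nsmul P (fun c => ε * wSum red M c) ((27 * T : ℕ):ℤ)
        (fun c hc => hup c (Finset.mem_filter.1 hc).1)
      simpa using this
    have hPc : 27 * T * 4 ≤ P.card := by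
      by_contra hlt
      have : (P.card : ℤ) ≤ 108 * T := by push_cast [← Nat.cast_le (α := ℤ)] at hlt; omega
      have := (abs_le.1 hsum).1
      push_cast at *
      nlinarith
    obtain ⟨u, u1, u2, D, hDP, hDc, hDu⟩ := pig_val P (fun c => ε * wSum red M c) (27 * T) 4 (by omega)
      (fun c hc => ⟨(Finset.mem_filter.1 hc).2, hup c (Finset.mem_filter.1 hc).1⟩) hPc
    have h2 := (hr C hC).two_le
    have h4 := abs_le.1 (hstep' C hC)
    have h5 := hw C hC
    obtain ⟨x, x1, x2, S, d1, g1⟩ := (hr C hC).many_skips hM hN red R hR 𝒞 hC (-ε) (by omega) 0 (n C - 1)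
      (by omega) (by omega) (27 * T) (by
        rw [h00]
        rw [h5] at hCZ
        have : -ε * (Ht red M (a C) (b C) (n C - 1) - 0) =
          ε * (Ht red M (a C) (b C) (n C) - Ht red M (a C) (b C) (n C - 1))
            - ε * Ht red M (a C) (b C) (n C) := by ring
        rw [this]
        push_cast at hCZ ⊢
        nlinarith)
    obtain ⟨L, l1, l2, l3, l4⟩ := take_list (N := N) S d1 (fun A => Good N A.S ∧ A.C = C)
      (fun i => ⟨(g1 i).1, (g1 i).2.1.1⟩) _ (fun i => (g1 i).2.2) u u2
    obtain ⟨E, hE, hEc⟩ := Finset.exists_subset_card_eq (s := D) (n := x) (by omega)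
    refine ⟨L, E, fun c hc => (Finset.mem_filter.1 (hDP (hE hc))).1, Or.inl ?_, l2, ?_, ?_, fun A hA => (l3 A hA).1⟩
    · rintro rfl; simp at l1; omega
    · intro A hA hAE
      rw [(l3 A hA).2] at hAE
      have := (Finset.mem_filter.1 (hDP (hE hAE))).2
      omega
    · rw [l4, sum_const_val E (wSum red M) (ε * u) ?_, hEc]
      · ring
      · intro c hc
        have := hDu c (hE hc)
        rw [← this, ← mul_assoc, hεε, one_mul]
  constructor
  · have hno' : ∀ D ⊆ 𝒞, D.Nonempty → ∑ c ∈ D, ε * wSum red M c ≠ 0 := by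
      intro D hD hDn h
      apply hno
      refine ⟨[], D, hD, Or.inr hDn, by simp, by simp, ?_, by simp⟩
      rw [← Finset.mul_sum] at h
      rcases mul_eq_zero.1 h with h | h
      · rcases hε with h' | h' <;> omega
      · simp [h]
    have := pig_zero 𝒞 (fun c => ε * wSum red M c) (27 * T) (3000 * T^2) T (by omega) (by positivity)
      (fun c hc h => hno' {c} (by simpa using hc) (by simp) (by simpa using h)) (fun c hc => ⟨hZ c hc, hup c hc⟩) hsum hno'
    refine this.trans ?_
    have e1 : T^3 ≤ T^5 := Nat.pow_le_pow_right hT (by norm_num)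
    have e2 : T^4 ≤ T^5 := Nat.pow_le_pow_right hT (by norm_num)
    have e3 : T ≤ T^5 := Nat.le_self_pow (by norm_num) T
    calc 27 * T * (3000 * T^2) + 27 * T * (27 * T) * (3000 * T^2) + 27 * T * (3000 * T^2) * (3000 * T^2) + T
        = 81000 * T^3 + 2187000 * T^4 + 243000000 * T^5 + T := by ring
      _ ≤ _ := by omega
  · intro C hC s e hse hen
    have h1 := hri' C hC s e hse hen
    have h2 := hri' C hC 0 s (by omega) (by omega)
    have h3 := hri' C hC e (n C - 1) (by omega) (by omega)
    have h4 := abs_le.1 (hstep' C hC)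
    have h5 := hZ C hC
    rw [hw C hC] at h5
    rw [h00] at h2
    rw [← heq, abs_le]
    have : ε * Ht red M (a C) (b C) (n C) = ε * (Ht red M (a C) (b C) (n C) - Ht red M (a C) (b C) (n C - 1))
      + ε * (Ht red M (a C) (b C) (n C - 1) - Ht red M (a C) (b C) e)
      + ε * (Ht red M (a C) (b C) e - Ht red M (a C) (b C) s) + ε * (Ht red M (a C) (b C) s - 0) := by ring
    push_cast at *
    constructor <;> nlinarith

theorem ML [Fintype V] (G : SimpleGraph V) (red : Sym2 V → Bool) (M N : Finset (Sym2 V))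
    (hM : IsPM G M) (hN : IsPM G N) (𝒞 : Finset (Finset (Sym2 V)))
    (hA : IsAltCycleSet G M 𝒞) (hU : 𝒞.biUnion id = sd M N)
    (R : ℕ) (hR : R = ramsey (ramsey 4 (indepNum G + 1)) (indepNum G + 1))
    (n : Finset (Sym2 V) → ℕ) (a b : Finset (Sym2 V) → ℕ → V) (hr : ∀ C ∈ 𝒞, CRep G M N C (n C) (a C) (b C))
    (T : ℕ) (hT : 1 ≤ T) (hRT : R + 1 ≤ T) (hb : |wSum red M (sd M N)| ≤ (T:ℤ))
    (hno : ¬ HasZ G red M N 𝒞) :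
    𝒞.card ≤ 3*10^8*T^5 ∧ ∀ C ∈ 𝒞, ∀ s e, s ≤ e → e < n C →
      |Ht red M (a C) (b C) e - Ht red M (a C) (b C) s| ≤ 3100 * (T:ℤ)^2 := by
  have RT : (R:ℤ) + 1 ≤ T := by exact_mod_cast hRT
  have T1 : (1:ℤ) ≤ T := by exact_mod_cast hT
  by_cases h1 : Rise red M 𝒞 n a b 1 ((27 * T : ℕ) : ℤ)
  · by_cases h2 : Rise red M 𝒞 n a b (-1) ((27 * T : ℕ) : ℤ)
    · exact absurd (rise_both G red M N hM hN 𝒞 R hR _ (by push_cast; linarith) n a b hr h1 h2) hno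
    · exact ML1 G red M N hM hN 𝒞 hA hU R hR n a b hr T hT hRT hb hno (-1) (Or.inr rfl) h2
  · exact ML1 G red M N hM hN 𝒞 hA hU R hR n a b hr T hT hRT hb hno 1 (Or.inl rfl) h1
end


section
variable {V : Type*} [DecidableEq V]

theorem sd_sd (M Z : Finset (Sym2 V)) : sd M (sd M Z) = Z := by
  ext e; simp only [mem_sd]; tauto

theorem isBal_four {G : SimpleGraph V} {M : Finset (Sym2 V)} (hM : IsPM G M) {x y x' y' : V}
    (h1 : s(x, y) ∈ M) (h2 : s(x', y') ∈ M) (hx : G.Adj x x') (hy : G.Adj y y') (hxy' : x ≠ y') (hyx' : y ≠ x') :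
    IsBal G M {s(x, y), s(x', y'), s(x, x'), s(y, y')} ∧ s(x, x') ∉ M ∧ s(y, y') ∉ M := by
  have g1 : G.Adj x y := hM.1 h1
  have g2 : G.Adj x' y' := hM.1 h2
  have n1 := g1.ne
  have n2 := g2.ne
  have n3 := hx.ne
  have n4 := hy.ne
  have m1 : s(x, x') ∉ M := by
    intro h
    have := hM.eq h h1 (v := x) (by simp) (by simp)
    rw [Sym2.eq_iff] at this
    grind
  have m2 : s(y, y') ∉ M := by
    intro h
    have := hM.eq h h1 (v := y) (by simp) (by simp)
    rw [Sym2.eq_iff] at this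
    grind
  refine ⟨⟨?_, ?_, ?_, ?_⟩, m1, m2⟩
  · intro e he
    simp only [Finset.mem_insert, Finset.mem_singleton] at he
    rcases he with rfl | rfl | rfl | rfl <;> assumption
  · intro v e he hv
    have : v = x ∨ v = y ∨ v = x' ∨ v = y' := by
      simp only [Finset.mem_insert, Finset.mem_singleton] at he
      rcases he with rfl | rfl | rfl | rfl <;> simp at hv <;> tauto
    rcases this with rfl | rfl | rfl | rfl
    · exact ⟨_, by simp, h1, by simp⟩
    · exact ⟨_, by simp, h1, by simp⟩
    · exact ⟨s(v, y'), by simp, h2, by simp⟩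
    · exact ⟨s(x', v), by simp, h2, by simp⟩
  · intro v e he hv
    have : v = x ∨ v = y ∨ v = x' ∨ v = y' := by
      simp only [Finset.mem_insert, Finset.mem_singleton] at he
      rcases he with rfl | rfl | rfl | rfl <;> simp at hv <;> tauto
    rcases this with rfl | rfl | rfl | rfl
    · exact ⟨_, by simp, m1, by simp⟩
    · exact ⟨_, by simp, m2, by simp⟩
    · exact ⟨s(x, v), by simp, m1, by simp⟩
    · exact ⟨s(y, v), by simp, m2, by simp⟩
  · intro v e he f hf heM hfM hve hvf
    simp only [Finset.mem_insert, Finset.mem_singleton] at he hf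
    rcases he with rfl | rfl | rfl | rfl <;> rcases hf with rfl | rfl | rfl | rfl <;> first
      | rfl
      | exact absurd h1 heM
      | exact absurd h2 heM
      | exact absurd h1 hfM
      | exact absurd h2 hfM
      | (exfalso; simp at hve hvf; grind)

theorem IsBal.union {G : SimpleGraph V} {M Z Z' : Finset (Sym2 V)} (h : IsBal G M Z) (h' : IsBal G M Z')
    (hd : ∀ v, ∀ e ∈ Z, ∀ f ∈ Z', v ∈ e → v ∈ f → False) : IsBal G M (Z ∪ Z') := by
  obtain ⟨a1, a2, a3, a4⟩ := h
  obtain ⟨b1, b2, b3, b4⟩ := h'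
  refine ⟨?_, ?_, ?_, ?_⟩
  · intro e he
    rcases Finset.mem_union.1 he with h | h
    · exact a1 e h
    · exact b1 e h
  · intro v e he hv
    rcases Finset.mem_union.1 he with h | h
    · obtain ⟨f, f1, f2⟩ := a2 v e h hv
      exact ⟨f, Finset.mem_union_left _ f1, f2⟩
    · obtain ⟨f, f1, f2⟩ := b2 v e h hv
      exact ⟨f, Finset.mem_union_right _ f1, f2⟩
  · intro v e he hv
    rcases Finset.mem_union.1 he with h | h
    · obtain ⟨f, f1, f2⟩ := a3 v e h hv
      exact ⟨f, Finset.mem_union_left _ f1, f2⟩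
    · obtain ⟨f, f1, f2⟩ := b3 v e h hv
      exact ⟨f, Finset.mem_union_right _ f1, f2⟩
  · intro v e he f hf h1 h2 h3 h4
    rcases Finset.mem_union.1 he with h | h <;> rcases Finset.mem_union.1 hf with h' | h'
    · exact a4 v e h f h' h1 h2 h3 h4
    · exact (hd v e h f h' h3 h4).elim
    · exact (hd v f h' e h h4 h3).elim
    · exact b4 v e h f h' h1 h2 h3 h4

theorem wSum_eq_redCount {red : Sym2 V → Bool} {M Z : Finset (Sym2 V)}
    (h : ∀ e ∈ Z, e ∈ M → red e = false) : wSum red M Z = redCount red Z := by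
  rw [redCount_eq_sum, wSum]
  apply Finset.sum_congr rfl
  intro e he
  by_cases hM : e ∈ M
  · simp [wt, h e he hM]
  · simp [wt, hM]

/-- a balanced set without red matching edges and with two red edges -/
theorem no_two {G : SimpleGraph V} {red : Sym2 V → Bool} {M : Finset (Sym2 V)} (hM : IsPM G M)
    (hc : ¬ ∃ M1 : Finset (Sym2 V), IsPM G M1 ∧
      redCount red M1 = redCount red M + 2 ∧ redCount red (sd M M1) = 2)
    (Z : Finset (Sym2 V)) (hZ : IsBal G M Z) (h : ∀ e ∈ Z, e ∈ M → red e = false) : redCount red Z ≠ 2 := by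
  intro h2
  apply hc
  refine ⟨sd M Z, hZ.isPM hM, ?_, by rw [sd_sd]; exact h2⟩
  have := redCount_sd red M Z
  rw [wSum_eq_redCount h, h2] at this
  exact_mod_cast this

def K4P (G : SimpleGraph V) (red : Sym2 V → Bool) (c : Bool) (K : Finset (Sym2 V)) (R : ℕ) : Prop :=
  ∀ x y : ℕ → V, (∀ i < 2*R, ∀ j < 2*R, x i = x j → i = j) → (∀ i < 2*R, ∀ j < 2*R, y i = y j → i = j) →
    (∀ i < 2*R, ∀ j < 2*R, x i ≠ y j) → (∀ i < 2*R, s(x i, y i) ∈ K ∧ red s(x i, y i) = c) →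
    ∃ f : Fin 4 → ℕ, StrictMono f ∧ (∀ p, f p < 2*R) ∧ ∀ p q, p ≠ q →
      (G.Adj (x (f p)) (x (f q)) ∧ red s(x (f p), x (f q)) = c) ∧
      (G.Adj (y (f p)) (y (f q)) ∧ red s(y (f p), y (f q)) = c)

/-- the four-cycle obtained from a pair of indices -/
theorem four_piece {G : SimpleGraph V} {red : Sym2 V → Bool} {M : Finset (Sym2 V)} (hM : IsPM G M)
    (x y : ℕ → V) (R : ℕ)
    (hxy : ∀ i < 2*R, ∀ j < 2*R, x i ≠ y j)
    (he : ∀ i < 2*R, s(x i, y i) ∈ M ∧ red s(x i, y i) = false) (i j : ℕ) (hi : i < 2*R) (hj : j < 2*R)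
    (a1 : G.Adj (x i) (x j)) (a2 : G.Adj (y i) (y j))
    (hne : ¬ (red s(x i, x j) = false ∧ red s(y i, y j) = false)) :
    ∃ Z, IsBal G M Z ∧ (∀ e ∈ Z, e ∈ M → red e = false) ∧ (redCount red Z = 1 ∨ redCount red Z = 2) ∧
      ∀ e ∈ Z, ∀ v ∈ e, v = x i ∨ v = x j ∨ v = y i ∨ v = y j := by
  obtain ⟨b1, b2, b3⟩ := isBal_four hM (he i hi).1 (he j hj).1 a1 a2 (hxy i hi j hj) (hxy j hj i hi).symm
  refine ⟨_, b1, ?_, ?_, ?_⟩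
  · intro e h1 h2
    simp only [Finset.mem_insert, Finset.mem_singleton] at h1
    rcases h1 with rfl | rfl | rfl | rfl
    · exact (he i hi).2
    · exact (he j hj).2
    · exact absurd h2 b2
    · exact absurd h2 b3
  · have hd : s(x i, x j) ≠ s(y i, y j) := by
      intro h
      rw [Sym2.eq_iff] at h
      rcases h with h | h
      · exact hxy i hi i hi h.1
      · exact hxy i hi j hj h.1
    unfold redCount
    rw [Finset.filter_insert, Finset.filter_insert, Finset.filter_insert, Finset.filter_singleton]
    simp only [(he i hi).2, (he j hj).2]
    cases h1 : red s(x i, x j) <;> cases h2 : red s(y i, y j) <;> simp_all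
  · intro e h1 v hv
    simp only [Finset.mem_insert, Finset.mem_singleton] at h1
    rcases h1 with rfl | rfl | rfl | rfl <;> simp at hv <;> tauto

theorem k4p_of [Fintype V] (G : SimpleGraph V) (red : Sym2 V → Bool) (M : Finset (Sym2 V)) (hM : IsPM G M)
    (R : ℕ) (hR : R = ramsey (ramsey 4 (indepNum G + 1)) (indepNum G + 1))
    (hc : ¬ ∃ M1 : Finset (Sym2 V), IsPM G M1 ∧
      redCount red M1 = redCount red M + 2 ∧ redCount red (sd M M1) = 2) : K4P G red false M R := by
  intro x y hx hy hxy he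
  obtain ⟨f, f1, f2, f3⟩ := ram2 G R hR x y (fun i hi j hj => hx i (by omega) j (by omega))
    (fun i hi j hj => hy i (by omega) j (by omega))
  obtain ⟨g, g1, g2, g3⟩ := ram2 G R hR (fun i => x (R + i)) (fun i => y (R + i))
    (fun i hi j hj h => by have := hx (R+i) (by omega) (R+j) (by omega) h; omega)
    (fun i hi j hj h => by have := hy (R+i) (by omega) (R+j) (by omega) h; omega)
  by_cases c1 : ∀ p q, p ≠ q → red s(x (f p), x (f q)) = false ∧ red s(y (f p), y (f q)) = false
  · exact ⟨f, f1, fun p => by have := f2 p; omega, fun p q hpq =>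
      ⟨⟨(f3 p q hpq).1, (c1 p q hpq).1⟩, (f3 p q hpq).2, (c1 p q hpq).2⟩⟩
  by_cases c2 : ∀ p q, p ≠ q → red s(x (R + g p), x (R + g q)) = false ∧ red s(y (R + g p), y (R + g q)) = false
  · exact ⟨fun p => R + g p, fun p q h => by have := g1 h; simp only; omega, fun p => by have := g2 p; simp only; omega,
      fun p q hpq => ⟨⟨(g3 p q hpq).1, (c2 p q hpq).1⟩, (g3 p q hpq).2, (c2 p q hpq).2⟩⟩
  exfalso
  push Not at c1 c2
  obtain ⟨p, q, hpq, h1⟩ := c1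
  obtain ⟨p', q', hpq', h2⟩ := c2
  have f2p := f2 p
  have f2q := f2 q
  have g2p := g2 p'
  have g2q := g2 q'
  obtain ⟨Z, z1, z2, z3, z4⟩ := four_piece hM x y R hxy he (f p) (f q) (by omega) (by omega)
    (f3 p q hpq).1 (f3 p q hpq).2 (by intro h; exact h1 h.1 h.2)
  obtain ⟨Z', z1', z2', z3', z4'⟩ := four_piece hM x y R hxy he (R + g p') (R + g q') (by omega) (by omega)
    (g3 p' q' hpq').1 (g3 p' q' hpq').2 (by intro h; exact h2 h.1 h.2)
  have n1 := no_two hM hc Z z1 z2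
  have n2 := no_two hM hc Z' z1' z2'
  have hd : ∀ v, ∀ e ∈ Z, ∀ f ∈ Z', v ∈ e → v ∈ f → False := by
    intro v e he' f' hf' h3 h4
    have hh : ∀ i < R, ∀ j < R, x i ≠ x (R + j) ∧ y i ≠ y (R + j) ∧ x i ≠ y (R + j) ∧ x (R + j) ≠ y i := by
      intro i hi j hj
      refine ⟨fun h => ?_, fun h => ?_, hxy _ (by omega) _ (by omega), hxy _ (by omega) _ (by omega)⟩
      · have := hx _ (by omega) _ (by omega) h; omega
      · have := hy _ (by omega) _ (by omega) h; omega
    have k1 := hh _ f2p _ g2p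
    have k2 := hh _ f2p _ g2q
    have k3 := hh _ f2q _ g2p
    have k4 := hh _ f2q _ g2q
    have k5 := z4 e he' v h3
    have k6 := z4' f' hf' v h4
    rcases k5 with rfl | rfl | rfl | rfl <;> rcases k6 with k | k | k | k <;> grind
  have n3 := no_two hM hc (Z ∪ Z') (z1.union z1' hd) (by
    intro e he'
    rcases Finset.mem_union.1 he' with h | h
    · exact z2 e h
    · exact z2' e h)
  apply n3
  have hdis : Disjoint Z Z' := by
    rw [Finset.disjoint_left]
    intro e
    induction e using Sym2.ind with
    | _ u v => intro h3 h4; exact hd u _ h3 _ h4 (by simp) (by simp)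
  unfold redCount at *
  rw [Finset.filter_union, Finset.card_union_of_disjoint (Finset.disjoint_filter_filter hdis)]
  omega

theorem IsPM.card [Fintype V] {G : SimpleGraph V} {M : Finset (Sym2 V)} (hM : IsPM G M) :
    2 * M.card = Fintype.card V := by
  have h1 : (Finset.univ : Finset V) = M.biUnion (fun e => e.toFinset) := by
    ext v
    simp only [Finset.mem_univ, Finset.mem_biUnion, Sym2.mem_toFinset, true_iff]
    obtain ⟨e, he, _⟩ := hM.2 v
    exact ⟨e, he⟩
  rw [← Finset.card_univ, h1, Finset.card_biUnion]
  · rw [Finset.sum_congr rfl (g := fun _ => 2)]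
    · simp [mul_comm]
    · intro e he
      exact Sym2.card_toFinset_of_not_isDiag e (SimpleGraph.not_isDiag_of_mem_edgeSet G (hM.1 he))
  · intro e he f hf hne
    rw [Function.onFun, Finset.disjoint_left]
    intro v h1 h2
    rw [Sym2.mem_toFinset] at h1 h2
    exact hne (hM.eq he hf h1 h2)

theorem k4p_of' [Fintype V] (G : SimpleGraph V) (red : Sym2 V → Bool) (M' : Finset (Sym2 V)) (hM' : IsPM G M')
    (R : ℕ) (hR : R = ramsey (ramsey 4 (indepNum G + 1)) (indepNum G + 1))
    (hd : ¬ ∃ M1' : Finset (Sym2 V), IsPM G M1' ∧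
      (redCount red M1' : ℤ) = (redCount red M' : ℤ) - 2 ∧ blueCount red (sd M' M1') = 2) :
    K4P G red true M' R := by
  have hrb : ∀ F : Finset (Sym2 V), redCount (fun e => !red e) F = blueCount red F := by
    intro F; simp [redCount, blueCount]
  have hsum : ∀ F : Finset (Sym2 V), redCount red F + blueCount red F = F.card := by
    intro F
    have := Finset.card_filter_add_card_filter_not (s := F) (fun e => red e = true)
    simpa [redCount, blueCount] using this
  have := k4p_of G (fun e => !red e) M' hM' R hR (by
    rintro ⟨M1, h1, h2, h3⟩
    apply hd
    refine ⟨M1, h1, ?_, by rw [← hrb]; exact h3⟩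
    rw [hrb, hrb] at h2
    have e1 := hsum M1
    have e2 := hsum M'
    have e3 := h1.card
    have e4 := hM'.card
    omega)
  intro x y hx hy hxy he
  have := this x y hx hy hxy (fun i hi => ⟨(he i hi).1, by simp [(he i hi).2]⟩)
  simpa using this

end


section
variable {V : Type*} [DecidableEq V]

theorem enum_set (S : Finset ℕ) (q : ℕ) (h : q ≤ S.card) :
    ∃ g : ℕ → ℕ, (∀ i j, i < j → j < q → g i < g j) ∧ ∀ i < q, g i ∈ S := by
  obtain ⟨D, hD, hc⟩ := Finset.exists_subset_card_eq h
  refine ⟨fun i => if hi : i < q then D.orderEmbOfFin hc ⟨i, hi⟩ else 0, ?_, ?_⟩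
  · intro i j hij hj
    have hi : i < q := by omega
    simp only [hi, hj, dif_pos]
    exact (D.orderEmbOfFin hc).strictMono (by simpa using hij)
  · intro i hi
    simp only [hi, dif_pos]
    exact hD (Finset.orderEmbOfFin_mem _ _ _)

theorem cnt (S : Finset ℕ) (lev : ℕ → ℤ) (L q : ℕ) (h : ∀ i ∈ S, |lev i| ≤ L)
    (hq : ∀ v, (S.filter fun i => lev i = v).card ≤ q) : S.card ≤ (2*L+1) * q := by
  classical
  have := Finset.card_le_mul_card_image_of_maps_to (s := S) (t := Finset.Icc (-(L:ℤ)) L) (f := lev)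
    (fun i hi => by simpa [abs_le] using h i hi) q (fun v _ => hq v)
  refine this.trans (le_of_eq ?_)
  rw [Int.card_Icc, mul_comm]
  congr 1
  omega

theorem hasZ_single {G : SimpleGraph V} {red : Sym2 V → Bool} {M N : Finset (Sym2 V)}
    {𝒞 : Finset (Finset (Sym2 V))} {C : Finset (Sym2 V)} (hC : C ∈ 𝒞) (S : Skip G red M C) (h0 : S.w = 0)
    (hg : Good N S) : HasZ G red M N 𝒞 :=
  ⟨[⟨C, hC, S⟩], ∅, by simp, by simp, by simp, by simp, by simpa using h0, by simpa using hg⟩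

theorem CRep.flat_M {G : SimpleGraph V} {M N C : Finset (Sym2 V)} {n : ℕ} {a b : ℕ → V}
    (h : CRep G M N C n a b) (hM : IsPM G M) (hN : IsPM G N) (red : Sym2 V → Bool)
    {𝒞 : Finset (Finset (Sym2 V))} (hC : C ∈ 𝒞) (hno : ¬ HasZ G red M N 𝒞)
    (c : Bool) (K : Finset (Sym2 V)) (R : ℕ) (hK : K4P G red c K R)
    (S : Finset ℕ) (hS : ∀ i ∈ S, i < n ∧ s(a i, b i) ∈ K ∧ red s(a i, b i) = c) (v : ℤ) :
    (S.filter fun i => Ht red M a b i = v).card ≤ 2 * R := by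
  by_contra hlt
  obtain ⟨g, g1, g2⟩ := enum_set _ (2*R) (le_of_lt (not_le.1 hlt))
  have g3 : ∀ i < 2*R, g i < n ∧ (s(a (g i), b (g i)) ∈ K ∧ red s(a (g i), b (g i)) = c) ∧ Ht red M a b (g i) = v := by
    intro i hi
    have h1 := Finset.mem_filter.1 (g2 i hi)
    have h2 := hS _ h1.1
    exact ⟨h2.1, h2.2, h1.2⟩
  have ginj : ∀ i < 2*R, ∀ j < 2*R, g i = g j → i = j := by
    intro i hi j hj hij
    rcases lt_trichotomy i j with h | h | h
    · have := g1 i j h hj; omega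
    · exact h
    · have := g1 j i h hi; omega
  obtain ⟨f, f1, f2, f3⟩ := hK (fun i => a (g i)) (fun i => b (g i))
    (fun i hi j hj hij => ginj i hi j hj (h.ainj _ (g3 i hi).1 _ (g3 j hj).1 hij))
    (fun i hi j hj hij => ginj i hi j hj (h.binj _ (g3 i hi).1 _ (g3 j hj).1 hij))
    (fun i hi j hj => h.ab _ (g3 i hi).1 _ (g3 j hj).1) (fun i hi => (g3 i hi).2.1)
  have o1 := g1 _ _ (f1 (show (0 : Fin 4) < 1 by decide)) (f2 1)
  have o2 := g1 _ _ (f1 (show (1 : Fin 4) < 2 by decide)) (f2 2)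
  have o3 := g1 _ _ (f1 (show (2 : Fin 4) < 3 by decide)) (f2 3)
  obtain ⟨k0, ⟨k01, k02⟩, k03⟩ := g3 _ (f2 0)
  obtain ⟨l0, ⟨l01, l02⟩, l03⟩ := g3 _ (f2 2)
  obtain ⟨m0, ⟨m01, m02⟩, m03⟩ := g3 _ (f2 3)
  obtain ⟨_, b1, b2⟩ := f3 0 2 (by decide)
  obtain ⟨⟨a1, a2⟩, _⟩ := f3 2 3 (by decide)
  have cb := (h.chord_b hM hN k0 l0).1
  have ca := (h.chord_a hM hN (j := g (f 2)) (m := g (f 3)) (by omega) l0 m0).1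
  have W0 : (0:ℤ) = wt red M s(b (g (f 0)), b (g (f 2))) + wt red M s(a (g (f 2)), a (g (f 3)))
      - (Ht red M a b (g (f 2)) - Ht red M a b (g (f 0)) - wt red M s(a (g (f 0)), b (g (f 0))))
      - (Ht red M a b (g (f 3)) - Ht red M a b (g (f 2)) - wt red M s(a (g (f 2)), b (g (f 2)))) := by
    rw [k03, l03, m03]
    have e1 := h.hm _ k0
    have e2 := h.hm _ l0
    simp only [wt, b2, a2, k02, l02, cb, ca, e1, e2]
    cases c <;> simp
  obtain ⟨S, s1, s2, _⟩ := h.exists_skip hM hN red (g (f 0)) (g (f 2)) (g (f 2)) (g (f 3)) (by omega) le_rfl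
    (by omega) m0 (by omega) b1 a1 0 W0 (by norm_num)
  exact hno (hasZ_single hC S s1 s2)

theorem CRep.flat_N {G : SimpleGraph V} {M N C : Finset (Sym2 V)} {n : ℕ} {a b : ℕ → V}
    (h : CRep G M N C n a b) (hM : IsPM G M) (hN : IsPM G N) (red : Sym2 V → Bool)
    {𝒞 : Finset (Finset (Sym2 V))} (hC : C ∈ 𝒞) (hno : ¬ HasZ G red M N 𝒞)
    (K : Finset (Sym2 V)) (R : ℕ) (hK : K4P G red true K R)
    (S : Finset ℕ) (hS : ∀ i ∈ S, i + 1 < n ∧ s(b i, a (i+1)) ∈ K ∧ red s(b i, a (i+1)) = true) (v : ℤ) :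
    (S.filter fun i => Ht red M a b (i+1) = v).card ≤ 2 * R := by
  by_contra hlt
  obtain ⟨g, g1, g2⟩ := enum_set _ (2*R) (le_of_lt (not_le.1 hlt))
  have g3 : ∀ i < 2*R, g i + 1 < n ∧ (s(b (g i), a (g i + 1)) ∈ K ∧ red s(b (g i), a (g i + 1)) = true) ∧
      Ht red M a b (g i + 1) = v := by
    intro i hi
    have h1 := Finset.mem_filter.1 (g2 i hi)
    have h2 := hS _ h1.1
    exact ⟨h2.1, h2.2, h1.2⟩
  have ginj : ∀ i < 2*R, ∀ j < 2*R, g i = g j → i = j := by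
    intro i hi j hj hij
    rcases lt_trichotomy i j with h | h | h
    · have := g1 i j h hj; omega
    · exact h
    · have := g1 j i h hi; omega
  obtain ⟨f, f1, f2, f3⟩ := hK (fun i => b (g i)) (fun i => a (g i + 1))
    (fun i hi j hj hij => ginj i hi j hj (h.binj _ (by have := (g3 i hi).1; omega) _ (by have := (g3 j hj).1; omega) hij))
    (fun i hi j hj hij => ginj i hi j hj (by
      have := h.ainj _ (g3 i hi).1 _ (g3 j hj).1 hij
      omega))
    (fun i hi j hj => (h.ab _ (g3 j hj).1 _ (by have := (g3 i hi).1; omega)).symm) (fun i hi => (g3 i hi).2.1)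
  have o1 := g1 _ _ (f1 (show (0 : Fin 4) < 1 by decide)) (f2 1)
  have o2 := g1 _ _ (f1 (show (1 : Fin 4) < 2 by decide)) (f2 2)
  obtain ⟨k0, ⟨k01, k02⟩, k03⟩ := g3 _ (f2 0)
  obtain ⟨l0, ⟨l01, l02⟩, l03⟩ := g3 _ (f2 1)
  obtain ⟨m0, ⟨m01, m02⟩, m03⟩ := g3 _ (f2 2)
  obtain ⟨⟨b1, b2⟩, _⟩ := f3 0 2 (by decide)
  obtain ⟨_, a1, a2⟩ := f3 1 2 (by decide)
  have cb := (h.chord_b hM hN (i := g (f 0)) (l := g (f 2)) (by omega) (by omega)).1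
  have ca := (h.chord_a hM hN (j := g (f 1) + 1) (m := g (f 2) + 1) (by omega) l0 m0).1
  have W0 : (0:ℤ) = wt red M s(b (g (f 0)), b (g (f 2))) + wt red M s(a (g (f 1) + 1), a (g (f 2) + 1))
      - (Ht red M a b (g (f 1) + 1) - Ht red M a b (g (f 0)) - wt red M s(a (g (f 0)), b (g (f 0))))
      - (Ht red M a b (g (f 2) + 1) - Ht red M a b (g (f 2)) - wt red M s(a (g (f 2)), b (g (f 2)))) := by
    have q1 := Ht_succ red M a b (g (f 0))
    have q2 := Ht_succ red M a b (g (f 2))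
    have r1 : wt red M s(b (g (f 0)), a (g (f 0) + 1)) = 1 := by
      simp [wt, k02, h.hnM _ (show g (f 0) < n by omega)]
    have r2 : wt red M s(b (g (f 2)), a (g (f 2) + 1)) = 1 := by
      simp [wt, m02, h.hnM _ (show g (f 2) < n by omega)]
    have r3 : wt red M s(b (g (f 0)), b (g (f 2))) = 1 := by
      simp only [wt, b2, cb]; simp
    have r4 : wt red M s(a (g (f 1) + 1), a (g (f 2) + 1)) = 1 := by
      simp only [wt, a2, ca]; simp
    rw [r3, r4]
    rw [r1] at q1
    rw [r2] at q2
    omega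
  obtain ⟨S, s1, s2, _⟩ := h.exists_skip hM hN red (g (f 0)) (g (f 1) + 1) (g (f 2)) (g (f 2) + 1) (by omega) (by omega)
    (by omega) m0 (by omega) b1 a1 0 W0 (by norm_num)
  exact hno (hasZ_single hC S s1 s2)

end


section
variable {V : Type*} [DecidableEq V]

theorem CRep.len1 {G : SimpleGraph V} {M N C : Finset (Sym2 V)} {n : ℕ} {a b : ℕ → V}
    (h : CRep G M N C n a b) (hM : IsPM G M) (hN : IsPM G N) (red : Sym2 V → Bool)
    {𝒞 : Finset (Finset (Sym2 V))} (hC : C ∈ 𝒞) (hno : ¬ HasZ G red M N 𝒞)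
    (R : ℕ) (hK : K4P G red false M R) (hK' : K4P G red true N R) (L : ℕ)
    (hL : ∀ i < n, |Ht red M a b i| ≤ L) :
    n ≤ 2 * ((2*L+1) * (2*R)) + L + 1 := by
  have h2 := h.two_le
  let A := (Finset.range (n-1)).filter fun i => red s(a i, b i) = false
  let B := (Finset.range (n-1)).filter fun i => ¬ red s(a i, b i) = false
  let D := (Finset.range (n-1)).filter fun i => red s(b i, a (i+1)) = true
  have hAB : A.card + B.card = n - 1 := by
    have := Finset.card_filter_add_card_filter_not (s := Finset.range (n-1)) (fun i => red s(a i, b i) = false)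
    rw [Finset.card_range] at this
    exact this
  have hA : A.card ≤ (2*L+1) * (2*R) := by
    apply cnt A (Ht red M a b) L (2*R)
    · intro i hi
      have := Finset.mem_filter.1 hi
      exact hL i (by have := Finset.mem_range.1 this.1; omega)
    · apply h.flat_M hM hN red hC hno false M R hK
      intro i hi
      have h1 := Finset.mem_filter.1 hi
      have h3 := Finset.mem_range.1 h1.1
      exact ⟨by omega, h.hm i (by omega), h1.2⟩
  have hD : D.card ≤ (2*L+1) * (2*R) := by
    apply cnt D (fun i => Ht red M a b (i+1)) L (2*R)
    · intro i hi
      have := Finset.mem_filter.1 hi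
      exact hL (i+1) (by have := Finset.mem_range.1 this.1; omega)
    · apply h.flat_N hM hN red hC hno N R hK'
      intro i hi
      have h1 := Finset.mem_filter.1 hi
      have h3 := Finset.mem_range.1 h1.1
      exact ⟨by omega, h.hn i (by omega), h1.2⟩
  have hH : Ht red M a b (n-1) = - (B.card : ℤ) + D.card := by
    rw [Ht, Finset.sum_add_distrib]
    congr 1
    · rw [Finset.card_filter]
      push_cast
      rw [← Finset.sum_neg_distrib]
      apply Finset.sum_congr rfl
      intro i hi
      have := Finset.mem_range.1 hi
      simp only [wt, h.hm i (by omega)]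
      cases red s(a i, b i) <;> simp
    · rw [Finset.card_filter]
      push_cast
      apply Finset.sum_congr rfl
      intro i hi
      have := Finset.mem_range.1 hi
      simp only [wt, h.hnM i (by omega)]
      cases red s(b i, a (i+1)) <;> simp
  have := (abs_le.1 (hL (n-1) (by omega))).1
  omega

theorem CRep.len2 {G : SimpleGraph V} {M N C : Finset (Sym2 V)} {n : ℕ} {a b : ℕ → V}
    (h : CRep G M N C n a b) (hM : IsPM G M) (hN : IsPM G N) (red : Sym2 V → Bool)
    {𝒞 : Finset (Finset (Sym2 V))} (hC : C ∈ 𝒞) (hno : ¬ HasZ G red M N 𝒞)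
    (M' : Finset (Sym2 V))
    (R : ℕ) (hK : K4P G red false M R) (hK' : K4P G red true M' R) (L : ℕ)
    (hL : ∀ i < n, |Ht red M a b i| ≤ L) :
    (n : ℤ) ≤ 2 * ((2*L+1) * (2*R)) + ∑ e ∈ C, if e ∈ sd M M' then 1 else 0 := by
  let A := (Finset.range n).filter fun i => red s(a i, b i) = false
  let B := (Finset.range n).filter fun i => s(a i, b i) ∈ M' ∧ red s(a i, b i) = true
  let D := (Finset.range n).filter fun i => s(a i, b i) ∈ sd M M'
  have hA : A.card ≤ (2*L+1) * (2*R) := by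
    apply cnt A (Ht red M a b) L (2*R)
    · intro i hi
      have := Finset.mem_filter.1 hi
      exact hL i (Finset.mem_range.1 this.1)
    · apply h.flat_M hM hN red hC hno false M R hK
      intro i hi
      have h1 := Finset.mem_filter.1 hi
      have h3 := Finset.mem_range.1 h1.1
      exact ⟨h3, h.hm i h3, h1.2⟩
  have hB : B.card ≤ (2*L+1) * (2*R) := by
    apply cnt B (Ht red M a b) L (2*R)
    · intro i hi
      have := Finset.mem_filter.1 hi
      exact hL i (Finset.mem_range.1 this.1)
    · apply h.flat_M hM hN red hC hno true M' R hK'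
      intro i hi
      have h1 := Finset.mem_filter.1 hi
      exact ⟨Finset.mem_range.1 h1.1, h1.2⟩
  have hD : D.card ≤ (C.filter fun e => e ∈ sd M M').card := by
    apply Finset.card_le_card_of_injOn (fun i => s(a i, b i))
    · intro i hi
      have h1 := Finset.mem_filter.1 hi
      have h3 := Finset.mem_range.1 h1.1
      refine Finset.mem_coe.2 (Finset.mem_filter.2 ?_)
      exact ⟨(h.hC _).2 (Or.inl ⟨i, h3, rfl⟩), h1.2⟩
    · intro i hi j hj hij
      have h1 := Finset.mem_range.1 (Finset.mem_filter.1 hi).1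
      have h2 := Finset.mem_range.1 (Finset.mem_filter.1 hj).1
      exact h.m_inj _ _ h1 h2 hij
  have hU : n ≤ A.card + B.card + D.card := by
    have : Finset.range n ⊆ A ∪ B ∪ D := by
      intro i hi
      have h3 := h.hm i (Finset.mem_range.1 hi)
      simp only [A, B, D, Finset.mem_union, Finset.mem_filter, hi, true_and, mem_sd, h3]
      cases red s(a i, b i) <;> simp
      tauto
    have h1 := Finset.card_le_card this
    have h2 := Finset.card_union_le (A ∪ B) D
    have h3 := Finset.card_union_le A B
    rw [Finset.card_range] at h1
    omega
  have : (∑ e ∈ C, if e ∈ sd M M' then (1:ℤ) else 0) = (C.filter fun e => e ∈ sd M M').card := by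
    rw [Finset.card_filter]; push_cast; rfl
  rw [this]
  zify at hU hA hB hD
  linarith

theorem sd_card {G : SimpleGraph V} {M N : Finset (Sym2 V)}
    {𝒞 : Finset (Finset (Sym2 V))} (hA : IsAltCycleSet G M 𝒞) (hU : 𝒞.biUnion id = sd M N)
    (n : Finset (Sym2 V) → ℕ) (a b : Finset (Sym2 V) → ℕ → V)
    (hr : ∀ C ∈ 𝒞, CRep G M N C (n C) (a C) (b C)) :
    ((sd M N).card : ℤ) = ∑ C ∈ 𝒞, 2 * (n C : ℤ) := by
  have := sum_cycles (red := fun _ => true) hA hU (fun _ => 1)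
  simp only [Finset.sum_const, nsmul_eq_mul, mul_one] at this
  rw [← this]
  apply Finset.sum_congr rfl
  intro C hC
  rw [(hr C hC).card_C]; push_cast; rfl

theorem main_bound [Fintype V] (G : SimpleGraph V) (red : Sym2 V → Bool)
    (k : ℤ) (T : ℕ) (R : ℕ) (hR : R = ramsey (ramsey 4 (indepNum G + 1)) (indepNum G + 1))
    (hT : 10^6 ≤ T) (hRT : R + 1 ≤ T)
    (M M' : Finset (Sym2 V)) (hM : IsPM G M) (hM' : IsPM G M')
    (ha1 : (redCount red M : ℤ) < k - 1) (ha2 : k < (redCount red M' : ℤ))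
    (hb : |wSum red M (sd M M')| ≤ (T : ℤ))
    (hK : K4P G red false M R) (hK' : K4P G red true M' R)
    (hf : ∀ 𝒞 : Finset (Finset (Sym2 V)), IsAltCycleSet G M 𝒞 →
      𝒞.biUnion id = sd M M' → ¬ HasZeroSkipCycleSet G red M 𝒞)
    (hyes : ∃ N : Finset (Sym2 V), IsPM G N ∧ (redCount red N : ℤ) = k) :
    ∃ N : Finset (Sym2 V), IsPM G N ∧ (redCount red N : ℤ) = k ∧
      (sd M N).card ≤ 256 * T ^ 12 := by
  classical
  have hV : Nonempty V := by
    have : 0 < redCount red M' := by omega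
    obtain ⟨e, _⟩ := Finset.card_pos.1 this
    induction e using Sym2.ind with
    | _ x y => exact ⟨x⟩
  have T1 : (1:ℤ) ≤ T := by
    have : 1 ≤ T := by omega
    exact_mod_cast this
  have RT : (R:ℤ) + 1 ≤ T := by exact_mod_cast hRT
  have hTpos : 1 ≤ T := by omega
  have Ra : (R:ℤ) * (T:ℤ)^2 ≤ (T:ℤ)^3 := by nlinarith [sq_nonneg (T:ℤ)]
  have e1 : (T:ℤ) ≤ (T:ℤ)^3 := by exact_mod_cast Nat.le_self_pow (by norm_num) T
  have e2 : (T:ℤ)^2 ≤ (T:ℤ)^3 := by exact_mod_cast Nat.pow_le_pow_right hTpos (by norm_num)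
  have e3 : (1:ℤ) ≤ (T:ℤ)^3 := by linarith
  -- first bound
  have b1 : ((sd M M').card : ℤ) ≤ 3*10^8*(T:ℤ)^5 * (56000 * (T:ℤ)^3) := by
    obtain ⟨𝒞, hA, hU, hrep⟩ := exists_decomp G M M' hM hM'
    choose! n a b hr using hrep
    have hno : ¬ HasZ G red M M' 𝒞 := fun h => hf 𝒞 hA hU h.to
    obtain ⟨m1, m2⟩ := ML G red M M' hM hM' 𝒞 hA hU R hR n a b hr T hTpos hRT hb hno
    rw [sd_card hA hU n a b hr]
    have hle : ∀ C ∈ 𝒞, 2 * (n C : ℤ) ≤ 56000 * (T:ℤ)^3 := by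
      intro C hC
      have := (hr C hC).len1 hM hM' red hC hno R hK hK' (3100 * T^2) (by
        intro i hi
        have := m2 C hC 0 i (by omega) hi
        rw [show Ht red M (a C) (b C) 0 = 0 by simp [Ht], sub_zero] at this
        push_cast; exact this)
      zify at this
      nlinarith
    have := Finset.sum_le_card_nsmul 𝒞 _ _ hle
    refine this.trans ?_
    rw [nsmul_eq_mul]
    have m1' : (𝒞.card : ℤ) ≤ 3*10^8*(T:ℤ)^5 := by exact_mod_cast m1
    exact mul_le_mul_of_nonneg_right m1' (by positivity)
  -- minimal matching
  have hex : ∃ m, ∃ N, IsPM G N ∧ (redCount red N : ℤ) = k ∧ (sd M N).card = m := by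
    obtain ⟨N, h1, h2⟩ := hyes
    exact ⟨_, N, h1, h2, rfl⟩
  obtain ⟨N, hN, hNk, hNm⟩ := Nat.find_spec hex
  refine ⟨N, hN, hNk, ?_⟩
  obtain ⟨𝒞, hA, hU, hrep⟩ := exists_decomp G M N hM hN
  have hno : ¬ HasZ G red M N 𝒞 := by
    intro hz
    obtain ⟨N', h1, h2, h3⟩ := hasZ_contra G red M N hM hN 𝒞 hA hrep hz
    rw [hNm] at h3
    exact Nat.find_min hex h3 ⟨N', h1, by rw [h2]; exact hNk, rfl⟩
  choose! n a b hr using hrep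
  have hb' : |wSum red M (sd M N)| ≤ (T:ℤ) := by
    rw [wSum_sd] at hb ⊢
    rw [abs_le] at hb ⊢
    constructor <;> omega
  obtain ⟨m1, m2⟩ := ML G red M N hM hN 𝒞 hA hU R hR n a b hr T hTpos hRT hb' hno
  have hle : ∀ C ∈ 𝒞, 2 * (n C : ℤ) ≤ 56000 * (T:ℤ)^3 + 2 * ∑ e ∈ C, if e ∈ sd M M' then 1 else 0 := by
    intro C hC
    have := (hr C hC).len2 hM hN red hC hno M' R hK hK' (3100 * T^2) (by
      intro i hi
      have := m2 C hC 0 i (by omega) hi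
      rw [show Ht red M (a C) (b C) 0 = 0 by simp [Ht], sub_zero] at this
      push_cast; exact this)
    push_cast at this
    nlinarith
  have b2 : ((sd M N).card : ℤ) ≤ 3*10^8*(T:ℤ)^5 * (56000 * (T:ℤ)^3) + 2 * (sd M M').card := by
    rw [sd_card hA hU n a b hr]
    refine (Finset.sum_le_sum hle).trans ?_
    rw [Finset.sum_add_distrib, Finset.sum_const, ← Finset.mul_sum, sum_cycles (red := red) hA hU, nsmul_eq_mul]
    have m1' : (𝒞.card : ℤ) ≤ 3*10^8*(T:ℤ)^5 := by exact_mod_cast m1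
    have := mul_le_mul_of_nonneg_right m1' (show (0:ℤ) ≤ 56000 * (T:ℤ)^3 by positivity)
    have h3 : (∑ e ∈ sd M N, if e ∈ sd M M' then (1:ℤ) else 0) ≤ (sd M M').card := by
      rw [← Nat.cast_one, ← Nat.cast_zero]
      have : (∑ e ∈ sd M N, if e ∈ sd M M' then ((1:ℕ):ℤ) else ((0:ℕ):ℤ)) = ((sd M N).filter fun e => e ∈ sd M M').card := by
        rw [Finset.card_filter]; push_cast; rfl
      rw [this]
      exact_mod_cast Finset.card_le_card (fun e he => (Finset.mem_filter.1 he).2)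
    linarith
  have hT4 : (10:ℤ)^24 ≤ (T:ℤ)^4 := by
    have : (10^6)^4 ≤ T^4 := Nat.pow_le_pow_left hT 4
    have h : ((10:ℕ)^24) ≤ T^4 := by simpa [← pow_mul] using this
    exact_mod_cast h
  have hT8 : (0:ℤ) ≤ (T:ℤ)^8 := by positivity
  have : ((sd M N).card : ℤ) ≤ 256 * (T:ℤ)^12 := by
    have e12 : (T:ℤ)^12 = (T:ℤ)^4 * (T:ℤ)^8 := by ring
    have e8 : 3*10^8*(T:ℤ)^5 * (56000 * (T:ℤ)^3) = 16800000000000 * (T:ℤ)^8 := by ring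
    rw [e8] at b1 b2
    have := mul_le_mul_of_nonneg_right hT4 hT8
    rw [e12]
    norm_num at this
    linarith
  exact_mod_cast this
end

/-- The key lemma: let `t = 256·4^{2α}`, `t' = max(1000t⁶, 20·R(R(4,α+1),α+1))` and
`t'' = 4t'⁴`, and let `M`, `M'` be PMs with (a) `r(M) < k−1`, `r(M') > k`,
(b) `|w_M(M Δ M')| ≤ t`, (c) no PM `M1` with `r(M1) = r(M)+2` and `|R(M Δ M1)| = 2`,
(d) no PM `M1'` with `r(M1') = r(M')−2` and `|B(M' Δ M1')| = 2`, (e) the cycles of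
`M Δ M'` contain no 0-skip, and (f) they contain no 0-skip-cycle set. If `G` has a PM with
exactly `k` red edges, then it has one, `M*`, with `|E(M Δ M*)| ≤ 4t''³`. -/
theorem key_lemma_symdiff_bound
    {V : Type*} [Fintype V] [DecidableEq V] (G : SimpleGraph V) (red : Sym2 V → Bool)
    (k : ℤ) (t t' t'' : ℕ)
    (ht : t = 256 * 4 ^ (2 * indepNum G))
    (ht' : t' = max (1000 * t ^ 6)
      (20 * ramsey (ramsey 4 (indepNum G + 1)) (indepNum G + 1)))
    (ht'' : t'' = 4 * t' ^ 4)
    (M M' : Finset (Sym2 V)) (hM : IsPM G M) (hM' : IsPM G M')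
    (ha1 : (redCount red M : ℤ) < k - 1) (ha2 : k < (redCount red M' : ℤ))
    (hb : |wSum red M (sd M M')| ≤ (t : ℤ))
    (hc : ¬ ∃ M1 : Finset (Sym2 V), IsPM G M1 ∧
      redCount red M1 = redCount red M + 2 ∧ redCount red (sd M M1) = 2)
    (hd : ¬ ∃ M1' : Finset (Sym2 V), IsPM G M1' ∧
      (redCount red M1' : ℤ) = (redCount red M' : ℤ) - 2 ∧ blueCount red (sd M' M1') = 2)
    (he : ¬ ∃ C : Finset (Sym2 V), IsAltCycle G M C ∧ C ⊆ sd M M' ∧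
      ∃ S : Skip G red M C, S.w = 0)
    (hf : ∀ 𝒞 : Finset (Finset (Sym2 V)), IsAltCycleSet G M 𝒞 →
      𝒞.biUnion id = sd M M' → ¬ HasZeroSkipCycleSet G red M 𝒞)
    (hyes : ∃ N : Finset (Sym2 V), IsPM G N ∧ (redCount red N : ℤ) = k) :
    ∃ Mstar : Finset (Sym2 V), IsPM G Mstar ∧ (redCount red Mstar : ℤ) = k ∧
      (sd M Mstar).card ≤ 4 * t'' ^ 3 := by
  have hpos : 1 ≤ 4 ^ (2 * indepNum G) := Nat.one_le_pow _ _ (by norm_num)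
  have ht1 : 256 ≤ t := by omega
  have hTa : 1000 * t ^ 6 ≤ t' := by rw [ht']; exact le_max_left _ _
  have hTb : 20 * ramsey (ramsey 4 (indepNum G + 1)) (indepNum G + 1) ≤ t' := by
    rw [ht']; exact le_max_right _ _
  have ht6 : 256 ^ 6 ≤ t ^ 6 := Nat.pow_le_pow_left ht1 6
  have htt : t ≤ t ^ 6 := Nat.le_self_pow (by norm_num) t
  have hT : 10 ^ 6 ≤ t' := by norm_num at ht6 ⊢; omega
  have htT : (t : ℤ) ≤ t' := by
    have : t ≤ t' := by omega
    exact_mod_cast this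
  obtain ⟨N, h1, h2, h3⟩ := main_bound G red k t' _ rfl hT (by norm_num at hT; omega) M M' hM hM' ha1 ha2
    (hb.trans htT) (k4p_of G red M hM _ rfl hc) (k4p_of' G red M' hM' _ rfl hd) hf hyes
  refine ⟨N, h1, h2, h3.trans (le_of_eq ?_)⟩
  rw [ht'']; ring
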